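/- arXiv:math/0301260 — 4 statements merged into one kernel-verified Lean document; each statement's English description precedes it below -/
import Mathlib

section
/- There is a constant C > 0 such that for every Schwartz function g : ℝ³ → ℂ and every y ∈ ℝ³, | ∫_{ℝ³} Im( conj(g(x)) ∇g(x) ) · (x−y)/|x−y| dx | ≤ C ‖g‖²_{Ḣ^{1/2}(ℝ³)}. -/
open MeasureTheory Real Complex Filter
open scoped FourierTransform ContDiff ENNReal

noncomputable section

abbrev E3 := EuclideanSpace ℝ (Fin 3)

/-- the `i`-th standard basis vector of `ℝ³`. -/
def e3 (i : Fin 3) : E3 := EuclideanSpace.single i (1 : ℝ)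

/-- the `i`-th spatial partial derivative. -/
def pd (g : E3 → ℂ) (i : Fin 3) (x : E3) : ℂ := fderiv ℝ g x (e3 i)

/-- the (spatial) Laplacian. -/
def lap (g : E3 → ℂ) (x : E3) : ℂ := ∑ i : Fin 3, fderiv ℝ (fun y => pd g i y) x (e3 i)

/-- the antiderivative `F(z) = ∫₀^z f(s) ds` of `f`. -/
def Fa (f : ℝ → ℝ) (z : ℝ) : ℝ := ∫ s in (0:ℝ)..z, f s

/-- `u` is a smooth decaying solution of the gNLS `i ∂ₜ u + α Δ u = μ f(|u|²) u`
on `[0,T] × ℝ³`: it is jointly smooth, every time derivative slice is a Schwartz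
function of `x`, and the equation holds pointwise on `[0,T] × ℝ³`. -/
structure IsSolution (α μ : ℝ) (f : ℝ → ℝ) (T : ℝ) (u : ℝ → E3 → ℂ) : Prop where
  smooth : ContDiff ℝ ∞ (fun p : ℝ × E3 => u p.1 p.2)
  schwartz : ∀ (k : ℕ) (t : ℝ), ∃ g : SchwartzMap E3 ℂ,
      ∀ x, iteratedDeriv k (fun s => u s x) t = g x
  eqn : ∀ t ∈ Set.Icc (0:ℝ) T, ∀ x : E3,
      Complex.I * deriv (fun s => u s x) t + (α : ℂ) * lap (u t) x
        = ((μ * f (Complex.normSq (u t x)) : ℝ) : ℂ) * u t x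

/-- the `i`-th component of the mass current `Im (conj u ∇u)`. -/
def massCur (g : E3 → ℂ) (i : Fin 3) (x : E3) : ℝ := ((starRingEnd ℂ) (g x) * pd g i x).im

/-- the Morawetz action centered at `y`. -/
def morAction (g : E3 → ℂ) (y : E3) : ℝ :=
  ∫ x : E3, ∑ i : Fin 3, massCur g i x * ((x i - y i) / ‖x - y‖)

/-- `|∇̸_y g(x)|²`, the squared norm of the angular part of the gradient. -/
def angGradSq (g : E3 → ℂ) (y x : E3) : ℝ :=
  ∑ i : Fin 3, Complex.normSq (pd g i x -
    (((x i - y i) / ‖x - y‖ : ℝ) : ℂ) *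
      ∑ j : Fin 3, (((x j - y j) / ‖x - y‖ : ℝ) : ℂ) * pd g j x)

/-- squared homogeneous Sobolev norm `‖g‖²_{Ḣ^σ}`. -/
def sobSq (σ : ℝ) (g : E3 → ℂ) : ℝ := ∫ ξ : E3, ‖ξ‖ ^ (2 * σ) * ‖𝓕 g ξ‖ ^ 2



open scoped SchwartzMap LineDeriv

/-- squared `L²` norm -/
def nSq (u : 𝓢(E3, ℂ)) : ℝ := ∫ x, ‖u x‖ ^ 2

/-- Schwartz partial derivative -/
def dd (i : Fin 3) (u : 𝓢(E3, ℂ)) : 𝓢(E3, ℂ) := ∂_{e3 i} u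

lemma dd_apply (i : Fin 3) (u : 𝓢(E3, ℂ)) (x : E3) : dd i u x = pd (fun x => u x) i x := by
  unfold dd pd
  exact SchwartzMap.lineDerivOp_apply_eq_fderiv _ _ _

lemma dd_sub (i : Fin 3) (u v : 𝓢(E3, ℂ)) : dd i (u - v) = dd i u - dd i v := by
  unfold dd
  exact map_sub (SchwartzMap.evalCLM ℂ E3 ℂ (e3 i) ∘L SchwartzMap.fderivCLM ℂ E3 ℂ) u v

lemma hasLineDerivAt_schwartz (i : Fin 3) (u : 𝓢(E3, ℂ)) (x : E3) :
    HasLineDerivAt ℝ (fun x => u x) (dd i u x) x (e3 i) := by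
  rw [dd_apply]
  exact (u.differentiableAt.hasFDerivAt).hasLineDerivAt _

lemma schwartz_bdd (u : 𝓢(E3, ℂ)) : ∃ C, 0 ≤ C ∧ ∀ x, ‖u x‖ ≤ C :=
  ⟨_, norm_nonneg _, u.toBoundedContinuousFunction.norm_coe_le_norm⟩

lemma integrable_nSq (u : 𝓢(E3, ℂ)) : Integrable (fun x => ‖u x‖ ^ 2) :=
  (memLp_two_iff_integrable_sq_norm u.continuous.aestronglyMeasurable).1 (u.memLp 2)

lemma integrable_nSq_mul (u : 𝓢(E3, ℂ)) (w : E3 → ℝ) (hw : Continuous w) (C : ℝ)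
    (hC : ∀ x, |w x| ≤ C) : Integrable (fun x => w x * ‖u x‖ ^ 2) :=
  (integrable_nSq u).bdd_mul hw.aestronglyMeasurable (Eventually.of_forall hC)

lemma integrable_conj_mul (u v : 𝓢(E3, ℂ)) (w : E3 → ℝ) (hw : Continuous w) (C : ℝ)
    (hC : ∀ x, |w x| ≤ C) :
    Integrable (fun x => (starRingEnd ℂ) (u x) * (w x : ℂ) * v x) := by
  obtain ⟨K, hK0, hK⟩ := schwartz_bdd u
  refine v.integrable.bdd_mul (c := K * C) ?_ (Eventually.of_forall fun x => ?_)
  · have := u.continuous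
    apply Continuous.aestronglyMeasurable
    fun_prop
  · rw [norm_mul, RCLike.norm_conj, Complex.norm_real]
    exact mul_le_mul (hK x) (hC x) (norm_nonneg _) hK0

lemma ibp (u v : 𝓢(E3, ℂ)) (i : Fin 3) (w w' : E3 → ℝ) (hw : Continuous w) (hw' : Continuous w')
    (C C' : ℝ) (hC : ∀ x, |w x| ≤ C) (hC' : ∀ x, |w' x| ≤ C')
    (hd : ∀ x, HasLineDerivAt ℝ w (w' x) x (e3 i)) :
    ∫ x, (starRingEnd ℂ) (u x) * (w x : ℂ) * dd i v x =
      - (∫ x, (starRingEnd ℂ) (dd i u x) * (w x : ℂ) * v x)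
      - ∫ x, (starRingEnd ℂ) (u x) * (w' x : ℂ) * v x := by
  have h1 := integrable_conj_mul (dd i u) v w hw C hC
  have h2 := integrable_conj_mul u v w' hw' C' hC'
  have := integral_bilinear_hasLineDerivAt_right_eq_neg_left_of_integrable (μ := volume)
    (f := fun x => (starRingEnd ℂ) (u x) * (w x : ℂ))
    (f' := fun x => (starRingEnd ℂ) (dd i u x) * (w x : ℂ) + (starRingEnd ℂ) (u x) * (w' x : ℂ))
    (g := fun x => v x) (g' := fun x => dd i v x) (v := e3 i) (B := ContinuousLinearMap.mul ℝ ℂ)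
    (by
      have h3 := h1.add h2
      refine h3.congr (Eventually.of_forall fun x => ?_)
      simp [add_mul])
    (by simpa using integrable_conj_mul u (dd i v) w hw C hC)
    (by simpa using integrable_conj_mul u v w hw C hC)
    (by
      intro x _
      have ha := hasLineDerivAt_schwartz i u x
      have hb := hd x
      unfold HasLineDerivAt at *
      have hb' := hb.ofReal_comp
      have ha' : HasDerivAt (fun t : ℝ => (starRingEnd ℂ) (u (x + t • e3 i)))
          ((starRingEnd ℂ) (dd i u x)) 0 := ha.star
      refine (ha'.mul hb').congr_deriv ?_
      simp)
    (by
      intro x _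
      exact hasLineDerivAt_schwartz i v x)
  simp only [ContinuousLinearMap.mul_apply', add_mul] at this
  rw [this, integral_add h1 h2]
  ring

/-- regularized squared distance -/
def qq (δ : ℝ) (y x : E3) : ℝ := δ + ‖x - y‖ ^ 2

lemma qq_cont (δ : ℝ) (y : E3) : Continuous (qq δ y) := by unfold qq; fun_prop

lemma qq_ge (δ : ℝ) (y x : E3) : δ ≤ qq δ y x := by unfold qq; nlinarith [sq_nonneg ‖x - y‖]

lemma nsq_eq (x y : E3) : ‖x - y‖ ^ 2 = ∑ i, (x i - y i) ^ 2 := by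
  rw [EuclideanSpace.norm_sq_eq]; simp

lemma qq_coord (δ : ℝ) (hδ : 0 < δ) (y x : E3) (i : Fin 3) : (x i - y i) ^ 2 ≤ qq δ y x := by
  unfold qq
  rw [nsq_eq]
  have := Finset.single_le_sum (f := fun i => (x i - y i) ^ 2) (fun i _ => sq_nonneg _)
    (Finset.mem_univ i)
  simp only at this
  linarith

lemma coord_line (y x : E3) (i : Fin 3) (t : ℝ) : (x + t • e3 i) i - y i = (x i - y i) + t := by
  simp [e3]; ring

lemma qq_line (δ : ℝ) (y x : E3) (i : Fin 3) (t : ℝ) :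
    qq δ y (x + t • e3 i) = qq δ y x + 2 * t * (x i - y i) + t ^ 2 := by
  unfold qq
  have : x + t • e3 i - y = (x - y) + t • e3 i := by abel
  rw [this, norm_add_sq_real, norm_smul, inner_smul_right]
  simp [e3, EuclideanSpace.inner_single_right]
  ring

lemma qq_hasDeriv (δ : ℝ) (y x : E3) (i : Fin 3) :
    HasDerivAt (fun t : ℝ => qq δ y (x + t • e3 i)) (2 * (x i - y i)) 0 := by
  simp only [qq_line]
  have h := (((hasDerivAt_id (0:ℝ)).const_mul 2).mul_const (x i - y i)).const_add (qq δ y x)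
  have h2 := h.add ((hasDerivAt_id (0:ℝ)).pow 2)
  refine h2.congr_deriv ?_
  simp

lemma coord_hasDeriv (y x : E3) (i : Fin 3) :
    HasDerivAt (fun t : ℝ => (x + t • e3 i) i - y i) 1 0 := by
  simp only [coord_line]
  exact (hasDerivAt_id (0:ℝ)).const_add _

/-- the regularized unit vector field -/
def XX (δ : ℝ) (y : E3) (i : Fin 3) (x : E3) : ℝ := (x i - y i) / √(qq δ y x)

def XX' (δ : ℝ) (y : E3) (i : Fin 3) (x : E3) : ℝ :=
  1 / √(qq δ y x) - (x i - y i) ^ 2 / (√(qq δ y x)) ^ 3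

lemma XX_hasDeriv (δ : ℝ) (hδ : 0 < δ) (y x : E3) (i : Fin 3) :
    HasLineDerivAt ℝ (XX δ y i) (XX' δ y i x) x (e3 i) := by
  have hq : 0 < qq δ y x := hδ.trans_le (qq_ge δ y x)
  have hs : 0 < √(qq δ y x) := Real.sqrt_pos.2 hq
  unfold HasLineDerivAt XX
  have h1 := (qq_hasDeriv δ y x i).sqrt (by simpa using hq.ne')
  have h2 := (coord_hasDeriv y x i).div h1 (by simpa using hs.ne')
  refine h2.congr_deriv ?_
  unfold XX'
  simp only [zero_smul, add_zero]
  field_simp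

def YY (δ : ℝ) (y : E3) (i : Fin 3) (x : E3) : ℝ := (x i - y i) / qq δ y x

def YY' (δ : ℝ) (y : E3) (i : Fin 3) (x : E3) : ℝ :=
  1 / qq δ y x - 2 * (x i - y i) ^ 2 / (qq δ y x) ^ 2

lemma YY_hasDeriv (δ : ℝ) (hδ : 0 < δ) (y x : E3) (i : Fin 3) :
    HasLineDerivAt ℝ (YY δ y i) (YY' δ y i x) x (e3 i) := by
  have hq : 0 < qq δ y x := hδ.trans_le (qq_ge δ y x)
  unfold HasLineDerivAt YY
  have h2 := (coord_hasDeriv y x i).div (qq_hasDeriv δ y x i) (by simpa using hq.ne')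
  refine h2.congr_deriv ?_
  unfold YY'
  simp only [zero_smul, add_zero]
  field_simp

lemma XX_cont (δ : ℝ) (hδ : 0 < δ) (y : E3) (i : Fin 3) : Continuous (XX δ y i) := by
  have hq x : 0 < qq δ y x := hδ.trans_le (qq_ge δ y x)
  have := qq_cont δ y
  unfold XX
  exact Continuous.div (by fun_prop) (by fun_prop) (fun x => (Real.sqrt_pos.2 (hq x)).ne')

lemma XX'_cont (δ : ℝ) (hδ : 0 < δ) (y : E3) (i : Fin 3) : Continuous (XX' δ y i) := by
  have hq x : 0 < qq δ y x := hδ.trans_le (qq_ge δ y x)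
  have := qq_cont δ y
  unfold XX'
  exact Continuous.sub (Continuous.div (by fun_prop) (by fun_prop)
    (fun x => (Real.sqrt_pos.2 (hq x)).ne'))
    (Continuous.div (by fun_prop) (by fun_prop)
    (fun x => (pow_pos (Real.sqrt_pos.2 (hq x)) 3).ne'))

lemma YY_cont (δ : ℝ) (hδ : 0 < δ) (y : E3) (i : Fin 3) : Continuous (YY δ y i) := by
  have hq x : 0 < qq δ y x := hδ.trans_le (qq_ge δ y x)
  have := qq_cont δ y
  unfold YY
  exact Continuous.div (by fun_prop) (by fun_prop) (fun x => (hq x).ne')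

lemma YY'_cont (δ : ℝ) (hδ : 0 < δ) (y : E3) (i : Fin 3) : Continuous (YY' δ y i) := by
  have hq x : 0 < qq δ y x := hδ.trans_le (qq_ge δ y x)
  have := qq_cont δ y
  unfold YY'
  exact Continuous.sub (Continuous.div (by fun_prop) (by fun_prop)
    (fun x => (hq x).ne'))
    (Continuous.div (by fun_prop) (by fun_prop)
    (fun x => (pow_pos (hq x) 2).ne'))

lemma XX_le (δ : ℝ) (hδ : 0 < δ) (y : E3) (i : Fin 3) (x : E3) : |XX δ y i x| ≤ 1 := by
  have hq : 0 < qq δ y x := hδ.trans_le (qq_ge δ y x)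
  unfold XX
  rw [abs_div, abs_of_nonneg (Real.sqrt_nonneg _), div_le_one (Real.sqrt_pos.2 hq)]
  exact Real.abs_le_sqrt (qq_coord δ hδ y x i)

lemma XX'_le (δ : ℝ) (hδ : 0 < δ) (y : E3) (i : Fin 3) (x : E3) :
    |XX' δ y i x| ≤ 1 / √(qq δ y x) := by
  have hq : 0 < qq δ y x := hδ.trans_le (qq_ge δ y x)
  have hs := Real.sqrt_pos.2 hq
  have hh := qq_coord δ hδ y x i
  rw [← Real.sq_sqrt hq.le] at hh
  unfold XX'
  have h1 : (x i - y i) ^ 2 / (√(qq δ y x)) ^ 3 ≤ 1 / √(qq δ y x) := by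
    rw [div_le_div_iff₀ (by positivity) hs]
    nlinarith
  have h2 : 0 ≤ (x i - y i) ^ 2 / (√(qq δ y x)) ^ 3 := by positivity
  rw [abs_le]
  constructor <;> linarith

lemma inv_sqrt_le (δ : ℝ) (hδ : 0 < δ) (y x : E3) : 1 / √(qq δ y x) ≤ 1 / √δ :=
  one_div_le_one_div_of_le (Real.sqrt_pos.2 hδ) (Real.sqrt_le_sqrt (qq_ge δ y x))

lemma YY_le (δ : ℝ) (hδ : 0 < δ) (y : E3) (i : Fin 3) (x : E3) :
    |YY δ y i x| ≤ 1 / √(qq δ y x) := by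
  have hq : 0 < qq δ y x := hδ.trans_le (qq_ge δ y x)
  have hs := Real.sqrt_pos.2 hq
  have : YY δ y i x = XX δ y i x * (1 / √(qq δ y x)) := by
    unfold YY XX
    rw [div_mul_div_comm, mul_one, Real.mul_self_sqrt hq.le]
  rw [this, abs_mul, abs_of_nonneg (by positivity : 0 ≤ 1 / √(qq δ y x))]
  have := XX_le δ hδ y i x
  nlinarith [show 0 ≤ 1 / √(qq δ y x) by positivity]

lemma YY'_le (δ : ℝ) (hδ : 0 < δ) (y : E3) (i : Fin 3) (x : E3) :
    |YY' δ y i x| ≤ 1 / δ := by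
  have hq : 0 < qq δ y x := hδ.trans_le (qq_ge δ y x)
  have hh := qq_coord δ hδ y x i
  unfold YY'
  have h0 : 1 / qq δ y x ≤ 1 / δ := one_div_le_one_div_of_le hδ (qq_ge δ y x)
  have h1 : 2 * (x i - y i) ^ 2 / (qq δ y x) ^ 2 ≤ 2 * (1 / qq δ y x) := by
    rw [mul_one_div, div_le_div_iff₀ (by positivity) hq]
    nlinarith
  have h2 : 0 ≤ 2 * (x i - y i) ^ 2 / (qq δ y x) ^ 2 := by positivity
  rw [abs_le]
  constructor <;> linarith

lemma YY'_sum (δ : ℝ) (hδ : 0 < δ) (y : E3) (x : E3) :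
    1 / qq δ y x ≤ ∑ i, YY' δ y i x := by
  have hq : 0 < qq δ y x := hδ.trans_le (qq_ge δ y x)
  have hn : ‖x - y‖ ^ 2 ≤ qq δ y x := by unfold qq; linarith
  have : ∑ i, YY' δ y i x = 3 / qq δ y x - 2 * ‖x - y‖ ^ 2 / (qq δ y x) ^ 2 := by
    rw [nsq_eq]
    simp only [YY', Fin.sum_univ_three]
    ring
  rw [this]
  have h1 : 2 * ‖x - y‖ ^ 2 / (qq δ y x) ^ 2 ≤ 2 / qq δ y x := by
    rw [div_le_div_iff₀ (by positivity) hq]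
    nlinarith
  have : 3 / qq δ y x = 1 / qq δ y x + 2 / qq δ y x := by ring
  linarith

/-- squared `L²` norm of the gradient -/
def gSq (u : 𝓢(E3, ℂ)) : ℝ := ∑ i, nSq (dd i u)

lemma nSq_nonneg (u : 𝓢(E3, ℂ)) : 0 ≤ nSq u := integral_nonneg fun x => sq_nonneg _

lemma gSq_nonneg (u : 𝓢(E3, ℂ)) : 0 ≤ gSq u := Finset.sum_nonneg fun i _ => nSq_nonneg _

lemma nSq_le_gSq (i : Fin 3) (u : 𝓢(E3, ℂ)) : nSq (dd i u) ≤ gSq u :=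
  Finset.single_le_sum (f := fun i => nSq (dd i u)) (fun i _ => nSq_nonneg _) (Finset.mem_univ i)

/-- the Hardy integral -/
def hSq (δ : ℝ) (y : E3) (u : 𝓢(E3, ℂ)) : ℝ := ∫ x, (1 / qq δ y x) * ‖u x‖ ^ 2

lemma integrable_hSq (δ : ℝ) (hδ : 0 < δ) (y : E3) (u : 𝓢(E3, ℂ)) :
    Integrable (fun x => (1 / qq δ y x) * ‖u x‖ ^ 2) := by
  have hq x : 0 < qq δ y x := hδ.trans_le (qq_ge δ y x)
  refine integrable_nSq_mul u _ ?_ (1 / δ) fun x => ?_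
  · exact continuous_const.div (qq_cont δ y) (fun x => (hq x).ne')
  · rw [abs_of_pos (one_div_pos.2 (hq x))]
    exact one_div_le_one_div_of_le hδ (qq_ge δ y x)

lemma young (l a b : ℝ) (hl : 0 < l) : a * b ≤ l * a ^ 2 + l⁻¹ * b ^ 2 := by
  have h1 : 0 ≤ l * (a - l⁻¹ * b) ^ 2 := by positivity
  have h2 : l * (a - l⁻¹ * b) ^ 2 = l * a ^ 2 - 2 * (a * b) + l⁻¹ * b ^ 2 := by
    field_simp
    ring
  have h3 : 0 ≤ l * a ^ 2 + l⁻¹ * b ^ 2 := by positivity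
  linarith

lemma hardy_term (δ : ℝ) (hδ : 0 < δ) (y : E3) (u v : 𝓢(E3, ℂ)) (i : Fin 3) :
    ‖∫ x, (starRingEnd ℂ) (u x) * (YY δ y i x : ℂ) * v x‖ ≤
      (1 / 12) * hSq δ y u + 12 * nSq v := by
  unfold hSq nSq
  rw [← integral_const_mul, ← integral_const_mul, ← integral_add
    ((integrable_hSq δ hδ y u).const_mul _) ((integrable_nSq v).const_mul _)]
  refine norm_integral_le_of_norm_le (((integrable_hSq δ hδ y u).const_mul _).add
    ((integrable_nSq v).const_mul _)) (Eventually.of_forall fun x => ?_)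
  have hq : 0 < qq δ y x := hδ.trans_le (qq_ge δ y x)
  have h := young (1/12) (‖u x‖ * (1 / √(qq δ y x))) ‖v x‖ (by norm_num)
  rw [mul_pow, div_pow, Real.sq_sqrt hq.le] at h
  rw [norm_mul, norm_mul, RCLike.norm_conj, Complex.norm_real, Real.norm_eq_abs]
  have h2 := YY_le δ hδ y i x
  have h3 : ‖u x‖ * |YY δ y i x| * ‖v x‖ ≤ ‖u x‖ * (1 / √(qq δ y x)) * ‖v x‖ := by gcongr
  refine h3.trans (h.trans (le_of_eq ?_))
  norm_num
  ring

lemma conj_term (u v : 𝓢(E3, ℂ)) (w : E3 → ℝ) :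
    ‖∫ x, (starRingEnd ℂ) (v x) * (w x : ℂ) * u x‖ =
    ‖∫ x, (starRingEnd ℂ) (u x) * (w x : ℂ) * v x‖ := by
  rw [← RCLike.norm_conj, ← integral_conj]
  congr 2
  ext x
  simp
  ring

lemma hardy (δ : ℝ) (hδ : 0 < δ) (y : E3) (u : 𝓢(E3, ℂ)) : hSq δ y u ≤ 48 * gSq u := by
  have hi i : ‖∫ x, (starRingEnd ℂ) (u x) * (YY' δ y i x : ℂ) * u x‖ ≤
      (1 / 6) * hSq δ y u + 24 * nSq (dd i u) := by
    have h := ibp u u i (YY δ y i) (YY' δ y i) (YY_cont δ hδ y i) (YY'_cont δ hδ y i)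
      (1 / √δ) (1 / δ) (fun x => (YY_le δ hδ y i x).trans (inv_sqrt_le δ hδ y x))
      (YY'_le δ hδ y i) (fun x => YY_hasDeriv δ hδ y x i)
    have h1 := hardy_term δ hδ y u (dd i u) i
    have h2 := conj_term u (dd i u) (YY δ y i)
    have h3 : ∫ x, (starRingEnd ℂ) (u x) * (YY' δ y i x : ℂ) * u x =
      - (∫ x, (starRingEnd ℂ) (dd i u x) * (YY δ y i x : ℂ) * u x)
      - ∫ x, (starRingEnd ℂ) (u x) * (YY δ y i x : ℂ) * dd i u x := by
      rw [h]; ring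
    rw [h3]
    refine (norm_sub_le _ _).trans ?_
    rw [norm_neg, h2]
    linarith
  have hr i : ∫ x, YY' δ y i x * ‖u x‖ ^ 2 ≤ (1 / 6) * hSq δ y u + 24 * nSq (dd i u) := by
    refine le_trans ?_ (hi i)
    have : ∫ x, (starRingEnd ℂ) (u x) * (YY' δ y i x : ℂ) * u x
        = ((∫ x, YY' δ y i x * ‖u x‖ ^ 2 : ℝ) : ℂ) := by
      rw [← integral_complex_ofReal]
      congr 1
      ext x
      push_cast
      rw [← Complex.conj_mul']
      ring
    rw [this, Complex.norm_real]
    exact le_abs_self _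
  have hintg i : Integrable (fun x => YY' δ y i x * ‖u x‖ ^ 2) :=
    integrable_nSq_mul u _ (YY'_cont δ hδ y i) _ (YY'_le δ hδ y i)
  have h1 : hSq δ y u ≤ ∑ i, ∫ x, YY' δ y i x * ‖u x‖ ^ 2 := by
    rw [← integral_finsetSum _ (fun i _ => hintg i)]
    refine integral_mono (integrable_hSq δ hδ y u) (integrable_finsetSum _ fun i _ => hintg i) ?_
    intro x
    simp only
    rw [← Finset.sum_mul]
    exact mul_le_mul_of_nonneg_right (YY'_sum δ hδ y x) (sq_nonneg _)
  have h2 := h1.trans (Finset.sum_le_sum fun i _ => hr i)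
  unfold gSq
  simp only [Fin.sum_univ_three] at *
  linarith

/-- the regularized sesquilinear Morawetz form -/
def BB (δ : ℝ) (y : E3) (u v : 𝓢(E3, ℂ)) : ℂ :=
  ∑ i, ∫ x, (starRingEnd ℂ) (u x) * (XX δ y i x : ℂ) * dd i v x

lemma xterm (δ : ℝ) (hδ : 0 < δ) (y : E3) (u v : 𝓢(E3, ℂ)) (i : Fin 3) (l : ℝ) (hl : 0 < l) :
    ‖∫ x, (starRingEnd ℂ) (u x) * (XX δ y i x : ℂ) * v x‖ ≤ l * nSq u + l⁻¹ * nSq v := by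
  unfold nSq
  rw [← integral_const_mul, ← integral_const_mul, ← integral_add
    ((integrable_nSq u).const_mul _) ((integrable_nSq v).const_mul _)]
  refine norm_integral_le_of_norm_le (((integrable_nSq u).const_mul _).add
    ((integrable_nSq v).const_mul _)) (Eventually.of_forall fun x => ?_)
  rw [norm_mul, norm_mul, RCLike.norm_conj, Complex.norm_real, Real.norm_eq_abs]
  have h3 : ‖u x‖ * |XX δ y i x| * ‖v x‖ ≤ ‖u x‖ * 1 * ‖v x‖ := by
    gcongr
    exact XX_le δ hδ y i x
  rw [mul_one] at h3
  exact h3.trans (young l _ _ hl)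

lemma xterm' (δ : ℝ) (hδ : 0 < δ) (y : E3) (u v : 𝓢(E3, ℂ)) (i : Fin 3) (l : ℝ) (hl : 0 < l) :
    ‖∫ x, (starRingEnd ℂ) (u x) * (XX' δ y i x : ℂ) * v x‖ ≤ l * nSq v + l⁻¹ * hSq δ y u := by
  unfold nSq hSq
  rw [← integral_const_mul, ← integral_const_mul, ← integral_add
    ((integrable_nSq v).const_mul _) ((integrable_hSq δ hδ y u).const_mul _)]
  refine norm_integral_le_of_norm_le (((integrable_nSq v).const_mul _).add
    ((integrable_hSq δ hδ y u).const_mul _)) (Eventually.of_forall fun x => ?_)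
  have hq : 0 < qq δ y x := hδ.trans_le (qq_ge δ y x)
  have h := young l ‖v x‖ (‖u x‖ * (1 / √(qq δ y x))) hl
  rw [mul_pow, div_pow, Real.sq_sqrt hq.le] at h
  rw [norm_mul, norm_mul, RCLike.norm_conj, Complex.norm_real, Real.norm_eq_abs]
  have h3 : ‖u x‖ * |XX' δ y i x| * ‖v x‖ ≤ ‖u x‖ * (1 / √(qq δ y x)) * ‖v x‖ := by
    gcongr
    exact XX'_le δ hδ y i x
  rw [mul_comm] at h
  refine h3.trans (h.trans (le_of_eq ?_))
  ring

lemma BB_bound1 (δ : ℝ) (hδ : 0 < δ) (y : E3) (u v : 𝓢(E3, ℂ)) (l : ℝ) (hl : 0 < l) :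
    ‖BB δ y u v‖ ≤ 3 * (l * nSq u) + l⁻¹ * gSq v := by
  unfold BB gSq
  refine (norm_sum_le _ _).trans ((Finset.sum_le_sum fun i _ =>
    xterm δ hδ y u (dd i v) i l hl).trans (le_of_eq ?_))
  rw [Finset.sum_add_distrib, Finset.mul_sum]
  simp

lemma BB_bound2 (δ : ℝ) (hδ : 0 < δ) (y : E3) (u v : 𝓢(E3, ℂ)) (l : ℝ) (hl : 0 < l) :
    ‖BB δ y u v‖ ≤ 6 * (l * nSq v) + 147 * (l⁻¹ * gSq u) := by
  have hi i : ‖∫ x, (starRingEnd ℂ) (u x) * (XX δ y i x : ℂ) * dd i v x‖ ≤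
      2 * (l * nSq v) + 49 * (l⁻¹ * gSq u) := by
    rw [ibp u v i (XX δ y i) (XX' δ y i) (XX_cont δ hδ y i) (XX'_cont δ hδ y i)
      1 (1 / √δ) (XX_le δ hδ y i) (fun x => (XX'_le δ hδ y i x).trans (inv_sqrt_le δ hδ y x))
      (fun x => XX_hasDeriv δ hδ y x i)]
    refine (norm_sub_le _ _).trans ?_
    rw [norm_neg, conj_term]
    have h1 := xterm δ hδ y v (dd i u) i l hl
    have h2 := xterm' δ hδ y u v i l hl
    have hl' : 0 ≤ l⁻¹ := by positivity
    have h3 := mul_le_mul_of_nonneg_left (hardy δ hδ y u) hl'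
    have h4 := mul_le_mul_of_nonneg_left (nSq_le_gSq i u) hl'
    linarith
  unfold BB
  refine (norm_sum_le _ _).trans ((Finset.sum_le_sum fun i _ => hi i).trans (le_of_eq ?_))
  simp
  ring

lemma BB_diff (δ : ℝ) (hδ : 0 < δ) (y : E3) (u v : 𝓢(E3, ℂ)) :
    BB δ y u u - BB δ y v v = BB δ y (u - v) u + BB δ y v (u - v) := by
  have hintg (a b : 𝓢(E3, ℂ)) (i : Fin 3) := integrable_conj_mul a b (XX δ y i) (XX_cont δ hδ y i) 1
    (XX_le δ hδ y i)
  unfold BB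
  rw [← Finset.sum_sub_distrib, ← Finset.sum_add_distrib]
  refine Finset.sum_congr rfl fun i _ => ?_
  rw [← integral_sub (hintg _ _ _) (hintg _ _ _), ← integral_add (hintg _ _ _) (hintg _ _ _)]
  congr 1
  ext x
  simp only [dd_sub, sub_apply, map_sub]
  ring

lemma BB_diff_bound (δ : ℝ) (hδ : 0 < δ) (y : E3) (u v : 𝓢(E3, ℂ)) (l : ℝ) (hl : 0 < l) :
    ‖BB δ y u u - BB δ y v v‖ ≤ 147 * (l * nSq (u - v) + l⁻¹ * (gSq u + gSq v)) := by
  rw [BB_diff δ hδ]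
  refine (norm_add_le _ _).trans ?_
  have h1 := BB_bound1 δ hδ y (u - v) u l hl
  have h2 := BB_bound2 δ hδ y v (u - v) l hl
  have h3 : 0 ≤ l * nSq (u - v) := mul_nonneg hl.le (nSq_nonneg _)
  have h4 : 0 ≤ l⁻¹ * gSq u := mul_nonneg (by positivity) (gSq_nonneg _)
  have h5 : 0 ≤ l⁻¹ * gSq v := mul_nonneg (by positivity) (gSq_nonneg _)
  linarith

lemma sum_low (R s : ℝ) (hR : 0 < R) (hs : 0 ≤ s) (n : ℕ) :
    (∑ k ∈ Finset.range n, (if R * 2 ^ k ≤ s then R * 2 ^ k else 0)) ≤ 2 * s ∧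
    (∑ k ∈ Finset.range n, (if R * 2 ^ k ≤ s then R * 2 ^ k else 0)) ≤ R * 2 ^ n := by
  induction n with
  | zero => simp; constructor <;> linarith
  | succ n ih =>
    rw [Finset.sum_range_succ]
    have hp : 0 < R * 2 ^ n := by positivity
    have he : R * 2 ^ (n + 1) = 2 * (R * 2 ^ n) := by ring
    rw [he]
    split_ifs with h
    · constructor <;> linarith [ih.1, ih.2]
    · constructor <;> linarith [ih.1, ih.2]

lemma sum_high (s : ℝ) (hs : 0 < s) (n : ℕ) : ∀ R : ℝ, 0 < R →
    (∑ k ∈ Finset.range n, (if s < 4 * (R * 2 ^ k) then (R * 2 ^ k)⁻¹ else 0)) ≤ 8 / s ∧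
    (∑ k ∈ Finset.range n, (if s < 4 * (R * 2 ^ k) then (R * 2 ^ k)⁻¹ else 0)) ≤ 2 / R := by
  induction n with
  | zero => intro R hR; simp; constructor <;> positivity
  | succ n ih =>
    intro R hR
    rw [Finset.sum_range_succ']
    have h := ih (2 * R) (by positivity)
    have he : ∀ k : ℕ, R * 2 ^ (k + 1) = 2 * R * 2 ^ k := by intro k; ring
    simp only [he]
    simp only [pow_zero, mul_one]
    have h2 : 2 / (2 * R) = R⁻¹ := by field_simp
    have h3 : 2 / R = 2 * R⁻¹ := by ring
    have hp : 0 < R⁻¹ := by positivity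
    rw [h2] at h
    rw [h3]
    split_ifs with hc
    · have h4 : 2 * R⁻¹ ≤ 8 / s := by
        rw [← h3, div_le_div_iff₀ hR hs]; linarith
      constructor <;> linarith [h.1, h.2]
    · constructor <;> linarith [h.1, h.2]

/-- smooth frequency cutoff -/
def chi (R : ℝ) (hR : 0 < R) : ContDiffBump (0 : E3) := ⟨R, 2 * R, hR, by linarith⟩

lemma chi_tg (R : ℝ) (hR : 0 < R) : Function.HasTemperateGrowth (fun x => (chi R hR x : ℝ)) :=
  (chi R hR).hasCompactSupport.hasTemperateGrowth (chi R hR).contDiff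

lemma chi_one (R : ℝ) (hR : 0 < R) (ξ : E3) (h : ‖ξ‖ ≤ R) : chi R hR ξ = 1 :=
  (chi R hR).one_of_mem_closedBall (by simpa [chi] using h)

lemma chi_zero (R : ℝ) (hR : 0 < R) (ξ : E3) (h : 2 * R ≤ ‖ξ‖) : chi R hR ξ = 0 :=
  (chi R hR).zero_of_le_dist (by simpa [chi] using h)

/-- smooth Fourier projection -/
def PP (R : ℝ) (hR : 0 < R) (g : 𝓢(E3, ℂ)) : 𝓢(E3, ℂ) :=
  𝓕⁻ (SchwartzMap.smulLeftCLM ℂ (fun x => (chi R hR x : ℝ)) (𝓕 g))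

lemma fourier_PP (R : ℝ) (hR : 0 < R) (g : 𝓢(E3, ℂ)) (ξ : E3) :
    𝓕 (PP R hR g) ξ = (chi R hR ξ : ℝ) • 𝓕 g ξ := by
  unfold PP
  rw [FourierTransform.fourier_fourierInv_eq, SchwartzMap.smulLeftCLM_apply_apply (chi_tg R hR)]

lemma nSq_fourier (u : 𝓢(E3, ℂ)) : nSq u = ∫ ξ, ‖𝓕 u ξ‖ ^ 2 :=
  (SchwartzMap.integral_norm_sq_fourier u).symm

lemma integrable_sq_mul (u : 𝓢(E3, ℂ)) (w : E3 → ℝ) (hw : Continuous w) (C : ℝ) (k : ℕ)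
    (hC : ∀ x, |w x| ≤ C) : Integrable (fun x => w x * (‖x‖ ^ k * ‖u x‖ ^ 2)) := by
  refine Integrable.bdd_mul ?_ hw.aestronglyMeasurable (Eventually.of_forall hC)
  obtain ⟨K, hK0, hK⟩ := schwartz_bdd u
  have h := (u.integrable_pow_mul (μ := volume) k).bdd_mul (f := fun x => ‖u x‖) (c := K)
    u.continuous.norm.aestronglyMeasurable
    (Eventually.of_forall fun x => by simpa using hK x)
  refine h.congr (Eventually.of_forall fun x => ?_)
  simp only
  ring

lemma integrable_sq (u : 𝓢(E3, ℂ)) (k : ℕ) : Integrable (fun x => ‖x‖ ^ k * ‖u x‖ ^ 2) := by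
  simpa using integrable_sq_mul u (fun _ => 1) continuous_const 1 k (by simp)

lemma gSq_fourier (u : 𝓢(E3, ℂ)) :
    gSq u = 4 * π ^ 2 * ∫ ξ, ‖ξ‖ ^ 2 * ‖𝓕 u ξ‖ ^ 2 := by
  have h1 i (ξ : E3) : ‖𝓕 (dd i u) ξ‖ ^ 2 = 4 * π ^ 2 * ((ξ i) ^ 2 * ‖𝓕 u ξ‖ ^ 2) := by
    have ht : Function.HasTemperateGrowth (fun x : E3 => inner ℝ x (e3 i)) := by fun_prop
    unfold dd
    rw [SchwartzMap.fourier_lineDerivOp_eq, SchwartzMap.smul_apply,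
      SchwartzMap.smulLeftCLM_apply_apply ht, norm_smul, norm_smul]
    have hin : inner ℝ ξ (e3 i) = ξ i := by simp [e3, EuclideanSpace.inner_single_right]
    rw [hin]
    simp only [norm_mul, Complex.norm_I, Complex.norm_real, Real.norm_eq_abs, mul_pow, sq_abs]
    norm_num
  unfold gSq
  simp only [nSq_fourier, h1]
  rw [← integral_finsetSum, ← integral_const_mul]
  · congr 1
    ext ξ
    rw [← Finset.mul_sum, ← Finset.sum_mul]
    congr 2
    rw [EuclideanSpace.norm_sq_eq]
    simp
  · intro i _
    have := integrable_nSq (𝓕 (dd i u))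
    simpa only [h1] using this

/-- Fourier weight of one dyadic step -/
def tt (R : ℝ) (hR : 0 < R) (ξ : E3) : ℝ :=
  R * (chi (2 * R) (by positivity) ξ - chi R hR ξ) ^ 2 +
    R⁻¹ * (4 * π ^ 2 * (‖ξ‖ ^ 2 * (chi (2 * R) (by positivity) ξ ^ 2 + chi R hR ξ ^ 2)))

lemma chi_abs (R : ℝ) (hR : 0 < R) (ξ : E3) : |chi R hR ξ| ≤ 1 := by
  rw [abs_of_nonneg (chi R hR).nonneg]; exact (chi R hR).le_one

lemma chi_sq (R : ℝ) (hR : 0 < R) (ξ : E3) : (chi R hR ξ) ^ 2 ≤ 1 := by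
  have := chi_abs R hR ξ
  rwa [← sq_le_one_iff_abs_le_one] at this

lemma chi_sub_abs (R R' : ℝ) (hR : 0 < R) (hR' : 0 < R') (ξ : E3) :
    |chi R' hR' ξ - chi R hR ξ| ≤ 1 := by
  have h1 := (chi R hR).nonneg (x := ξ)
  have h2 := (chi R hR).le_one (x := ξ)
  have h3 := (chi R' hR').nonneg (x := ξ)
  have h4 := (chi R' hR').le_one (x := ξ)
  rw [abs_le]; constructor <;> linarith

lemma tt_le (R : ℝ) (hR : 0 < R) (ξ : E3) :
    tt R hR ξ ≤ (if R ≤ ‖ξ‖ then R else 0) +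
      8 * π ^ 2 * ‖ξ‖ ^ 2 * (if ‖ξ‖ < 4 * R then R⁻¹ else 0) := by
  have hR2 : 0 < 2 * R := by positivity
  unfold tt
  refine add_le_add ?_ ?_
  · split_ifs with h
    · have := chi_sub_abs R (2 * R) hR hR2 ξ
      rw [← sq_le_one_iff_abs_le_one] at this
      nlinarith
    · rw [chi_one R hR ξ (by linarith), chi_one (2 * R) _ ξ (by linarith)]
      simp
  · split_ifs with h
    · have h1 := chi_sq R hR ξ
      have h2 := chi_sq (2 * R) hR2 ξ
      calc _ ≤ R⁻¹ * (4 * π ^ 2 * (‖ξ‖ ^ 2 * (1 + 1))) := by gcongr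
        _ = _ := by ring
    · rw [chi_zero R hR ξ (by linarith), chi_zero (2 * R) _ ξ (by linarith)]
      simp

lemma tt_sum (R : ℝ) (hR : 0 < R) (n : ℕ) (ξ : E3) :
    ∑ k ∈ Finset.range n, tt (R * 2 ^ k) (by positivity) ξ ≤ (2 + 64 * π ^ 2) * ‖ξ‖ := by
  refine (Finset.sum_le_sum fun k _ => tt_le (R * 2 ^ k) (by positivity) ξ).trans ?_
  rw [Finset.sum_add_distrib, ← Finset.mul_sum]
  have h1 := (sum_low R ‖ξ‖ hR (norm_nonneg _) n).1
  rcases (norm_nonneg ξ).eq_or_lt with h0 | h0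
  · rw [← h0] at h1 ⊢
    simpa using h1
  · have h2 := (sum_high ‖ξ‖ h0 n R hR).1
    have h3 := mul_le_mul_of_nonneg_left h2 (by positivity : 0 ≤ 8 * π ^ 2 * ‖ξ‖ ^ 2)
    have h4 : 8 * π ^ 2 * ‖ξ‖ ^ 2 * (8 / ‖ξ‖) = 64 * π ^ 2 * ‖ξ‖ := by
      field_simp; ring
    linarith

lemma fourier_sub_apply (u v : 𝓢(E3, ℂ)) (ξ : E3) : 𝓕 (u - v) ξ = 𝓕 u ξ - 𝓕 v ξ := by
  have : 𝓕 (u - v) = 𝓕 u - 𝓕 v := map_sub (SchwartzMap.fourierTransformCLM ℂ) u v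
  rw [this]; rfl

lemma integrable_A (g : 𝓢(E3, ℂ)) (R R' : ℝ) (hR : 0 < R) (hR' : 0 < R') :
    Integrable (fun ξ => (chi R' hR' ξ - chi R hR ξ) ^ 2 * ‖𝓕 g ξ‖ ^ 2) := by
  refine integrable_nSq_mul (𝓕 g) _ ?_ 1 fun ξ => ?_
  · have h1 := (chi R hR).continuous
    have h2 := (chi R' hR').continuous
    fun_prop
  · rw [abs_pow]
    exact pow_le_one₀ (abs_nonneg _) (chi_sub_abs R R' hR hR' ξ)

lemma integrable_C (g : 𝓢(E3, ℂ)) (R : ℝ) (hR : 0 < R) :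
    Integrable (fun ξ => (chi R hR ξ) ^ 2 * (‖ξ‖ ^ 2 * ‖𝓕 g ξ‖ ^ 2)) := by
  refine integrable_sq_mul (𝓕 g) _ ?_ 1 2 fun ξ => ?_
  · have h1 := (chi R hR).continuous
    fun_prop
  · rw [abs_pow]
    exact pow_le_one₀ (abs_nonneg _) (chi_abs R hR ξ)

lemma nSq_PP_sub (g : 𝓢(E3, ℂ)) (R R' : ℝ) (hR : 0 < R) (hR' : 0 < R') :
    nSq (PP R' hR' g - PP R hR g) = ∫ ξ, (chi R' hR' ξ - chi R hR ξ) ^ 2 * ‖𝓕 g ξ‖ ^ 2 := by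
  rw [nSq_fourier]
  congr 1
  ext ξ
  rw [fourier_sub_apply, fourier_PP, fourier_PP, ← sub_smul, norm_smul, mul_pow, Real.norm_eq_abs,
    sq_abs]

lemma gSq_PP (g : 𝓢(E3, ℂ)) (R : ℝ) (hR : 0 < R) :
    gSq (PP R hR g) = 4 * π ^ 2 * ∫ ξ, (chi R hR ξ) ^ 2 * (‖ξ‖ ^ 2 * ‖𝓕 g ξ‖ ^ 2) := by
  rw [gSq_fourier]
  congr 2
  ext ξ
  rw [fourier_PP, norm_smul, mul_pow, Real.norm_eq_abs, sq_abs]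
  ring

lemma integrable_tt (g : 𝓢(E3, ℂ)) (R : ℝ) (hR : 0 < R) :
    Integrable (fun ξ => tt R hR ξ * ‖𝓕 g ξ‖ ^ 2) := by
  have hR2 : 0 < 2 * R := by positivity
  have h := ((integrable_A g R (2 * R) hR hR2).const_mul R).add
    (((integrable_C g (2 * R) hR2).add (integrable_C g R hR)).const_mul (R⁻¹ * (4 * π ^ 2)))
  refine h.congr (Eventually.of_forall fun ξ => ?_)
  simp only [Pi.add_apply, tt]
  ring

lemma step_eq (g : 𝓢(E3, ℂ)) (R : ℝ) (hR : 0 < R) (hR2 : 0 < 2 * R) :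
    R * nSq (PP (2 * R) hR2 g - PP R hR g) +
      R⁻¹ * (gSq (PP (2 * R) hR2 g) + gSq (PP R hR g)) = ∫ ξ, tt R hR ξ * ‖𝓕 g ξ‖ ^ 2 := by
  have h2 : Integrable (fun ξ => R⁻¹ * (4 * π ^ 2) *
      (chi (2 * R) hR2 ξ ^ 2 * (‖ξ‖ ^ 2 * ‖𝓕 g ξ‖ ^ 2) +
        chi R hR ξ ^ 2 * (‖ξ‖ ^ 2 * ‖𝓕 g ξ‖ ^ 2))) :=
    ((integrable_C g (2 * R) hR2).add (integrable_C g R hR)).const_mul _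
  rw [nSq_PP_sub, gSq_PP, gSq_PP, ← mul_add, ← integral_add (integrable_C _ _ _)
    (integrable_C _ _ _), ← mul_assoc, ← integral_const_mul, ← integral_const_mul, ← integral_add
    ((integrable_A g R (2 * R) hR hR2).const_mul R) h2]
  congr 1
  ext ξ
  simp only [tt]
  ring

lemma PP_congr (g : 𝓢(E3, ℂ)) (R R' : ℝ) (hR : 0 < R) (hR' : 0 < R') (h : R = R') :
    PP R hR g = PP R' hR' g := by
  subst h; rfl

lemma telescope (δ : ℝ) (hδ : 0 < δ) (y : E3) (g : 𝓢(E3, ℂ)) (R : ℝ) (hR : 0 < R) (n : ℕ) :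
    ‖BB δ y (PP (R * 2 ^ n) (by positivity) g) (PP (R * 2 ^ n) (by positivity) g)
      - BB δ y (PP R hR g) (PP R hR g)‖ ≤
    147 * ∑ k ∈ Finset.range n, ∫ ξ, tt (R * 2 ^ k) (by positivity) ξ * ‖𝓕 g ξ‖ ^ 2 := by
  induction n with
  | zero =>
    rw [PP_congr g (R * 2 ^ 0) R (by positivity) hR (by simp)]
    simp
  | succ n ih =>
    have hp : 0 < R * 2 ^ n := by positivity
    rw [PP_congr g (R * 2 ^ (n + 1)) (2 * (R * 2 ^ n)) (by positivity) (by positivity) (by ring),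
      Finset.sum_range_succ, ← step_eq g _ hp (by positivity)]
    have h := BB_diff_bound δ hδ y (PP (2 * (R * 2 ^ n)) (by positivity) g)
      (PP (R * 2 ^ n) hp g) (R * 2 ^ n) hp
    have := norm_sub_le_norm_sub_add_norm_sub
      (BB δ y (PP (2 * (R * 2 ^ n)) (by positivity) g) (PP (2 * (R * 2 ^ n)) (by positivity) g))
      (BB δ y (PP (R * 2 ^ n) hp g) (PP (R * 2 ^ n) hp g)) (BB δ y (PP R hR g) (PP R hR g))
    linarith

lemma telescope' (δ : ℝ) (hδ : 0 < δ) (y : E3) (g : 𝓢(E3, ℂ)) (R : ℝ) (hR : 0 < R) (n : ℕ) :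
    ‖BB δ y (PP (R * 2 ^ n) (by positivity) g) (PP (R * 2 ^ n) (by positivity) g)
      - BB δ y (PP R hR g) (PP R hR g)‖ ≤
    147 * ((2 + 64 * π ^ 2) * ∫ ξ, ‖ξ‖ ^ 1 * ‖𝓕 g ξ‖ ^ 2) := by
  refine (telescope δ hδ y g R hR n).trans (mul_le_mul_of_nonneg_left ?_ (by norm_num))
  rw [← integral_finsetSum _ (fun k _ => integrable_tt g _ _), ← integral_const_mul]
  refine integral_mono (integrable_finsetSum _ fun k _ => integrable_tt g _ _)
    ((integrable_sq (𝓕 g) 1).const_mul _) fun ξ => ?_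
  simp only
  rw [← Finset.sum_mul, pow_one, ← mul_assoc]
  exact mul_le_mul_of_nonneg_right (tt_sum R hR n ξ) (sq_nonneg _)

lemma low_bound (δ : ℝ) (hδ : 0 < δ) (y : E3) (g : 𝓢(E3, ℂ)) (R : ℝ) (hR : 0 < R) :
    ‖BB δ y (PP R hR g) (PP R hR g)‖ ≤ R * ((3 + 16 * π ^ 2) * nSq g) := by
  have h := BB_bound1 δ hδ y (PP R hR g) (PP R hR g) R hR
  have h1 : nSq (PP R hR g) ≤ nSq g := by
    rw [nSq_fourier, nSq_fourier]
    refine integral_mono (integrable_nSq _) (integrable_nSq _) fun ξ => ?_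
    simp only [fourier_PP, norm_smul, mul_pow, Real.norm_eq_abs, sq_abs]
    nlinarith [chi_sq R hR ξ, sq_nonneg ‖𝓕 g ξ‖]
  have h2 : gSq (PP R hR g) ≤ 16 * π ^ 2 * R ^ 2 * nSq g := by
    rw [gSq_PP, nSq_fourier]
    have : ∫ ξ, (chi R hR ξ) ^ 2 * (‖ξ‖ ^ 2 * ‖𝓕 g ξ‖ ^ 2) ≤
        ∫ ξ, 4 * R ^ 2 * ‖𝓕 g ξ‖ ^ 2 := by
      refine integral_mono (integrable_C _ _ _) ((integrable_nSq _).const_mul _) fun ξ => ?_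
      simp only
      rw [← mul_assoc]
      refine mul_le_mul_of_nonneg_right ?_ (sq_nonneg _)
      by_cases hc : 2 * R ≤ ‖ξ‖
      · rw [chi_zero R hR ξ hc]
        simp; positivity
      · have h5 : ‖ξ‖ ^ 2 ≤ (2 * R) ^ 2 := by
          gcongr
          linarith
        nlinarith [chi_sq R hR ξ, sq_nonneg ‖ξ‖]
    rw [integral_const_mul] at this
    have h6 := mul_le_mul_of_nonneg_left this (by positivity : 0 ≤ 4 * π ^ 2)
    linarith
  have h3 := mul_le_mul_of_nonneg_left h2 (by positivity : 0 ≤ R⁻¹)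
  have h4 := mul_le_mul_of_nonneg_left h1 hR.le
  have h5 : R⁻¹ * (16 * π ^ 2 * R ^ 2 * nSq g) = R * (16 * π ^ 2 * nSq g) := by
    field_simp
  linarith

lemma high_bound (δ : ℝ) (hδ : 0 < δ) (y : E3) (g : 𝓢(E3, ℂ)) (R : ℝ) (hR : 0 < R) :
    ‖BB δ y g g - BB δ y (PP R hR g) (PP R hR g)‖ ≤ R⁻¹ * (147 * (3 * gSq g)) := by
  have h := BB_diff_bound δ hδ y g (PP R hR g) R hR
  have h1 : gSq (PP R hR g) ≤ gSq g := by
    rw [gSq_PP, gSq_fourier]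
    refine mul_le_mul_of_nonneg_left ?_ (by positivity)
    refine integral_mono (integrable_C _ _ _) (integrable_sq _ 2) fun ξ => ?_
    simp only
    nlinarith [chi_sq R hR ξ, mul_nonneg (sq_nonneg ‖ξ‖) (sq_nonneg ‖𝓕 g ξ‖)]
  have h2 : R ^ 2 * nSq (g - PP R hR g) ≤ gSq g := by
    rw [nSq_fourier, gSq_fourier, ← integral_const_mul, ← integral_const_mul]
    refine integral_mono ((integrable_nSq _).const_mul _) ((integrable_sq _ 2).const_mul _)
      fun ξ => ?_
    simp only
    have : 𝓕 (g - PP R hR g) ξ = (1 - chi R hR ξ : ℝ) • 𝓕 g ξ := by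
      rw [fourier_sub_apply, fourier_PP, sub_smul, one_smul]
    rw [this, norm_smul, mul_pow, Real.norm_eq_abs, sq_abs, ← mul_assoc, ← mul_assoc]
    refine mul_le_mul_of_nonneg_right ?_ (sq_nonneg _)
    by_cases hc : ‖ξ‖ ≤ R
    · rw [chi_one R hR ξ hc]
      simp; positivity
    · have h5 : R ^ 2 ≤ ‖ξ‖ ^ 2 := by
        gcongr
        linarith
      have h6 : (1 - chi R hR ξ) ^ 2 ≤ 1 := by
        have h7 := (chi R hR).nonneg (x := ξ)
        have h8 := (chi R hR).le_one (x := ξ)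
        nlinarith
      have hpi : 1 ≤ 4 * π ^ 2 := by nlinarith [Real.pi_gt_three]
      calc R ^ 2 * (1 - chi R hR ξ) ^ 2 ≤ ‖ξ‖ ^ 2 * 1 := by gcongr
        _ ≤ 4 * π ^ 2 * ‖ξ‖ ^ 2 := by nlinarith [sq_nonneg ‖ξ‖]
  have h3 := mul_le_mul_of_nonneg_left h1 (by positivity : 0 ≤ R⁻¹)
  have h4 := mul_le_mul_of_nonneg_left h2 (by positivity : 0 ≤ R⁻¹)
  have h5 : R⁻¹ * (R ^ 2 * nSq (g - PP R hR g)) = R * nSq (g - PP R hR g) := by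
    field_simp
  linarith

lemma BB_main (δ : ℝ) (hδ : 0 < δ) (y : E3) (g : 𝓢(E3, ℂ)) :
    ‖BB δ y g g‖ ≤ 147 * ((2 + 64 * π ^ 2) * ∫ ξ, ‖ξ‖ ^ 1 * ‖𝓕 g ξ‖ ^ 2) := by
  set S := 147 * ((2 + 64 * π ^ 2) * ∫ ξ, ‖ξ‖ ^ 1 * ‖𝓕 g ξ‖ ^ 2) with hS
  have key : ∀ m : ℕ, ‖BB δ y g g‖ ≤
      S + ((1 / 2 : ℝ) ^ m) * (147 * (3 * gSq g) + (3 + 16 * π ^ 2) * nSq g) := by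
    intro m
    have hr : (0:ℝ) < (1 / 2) ^ m := by positivity
    have h1 := low_bound δ hδ y g _ hr
    have h2 := telescope' δ hδ y g _ hr (2 * m)
    have h3 := high_bound δ hδ y g ((1 / 2) ^ m * 2 ^ (2 * m)) (by positivity)
    have h4 : (((1 / 2 : ℝ) ^ m * 2 ^ (2 * m)))⁻¹ = (1 / 2) ^ m := by
      rw [pow_mul, ← mul_pow]
      norm_num
      try rw [one_div, inv_pow]
    rw [h4] at h3
    rw [← hS] at h2
    have h5 := norm_le_norm_add_norm_sub' (BB δ y g g)
      (BB δ y (PP ((1 / 2) ^ m * 2 ^ (2 * m)) (by positivity) g)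
        (PP ((1 / 2) ^ m * 2 ^ (2 * m)) (by positivity) g))
    have h6 := norm_le_norm_add_norm_sub'
      (BB δ y (PP ((1 / 2) ^ m * 2 ^ (2 * m)) (by positivity) g)
        (PP ((1 / 2) ^ m * 2 ^ (2 * m)) (by positivity) g))
      (BB δ y (PP ((1 / 2) ^ m) hr g) (PP ((1 / 2) ^ m) hr g))
    linarith
  have ht : Tendsto (fun m : ℕ => S + ((1 / 2 : ℝ) ^ m) *
      (147 * (3 * gSq g) + (3 + 16 * π ^ 2) * nSq g)) atTop (nhds (S + 0 *
      (147 * (3 * gSq g) + (3 + 16 * π ^ 2) * nSq g))) :=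
    ((tendsto_pow_atTop_nhds_zero_of_lt_one (by norm_num) (by norm_num)).mul_const _).const_add _
  have := ge_of_tendsto' ht key
  simpa using this

lemma mor_tendsto (y : E3) (g : 𝓢(E3, ℂ)) :
    Tendsto (fun n : ℕ => (BB (1 / ((n:ℝ) + 1)) y g g).im) atTop
      (nhds (morAction (fun x => g x) y)) := by
  have hpos (n : ℕ) : (0:ℝ) < 1 / ((n:ℝ) + 1) := by positivity
  have hintg (n : ℕ) (i : Fin 3) := integrable_conj_mul g (dd i g) (XX (1 / ((n:ℝ) + 1)) y i)
    (XX_cont _ (hpos n) y i) 1 (XX_le _ (hpos n) y i)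
  have hBB (n : ℕ) : (BB (1 / ((n:ℝ) + 1)) y g g).im =
      ∫ x, ∑ i, massCur (fun x => g x) i x * XX (1 / ((n:ℝ) + 1)) y i x := by
    unfold BB
    rw [← integral_finsetSum _ (fun i _ => hintg n i)]
    have := integral_im (integrable_finsetSum Finset.univ fun i _ => hintg n i)
    simp only [RCLike.im_to_complex] at this
    rw [← this]
    congr 1
    ext x
    rw [Complex.im_sum]
    refine Finset.sum_congr rfl fun i _ => ?_
    rw [mul_right_comm, Complex.im_mul_ofReal, massCur, dd_apply]
  simp only [hBB]
  unfold morAction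
  have hm (i : Fin 3) : Integrable (fun x => massCur (fun x => g x) i x) := by
    have h := integrable_conj_mul g (dd i g) (fun _ => 1) continuous_const 1 (by simp)
    refine h.im.congr (Eventually.of_forall fun x => ?_)
    simp [massCur, dd_apply]
  refine tendsto_integral_of_dominated_convergence
    (fun x => ∑ i, |massCur (fun x => g x) i x|) ?_ ?_ ?_ ?_
  · intro n
    refine (integrable_finsetSum _ fun i _ => ?_).aestronglyMeasurable
    exact (hm i).mul_bdd (c := 1) (XX_cont _ (hpos n) y i).aestronglyMeasurable
      (Eventually.of_forall fun x => XX_le _ (hpos n) y i x)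
  · exact integrable_finsetSum _ fun i _ => (hm i).abs
  · intro n
    refine Eventually.of_forall fun x => ?_
    refine (norm_sum_le _ _).trans (Finset.sum_le_sum fun i _ => ?_)
    rw [norm_mul, Real.norm_eq_abs, Real.norm_eq_abs]
    have := XX_le _ (hpos n) y i x
    nlinarith [abs_nonneg (massCur (fun x => g x) i x)]
  · refine Eventually.of_forall fun x => ?_
    refine tendsto_finsetSum _ fun i _ => Tendsto.const_mul _ ?_
    unfold XX
    by_cases hxy : x = y
    · subst hxy; simp
    · have hn : 0 < ‖x - y‖ := norm_pos_iff.2 (sub_ne_zero.2 hxy)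
      refine Tendsto.div tendsto_const_nhds ?_ hn.ne'
      have h1 : Tendsto (fun n : ℕ => qq (1 / ((n:ℝ) + 1)) y x) atTop (nhds (0 + ‖x - y‖ ^ 2)) :=
        tendsto_one_div_add_atTop_nhds_zero_nat.add_const _
      have h2 := h1.sqrt
      simpa [Real.sqrt_sq hn.le] using h2

/-- There is `C > 0` so that for every Schwartz `g : ℝ³ → ℂ` and every
`y ∈ ℝ³`, the Morawetz action of `g` centered at `y` is bounded by `C ‖g‖²_{Ḣ^{1/2}}`. -/
theorem morawetz_action_Hhalf_bound :
    ∃ C > (0:ℝ), ∀ (g : SchwartzMap E3 ℂ) (y : E3),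
      |morAction (fun x => g x) y| ≤ C * sobSq (1/2) (fun x => g x) := by
  refine ⟨147 * (2 + 64 * π ^ 2), by positivity, fun g y => ?_⟩
  have hs : sobSq (1/2) (fun x => g x) = ∫ ξ, ‖ξ‖ ^ 1 * ‖𝓕 g ξ‖ ^ 2 := by
    unfold sobSq
    congr 1
    ext ξ
    rw [SchwartzMap.fourier_coe]
    norm_num
  rw [hs, mul_assoc]
  refine le_of_tendsto' (mor_tendsto y g).abs fun n => ?_
  exact (Complex.abs_im_le_norm _).trans (BB_main _ (by positivity) y g)
end
end

section
/- There is a constant C > 0 such that for every Schwartz function g : ℝ³ → ℂ, the ℝ³-vector-valued function h(x) = (x/|x|) g(x) (which lies in L²(ℝ³)) satisfies ‖h‖_{Ḣ^{1/2}(ℝ³)} ≤ C ‖g‖_{Ḣ^{1/2}(ℝ³)}. -/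
open MeasureTheory Real Complex Filter
open scoped FourierTransform ContDiff ENNReal

noncomputable section

/-- the radial kernel `min(1,|z|²)/|z|⁴`. -/
def kk (z : E3) : ℝ := min 1 (‖z‖ ^ 2) / ‖z‖ ^ 4

lemma kk_nonneg (z : E3) : 0 ≤ kk z := by unfold kk; positivity

lemma kk_integrable : Integrable kk := by
  have h := (integrable_fun_norm_addHaar (volume : Measure E3)
    (f := fun r : ℝ => min 1 (r ^ 2) / r ^ 4)).2 ?_
  · exact h
  · have h1 : Integrable (fun r : ℝ => 2 * (1 + r ^ 2)⁻¹) := integrable_inv_one_add_sq.const_mul 2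
    refine Integrable.mono' h1.integrableOn ?_ ?_
    · apply Measurable.aestronglyMeasurable
      fun_prop
    · filter_upwards [ae_restrict_mem measurableSet_Ioi] with r hr
      have hr' : (0:ℝ) < r := hr
      have : Module.finrank ℝ E3 = 3 := by simp
      rw [this, Real.norm_of_nonneg (by simp only [smul_eq_mul]; positivity), smul_eq_mul]
      have e : r ^ (3 - 1) * (min 1 (r ^ 2) / r ^ 4) = min 1 (r ^ 2) / r ^ 2 := by
        norm_num
        field_simp
      rw [e, ← div_eq_mul_inv, div_le_div_iff₀ (by positivity) (by positivity)]
      rcases le_total 1 (r ^ 2) with h | h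
      · rw [min_eq_left h]; nlinarith
      · rw [min_eq_right h]; nlinarith

/-- its total mass. -/
def KK : ℝ := ∫ z : E3, kk z

lemma KK_nonneg : 0 ≤ KK := integral_nonneg kk_nonneg

lemma kk_scale (a : ℝ) (ha : 0 ≤ a) :
    ∫⁻ z : E3, ENNReal.ofReal (min 1 (a ^ 2 * ‖z‖ ^ 2) / ‖z‖ ^ 4) = ENNReal.ofReal (KK * a) := by
  rcases ha.eq_or_lt with rfl | ha
  · simp
  have e : ∀ z : E3, min 1 (a ^ 2 * ‖z‖ ^ 2) / ‖z‖ ^ 4 = a ^ 4 * kk (a • z) := by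
    intro z
    unfold kk
    rw [norm_smul, Real.norm_of_nonneg ha.le, mul_pow, mul_pow]
    rcases eq_or_ne ‖z‖ 0 with h | h
    · simp [h]
    · field_simp
  simp_rw [e]
  rw [← ofReal_integral_eq_lintegral_ofReal]
  · congr 1
    rw [integral_const_mul, Measure.integral_comp_smul]
    have : Module.finrank ℝ E3 = 3 := by simp
    rw [this, abs_of_pos (by positivity), smul_eq_mul]
    unfold KK
    field_simp
  · exact (kk_integrable.comp_smul ha.ne').const_mul _
  · exact .of_forall fun z => mul_nonneg (by positivity) (kk_nonneg _)

/-- the Gagliardo energy. -/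
def GG (f : E3 → ℂ) : ℝ≥0∞ :=
  ∫⁻ z : E3, ∫⁻ x : E3, ENNReal.ofReal (‖f (x + z) - f x‖ ^ 2 / ‖z‖ ^ 4)

/-- Fourier-side energy. -/
def AA (f : E3 → ℂ) : ℝ≥0∞ := ∫⁻ ξ : E3, ENNReal.ofReal (‖ξ‖ * ‖𝓕 f ξ‖ ^ 2)

/-- Hardy energy. -/
def NN (f : E3 → ℂ) : ℝ≥0∞ := ∫⁻ x : E3, ENNReal.ofReal (‖f x‖ ^ 2 / ‖x‖)

lemma schwartz_sq_integrable (f : SchwartzMap E3 ℂ) : Integrable (fun x => ‖f x‖ ^ 2) :=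
  (memLp_two_iff_integrable_sq_norm (f.continuous.aestronglyMeasurable)).1 (f.memLp 2)

lemma plancherel_lintegral (f : SchwartzMap E3 ℂ) :
    ∫⁻ x : E3, ENNReal.ofReal (‖f x‖ ^ 2) = ∫⁻ ξ : E3, ENNReal.ofReal (‖𝓕 (f : E3 → ℂ) ξ‖ ^ 2) := by
  rw [← ofReal_integral_eq_lintegral_ofReal (schwartz_sq_integrable f)
    (.of_forall fun _ => by positivity)]
  have h := schwartz_sq_integrable (𝓕 f)
  rw [← f.integral_norm_sq_fourier, ofReal_integral_eq_lintegral_ofReal h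
    (.of_forall fun _ => by positivity)]
  rfl

/-- squared modulus of the symbol of a difference. -/
def ss (t : ℝ) : ℝ := ‖(Real.fourierChar t : ℂ) - 1‖ ^ 2

lemma ss_eq (t : ℝ) : ss t = 2 - 2 * Real.cos (2 * π * t) := by
  unfold ss
  rw [Real.fourierChar_apply, ← Complex.normSq_eq_norm_sq, Complex.normSq_apply, Complex.exp_mul_I]
  rw [← Complex.ofReal_cos, ← Complex.ofReal_sin]
  simp only [Complex.sub_re, Complex.add_re, Complex.mul_re, Complex.ofReal_re, Complex.ofReal_im,
    Complex.I_re, Complex.I_im, Complex.sub_im, Complex.add_im, Complex.mul_im, Complex.one_re,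
    Complex.one_im]
  nlinarith [Real.sin_sq_add_cos_sq (2 * π * t)]

lemma ss_le (t : ℝ) : ss t ≤ 4 * min 1 (π ^ 2 * t ^ 2) := by
  rw [ss_eq]
  rcases le_total 1 (π ^ 2 * t ^ 2) with h | h
  · rw [min_eq_left h]; nlinarith [Real.neg_one_le_cos (2 * π * t)]
  · rw [min_eq_right h]; nlinarith [Real.one_sub_sq_div_two_le_cos (x := 2 * π * t)]

lemma ss_ge (t : ℝ) (h1 : 3 / 8 ≤ t) (h2 : t ≤ 5 / 8) : 1 ≤ ss t := by
  rw [ss_eq]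
  have := Real.cos_nonpos_of_pi_div_two_le_of_le (x := 2 * π * t) (by nlinarith [Real.pi_pos])
    (by nlinarith [Real.pi_pos])
  linarith

lemma diff_plancherel (f : SchwartzMap E3 ℂ) (z : E3) :
    ∫⁻ x : E3, ENNReal.ofReal (‖f (x + z) - f x‖ ^ 2)
      = ∫⁻ ξ : E3, ENNReal.ofReal (ss (inner ℝ z ξ) * ‖𝓕 (f : E3 → ℂ) ξ‖ ^ 2) := by
  set d : SchwartzMap E3 ℂ := f.compSubConstCLM ℂ (-z) - f with hd
  have e1 : ∀ x, d x = f (x + z) - f x := by intro x; simp [hd]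
  have e2 : ∀ ξ, 𝓕 (d : E3 → ℂ) ξ = ((Real.fourierChar (inner ℝ z ξ) : ℂ) - 1) * 𝓕 (f : E3 → ℂ) ξ := by
    intro ξ
    have h1 : 𝓕 (d : E3 → ℂ) = 𝓕 ((f.compSubConstCLM ℂ (-z) : SchwartzMap E3 ℂ) : E3 → ℂ) - 𝓕 (f : E3 → ℂ) := by
      have : 𝓕 d = 𝓕 (f.compSubConstCLM ℂ (-z)) - 𝓕 f := by
        rw [hd]; exact map_sub (SchwartzMap.fourierTransformCLM ℂ) _ _
      exact congrArg (fun s : SchwartzMap E3 ℂ => (s : E3 → ℂ)) this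
    have h2 : 𝓕 ((f.compSubConstCLM ℂ (-z) : SchwartzMap E3 ℂ) : E3 → ℂ) ξ
        = (Real.fourierChar (inner ℝ z ξ) : ℂ) * 𝓕 (f : E3 → ℂ) ξ := by
      have := congrFun (VectorFourier.fourierIntegral_comp_add_right Real.fourierChar volume (innerₗ E3) (f : E3 → ℂ) z) ξ
      have e : ((f.compSubConstCLM ℂ (-z) : SchwartzMap E3 ℂ) : E3 → ℂ) = (f : E3 → ℂ) ∘ fun v => v + z := by
        ext x; simp
      rw [e]
      exact this
    rw [h1, Pi.sub_apply, h2]; ring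
  simp_rw [← e1]
  rw [plancherel_lintegral d]
  simp_rw [e2, norm_mul, mul_pow]
  rfl

/-- volume of the unit ball. -/
def vv : ℝ := (volume : Measure E3).real (Metric.ball 0 1)

lemma vv_pos : 0 < vv := by
  unfold vv Measure.real
  exact ENNReal.toReal_pos (Metric.measure_ball_pos _ _ one_pos).ne' measure_ball_lt_top.ne

lemma ofReal_vv : ENNReal.ofReal vv = volume (Metric.ball (0 : E3) 1) := by
  unfold vv Measure.real
  exact ENNReal.ofReal_toReal measure_ball_lt_top.ne

lemma vol_ball (x : E3) (r : ℝ) (hr : 0 ≤ r) :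
    volume (Metric.ball x r) = ENNReal.ofReal (r ^ 3 * vv) := by
  have : Module.finrank ℝ E3 = 3 := by simp
  rw [Measure.addHaar_ball _ _ hr, this, ENNReal.ofReal_mul (by positivity), ofReal_vv]

lemma vol_cball (x : E3) (r : ℝ) (hr : 0 ≤ r) :
    volume (Metric.closedBall x r) = ENNReal.ofReal (r ^ 3 * vv) := by
  have : Module.finrank ℝ E3 = 3 := by simp
  rw [Measure.addHaar_closedBall _ _ hr, this, ENNReal.ofReal_mul (by positivity), ofReal_vv]

lemma ann_int (a b c : ℝ) (ha : 0 ≤ a) (hab : a ≤ b) (hc : 0 ≤ c) :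
    ∫⁻ y : E3, ENNReal.ofReal (if a ≤ ‖y‖ ∧ ‖y‖ ≤ b then c else 0)
      = ENNReal.ofReal (c * ((b ^ 3 - a ^ 3) * vv)) := by
  have hset : ∀ y : E3, ENNReal.ofReal (if a ≤ ‖y‖ ∧ ‖y‖ ≤ b then c else 0)
      = (Metric.closedBall (0 : E3) b \ Metric.ball 0 a).indicator (fun _ => ENNReal.ofReal c) y := by
    intro y
    by_cases h : a ≤ ‖y‖ ∧ ‖y‖ ≤ b
    · rw [if_pos h, Set.indicator_of_mem]
      simpa [and_comm] using h
    · rw [if_neg h, Set.indicator_of_notMem]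
      · simp
      · simpa [and_comm] using h
  simp_rw [hset]
  rw [lintegral_indicator_const (measurableSet_closedBall.diff measurableSet_ball),
    measure_sdiff _ measurableSet_ball.nullMeasurableSet measure_ball_lt_top.ne,
    vol_ball _ _ ha, vol_cball _ _ (ha.trans hab), ← ENNReal.ofReal_sub, ← ENNReal.ofReal_mul hc]
  · congr 1; ring
  · have := vv_pos; positivity
  · intro y hy
    simp at hy ⊢
    linarith

lemma symb_upper (ξ : E3) :
    ∫⁻ z : E3, ENNReal.ofReal (ss (inner ℝ z ξ) / ‖z‖ ^ 4) ≤ ENNReal.ofReal (4 * KK * π * ‖ξ‖) := by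
  have h := kk_scale (π * ‖ξ‖) (by positivity)
  calc _ ≤ ∫⁻ z : E3, ENNReal.ofReal 4 * ENNReal.ofReal (min 1 ((π * ‖ξ‖) ^ 2 * ‖z‖ ^ 2) / ‖z‖ ^ 4) := by
        apply lintegral_mono
        intro z
        dsimp only
        rw [← ENNReal.ofReal_mul (by norm_num), ← mul_div_assoc]
        apply ENNReal.ofReal_le_ofReal
        apply div_le_div_of_nonneg_right _ (by positivity)
        refine (ss_le _).trans ?_
        have h1 : (inner ℝ z ξ) ^ 2 ≤ ‖ξ‖ ^ 2 * ‖z‖ ^ 2 := by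
          have := abs_real_inner_le_norm z ξ
          rw [← sq_abs]
          nlinarith [abs_nonneg (inner ℝ z ξ), norm_nonneg z, norm_nonneg ξ]
        have h2 : π ^ 2 * (inner ℝ z ξ) ^ 2 ≤ (π * ‖ξ‖) ^ 2 * ‖z‖ ^ 2 := by
          rw [mul_pow, mul_assoc]; gcongr
        gcongr
    _ = _ := by
        rw [lintegral_const_mul _ (by fun_prop), h, ← ENNReal.ofReal_mul (by norm_num)]
        congr 1; ring

lemma ss_meas : Measurable ss := by
  have : ss = fun t => 2 - 2 * Real.cos (2 * π * t) := funext ss_eq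
  rw [this]; fun_prop

lemma symb_lower (ξ : E3) :
    ENNReal.ofReal (vv / 512 * ‖ξ‖) ≤ ∫⁻ z : E3, ENNReal.ofReal (ss (inner ℝ z ξ) / ‖z‖ ^ 4) := by
  rcases eq_or_ne ξ 0 with rfl | hξ
  · simp
  have hn : 0 < ‖ξ‖ := norm_pos_iff.2 hξ
  set z0 : E3 := (1 / (2 * ‖ξ‖ ^ 2)) • ξ with hz0
  set B := Metric.ball z0 (1 / (8 * ‖ξ‖)) with hB
  calc ENNReal.ofReal (vv / 512 * ‖ξ‖) = ENNReal.ofReal (‖ξ‖ ^ 4) * volume B := by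
        rw [vol_ball _ _ (by positivity), ← ENNReal.ofReal_mul (by positivity)]
        congr 1; field_simp; norm_num
    _ = ∫⁻ z in B, ENNReal.ofReal (‖ξ‖ ^ 4) := by simp
    _ ≤ ∫⁻ z in B, ENNReal.ofReal (ss (inner ℝ z ξ) / ‖z‖ ^ 4) := by
        apply setLIntegral_mono' measurableSet_ball
        intro z hz
        apply ENNReal.ofReal_le_ofReal
        rw [Metric.mem_ball, dist_eq_norm] at hz
        have hi0 : inner ℝ z0 ξ = 1 / 2 := by
          rw [hz0, inner_smul_left, real_inner_self_eq_norm_sq]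
          simp; field_simp
        have hi1 : inner ℝ z ξ = 1 / 2 + inner ℝ (z - z0) ξ := by
          rw [inner_sub_left, hi0]; ring
        have hi2 : |inner ℝ (z - z0) ξ| ≤ 1 / 8 := by
          refine (abs_real_inner_le_norm _ _).trans ?_
          calc ‖z - z0‖ * ‖ξ‖ ≤ 1 / (8 * ‖ξ‖) * ‖ξ‖ := by gcongr
            _ = 1 / 8 := by field_simp
        rw [abs_le] at hi2
        have hs := ss_ge (inner ℝ z ξ) (by linarith) (by linarith)
        have hzn : z ≠ 0 := by
          rintro rfl
          simp only [inner_zero_left] at hi1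
          linarith
        have hzp : 0 < ‖z‖ := norm_pos_iff.2 hzn
        have hz0n : ‖z0‖ = 1 / (2 * ‖ξ‖) := by
          rw [hz0, norm_smul, Real.norm_of_nonneg (by positivity)]; field_simp
        have hzle : ‖z‖ * ‖ξ‖ ≤ 1 := by
          have : ‖z‖ ≤ 1 / (2 * ‖ξ‖) + 1 / (8 * ‖ξ‖) := by
            have := norm_le_norm_add_norm_sub' z z0
            linarith
          calc ‖z‖ * ‖ξ‖ ≤ (1 / (2 * ‖ξ‖) + 1 / (8 * ‖ξ‖)) * ‖ξ‖ := by gcongr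
            _ = 5 / 8 := by field_simp; norm_num
            _ ≤ 1 := by norm_num
        rw [le_div_iff₀ (by positivity), ← mul_pow, mul_comm]
        exact (pow_le_one₀ (by positivity) hzle).trans hs
    _ ≤ _ := setLIntegral_le_lintegral _ _

lemma GG_eq (f : SchwartzMap E3 ℂ) :
    GG f = ∫⁻ ξ : E3, ENNReal.ofReal (‖𝓕 (f : E3 → ℂ) ξ‖ ^ 2) *
      ∫⁻ z : E3, ENNReal.ofReal (ss (inner ℝ z ξ) / ‖z‖ ^ 4) := by
  have hc : Continuous (𝓕 (f : E3 → ℂ)) := (𝓕 f).continuous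
  have hs := ss_meas
  have hfc := f.continuous
  calc GG f = ∫⁻ z : E3, ∫⁻ ξ : E3, ENNReal.ofReal (‖𝓕 (f : E3 → ℂ) ξ‖ ^ 2) *
          ENNReal.ofReal (ss (inner ℝ z ξ) / ‖z‖ ^ 4) := by
        unfold GG
        refine lintegral_congr fun z => ?_
        have e1 : ∀ x : E3, ENNReal.ofReal (‖f (x + z) - f x‖ ^ 2 / ‖z‖ ^ 4)
            = ENNReal.ofReal (‖f (x + z) - f x‖ ^ 2) * ENNReal.ofReal ((‖z‖ ^ 4)⁻¹) := by
          intro x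
          rw [← ENNReal.ofReal_mul (by positivity)]; rfl
        simp_rw [e1]
        rw [lintegral_mul_const _ (by fun_prop), diff_plancherel,
          ← lintegral_mul_const _ (by fun_prop)]
        refine lintegral_congr fun ξ => ?_
        have : 0 ≤ ss (inner ℝ z ξ) := by unfold ss; positivity
        rw [← ENNReal.ofReal_mul (by positivity), ← ENNReal.ofReal_mul (by positivity)]
        congr 1; ring
    _ = ∫⁻ ξ : E3, ∫⁻ z : E3, ENNReal.ofReal (‖𝓕 (f : E3 → ℂ) ξ‖ ^ 2) *
          ENNReal.ofReal (ss (inner ℝ z ξ) / ‖z‖ ^ 4) := by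
        apply lintegral_lintegral_swap
        apply Measurable.aemeasurable
        unfold Function.uncurry
        fun_prop
    _ = _ := by
        refine lintegral_congr fun ξ => ?_
        rw [lintegral_const_mul _ (by fun_prop)]

lemma GG_le (f : SchwartzMap E3 ℂ) : GG f ≤ ENNReal.ofReal (4 * KK * π) * AA f := by
  have hc : Continuous (𝓕 (f : E3 → ℂ)) := (𝓕 f).continuous
  have := KK_nonneg
  rw [GG_eq, AA, ← lintegral_const_mul _ (by fun_prop)]
  apply lintegral_mono
  intro ξ
  dsimp only
  refine (mul_le_mul_right (symb_upper ξ) _).trans (le_of_eq ?_)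
  rw [← ENNReal.ofReal_mul (by positivity), ← ENNReal.ofReal_mul (by positivity)]
  congr 1; ring

lemma AA_le (f : SchwartzMap E3 ℂ) : ENNReal.ofReal (vv / 512) * AA f ≤ GG f := by
  have hc : Continuous (𝓕 (f : E3 → ℂ)) := (𝓕 f).continuous
  have := vv_pos
  rw [GG_eq, AA, ← lintegral_const_mul _ (by fun_prop)]
  apply lintegral_mono
  intro ξ
  dsimp only
  refine (le_of_eq ?_).trans (mul_le_mul_right (symb_lower ξ) _)
  rw [← ENNReal.ofReal_mul (by positivity), ← ENNReal.ofReal_mul (by positivity)]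
  congr 1; ring

lemma dbl_mono (F G H : E3 → E3 → ℝ≥0∞) (c : ℝ≥0∞) (hc : c ≠ ⊤)
    (hH : Measurable (Function.uncurry H)) (h : ∀ x, ∀ᵐ y, F x y ≤ c * G x y + H x y) :
    ∫⁻ x, ∫⁻ y, F x y ≤ c * (∫⁻ x, ∫⁻ y, G x y) + ∫⁻ x, ∫⁻ y, H x y := by
  rw [← lintegral_const_mul' _ _ hc, ← lintegral_add_right _ hH.lintegral_prod_right]
  apply lintegral_mono
  intro x
  dsimp only
  rw [← lintegral_const_mul' _ _ hc, ← lintegral_add_right _ hH.of_uncurry_left]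
  exact lintegral_mono_ae (h x)

lemma GG_xy (f : SchwartzMap E3 ℂ) :
    GG f = ∫⁻ x : E3, ∫⁻ y : E3, ENNReal.ofReal (‖f y - f x‖ ^ 2 / ‖y - x‖ ^ 4) := by
  have hfc := f.continuous
  unfold GG
  rw [lintegral_lintegral_swap]
  · refine lintegral_congr fun x => ?_
    have := lintegral_add_left_eq_self (μ := (volume : Measure E3))
      (fun y => ENNReal.ofReal (‖f y - f x‖ ^ 2 / ‖y - x‖ ^ 4)) x
    rw [← this]
    simp
  · apply Measurable.aemeasurable
    unfold Function.uncurry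
    fun_prop

lemma NN_finite (f : SchwartzMap E3 ℂ) : NN f ≠ ⊤ := by
  obtain ⟨C0, hC0⟩ := f.decay 0 0
  obtain ⟨C2, hC2⟩ := f.decay 2 0
  simp only [norm_iteratedFDeriv_zero, pow_zero, one_mul] at hC0 hC2
  have hle : NN f ≤ ∫⁻ x : E3, ENNReal.ofReal ((C0 ^ 2 + C2 ^ 2) * kk x) := by
    unfold NN
    apply lintegral_mono
    intro x
    apply ENNReal.ofReal_le_ofReal
    have h0 := hC0.2 x
    have h2 := hC2.2 x
    unfold kk
    rcases eq_or_ne ‖x‖ 0 with h | h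
    · simp [h]
    have hx : 0 < ‖x‖ := lt_of_le_of_ne (norm_nonneg _) (Ne.symm h)
    rw [← mul_div_assoc, div_le_div_iff₀ hx (by positivity)]
    rcases le_total 1 ‖x‖ with h1 | h1
    · rw [min_eq_left (by nlinarith)]
      have h3 : (‖x‖ ^ 2 * ‖f x‖) ^ 2 ≤ C2 ^ 2 := by gcongr
      calc ‖f x‖ ^ 2 * ‖x‖ ^ 4 = (‖x‖ ^ 2 * ‖f x‖) ^ 2 := by ring
        _ ≤ C0 ^ 2 + C2 ^ 2 := by nlinarith
        _ ≤ (C0 ^ 2 + C2 ^ 2) * 1 * ‖x‖ := by nlinarith [sq_nonneg C0, sq_nonneg C2]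
    · rw [min_eq_right (by nlinarith)]
      have h3 : ‖f x‖ ^ 2 ≤ C0 ^ 2 := by gcongr
      calc ‖f x‖ ^ 2 * ‖x‖ ^ 4 = ‖f x‖ ^ 2 * ‖x‖ ^ 3 * ‖x‖ := by ring
        _ ≤ ‖f x‖ ^ 2 * ‖x‖ ^ 3 * 1 := by gcongr
        _ ≤ (C0 ^ 2 + C2 ^ 2) * ‖x‖ ^ 3 * 1 := by gcongr; nlinarith [sq_nonneg C2]
        _ = _ := by ring
  refine ne_top_of_le_ne_top ?_ hle
  exact (kk_integrable.const_mul _).lintegral_lt_top.ne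

lemma hardy_s4 (f : SchwartzMap E3 ℂ) :
    ENNReal.ofReal (14 * vv) * NN f ≤ ENNReal.ofReal 1875 * GG f := by
  have hfc := f.continuous
  have hv := vv_pos
  have hm : Measurable (fun p : E3 × E3 => (ENNReal.ofReal (if 2 * ‖p.1‖ ≤ ‖p.2‖ ∧ ‖p.2‖ ≤ 4 * ‖p.1‖
      then 384 * ‖f p.2‖ ^ 2 / ‖p.2‖ ^ 4 else 0))) := by
    apply Measurable.ennreal_ofReal
    apply Measurable.ite _ (by fun_prop) measurable_const
    have s1 : MeasurableSet {p : E3 × E3 | 2 * ‖p.1‖ ≤ ‖p.2‖} :=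
      measurableSet_le (by fun_prop) (by fun_prop)
    have s2 : MeasurableSet {p : E3 × E3 | ‖p.2‖ ≤ 4 * ‖p.1‖} :=
      measurableSet_le (by fun_prop) (by fun_prop)
    exact s1.inter s2
  have h1 : ∫⁻ x : E3, ∫⁻ y : E3, ENNReal.ofReal (if 2 * ‖x‖ ≤ ‖y‖ ∧ ‖y‖ ≤ 4 * ‖x‖
      then ‖f x‖ ^ 2 / ‖x‖ ^ 4 else 0) = ENNReal.ofReal (56 * vv) * NN f := by
    rw [NN, ← lintegral_const_mul _ (by fun_prop)]
    refine lintegral_congr fun x => ?_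
    rw [ann_int _ _ _ (by positivity) (by nlinarith [norm_nonneg x]) (by positivity),
      ← ENNReal.ofReal_mul (by positivity)]
    congr 1
    rcases eq_or_ne ‖x‖ 0 with h | h
    · simp [h]
    · field_simp; ring
  have h2 : ∫⁻ x : E3, ∫⁻ y : E3, ENNReal.ofReal (if 2 * ‖x‖ ≤ ‖y‖ ∧ ‖y‖ ≤ 4 * ‖x‖
      then 384 * ‖f y‖ ^ 2 / ‖y‖ ^ 4 else 0) = ENNReal.ofReal (42 * vv) * NN f := by
    rw [lintegral_lintegral_swap hm.aemeasurable]
    rw [NN, ← lintegral_const_mul _ (by fun_prop)]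
    refine lintegral_congr fun y => ?_
    have e : ∀ x : E3, (2 * ‖x‖ ≤ ‖y‖ ∧ ‖y‖ ≤ 4 * ‖x‖) ↔ (‖y‖ / 4 ≤ ‖x‖ ∧ ‖x‖ ≤ ‖y‖ / 2) := by
      intro x
      constructor <;> rintro ⟨a, b⟩ <;> constructor <;> linarith
    simp_rw [e]
    rw [ann_int _ _ _ (by positivity) (by nlinarith [norm_nonneg y]) (by positivity),
      ← ENNReal.ofReal_mul (by positivity)]
    congr 1
    rcases eq_or_ne ‖y‖ 0 with h | h
    · simp [h]
    · field_simp; ring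
  have h3 : ENNReal.ofReal (56 * vv) * NN f ≤
      ENNReal.ofReal 1875 * GG f + ENNReal.ofReal (42 * vv) * NN f := by
    rw [← h1, ← h2, GG_xy]
    refine dbl_mono _ _ _ _ ENNReal.ofReal_ne_top hm fun x => .of_forall fun y => ?_
    by_cases h : 2 * ‖x‖ ≤ ‖y‖ ∧ ‖y‖ ≤ 4 * ‖x‖
    swap
    · simp [if_neg h]
    rw [if_pos h, if_pos h, ← ENNReal.ofReal_mul (by norm_num), ← ENNReal.ofReal_add
      (by positivity) (by positivity)]
    apply ENNReal.ofReal_le_ofReal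
    rcases eq_or_ne x 0 with rfl | hx
    · simp; positivity
    have hx : 0 < ‖x‖ := norm_pos_iff.2 hx
    have hy : 0 < ‖y‖ := by linarith
    have hxy : 0 < ‖y - x‖ := by
      have := norm_sub_norm_le y x
      linarith
    have hxy' : ‖y - x‖ ≤ 5 * ‖x‖ := by
      have := norm_sub_le y x
      linarith
    have hb : ‖f x‖ ^ 2 ≤ 3 * ‖f y - f x‖ ^ 2 + 3 / 2 * ‖f y‖ ^ 2 := by
      have : ‖f x‖ ≤ ‖f y - f x‖ + ‖f y‖ := by
        have := norm_le_norm_add_norm_sub' (f x) (f y)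
        rw [norm_sub_rev] at this
        linarith
      calc ‖f x‖ ^ 2 ≤ (‖f y - f x‖ + ‖f y‖) ^ 2 := by gcongr
        _ ≤ _ := by nlinarith [sq_nonneg (2 * ‖f y - f x‖ - ‖f y‖)]
    calc ‖f x‖ ^ 2 / ‖x‖ ^ 4 ≤ (3 * ‖f y - f x‖ ^ 2 + 3 / 2 * ‖f y‖ ^ 2) / ‖x‖ ^ 4 := by gcongr
      _ = 3 * ‖f y - f x‖ ^ 2 / ‖x‖ ^ 4 + 3 / 2 * ‖f y‖ ^ 2 / ‖x‖ ^ 4 := by ring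
      _ ≤ 1875 * (‖f y - f x‖ ^ 2 / ‖y - x‖ ^ 4) + 384 * ‖f y‖ ^ 2 / ‖y‖ ^ 4 := by
        apply add_le_add
        · rw [← mul_div_assoc, div_le_div_iff₀ (by positivity) (by positivity)]
          have : ‖y - x‖ ^ 4 ≤ (5 * ‖x‖) ^ 4 := by gcongr
          calc 3 * ‖f y - f x‖ ^ 2 * ‖y - x‖ ^ 4 ≤ 3 * ‖f y - f x‖ ^ 2 * (5 * ‖x‖) ^ 4 := by gcongr
            _ = _ := by ring
        · rw [div_le_div_iff₀ (by positivity) (by positivity)]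
          have : ‖y‖ ^ 4 ≤ (4 * ‖x‖) ^ 4 := by gcongr; exact h.2
          calc 3 / 2 * ‖f y‖ ^ 2 * ‖y‖ ^ 4 ≤ 3 / 2 * ‖f y‖ ^ 2 * (4 * ‖x‖) ^ 4 := by gcongr
            _ = _ := by ring
  have e : ENNReal.ofReal (56 * vv) = ENNReal.ofReal (14 * vv) + ENNReal.ofReal (42 * vv) := by
    rw [← ENNReal.ofReal_add (by positivity) (by positivity)]; congr 1; ring
  rw [e, add_mul] at h3
  exact (ENNReal.add_le_add_iff_right (ENNReal.mul_ne_top ENNReal.ofReal_ne_top (NN_finite f))).1 h3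

lemma GG_mul (g f : SchwartzMap E3 ℂ) (m : E3 → ℝ) (hf : ∀ x, f x = (m x : ℂ) * g x)
    (hm1 : ∀ x, |m x| ≤ 1) (hm2 : ∀ x y, y ≠ 0 → |m x - m y| ≤ 2 * ‖x - y‖ / ‖y‖) :
    GG f ≤ ENNReal.ofReal 2 * GG g + ENNReal.ofReal (8 * KK) * NN g := by
  have hgc := g.continuous
  have hK := KK_nonneg
  have e2 : ENNReal.ofReal (8 * KK) * NN g = ∫⁻ z : E3, ∫⁻ x : E3, ENNReal.ofReal
      (8 * ‖g x‖ ^ 2 * (min 1 ((‖x‖⁻¹) ^ 2 * ‖z‖ ^ 2) / ‖z‖ ^ 4)) := by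
    rw [lintegral_lintegral_swap]
    · rw [NN, ← lintegral_const_mul _ (by fun_prop)]
      refine lintegral_congr fun x => ?_
      have : ∀ z : E3, ENNReal.ofReal (8 * ‖g x‖ ^ 2 * (min 1 ((‖x‖⁻¹) ^ 2 * ‖z‖ ^ 2) / ‖z‖ ^ 4))
          = ENNReal.ofReal (8 * ‖g x‖ ^ 2) *
            ENNReal.ofReal (min 1 ((‖x‖⁻¹) ^ 2 * ‖z‖ ^ 2) / ‖z‖ ^ 4) := by
        intro z; rw [ENNReal.ofReal_mul (by positivity)]
      simp_rw [this]
      rw [lintegral_const_mul _ (by fun_prop), kk_scale _ (by positivity),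
        ← ENNReal.ofReal_mul (by positivity), ← ENNReal.ofReal_mul (by positivity)]
      congr 1; ring
    · apply Measurable.aemeasurable
      unfold Function.uncurry
      fun_prop
  have hm : Measurable (fun p : E3 × E3 => ENNReal.ofReal
      (8 * ‖g p.2‖ ^ 2 * (min 1 ((‖p.2‖⁻¹) ^ 2 * ‖p.1‖ ^ 2) / ‖p.1‖ ^ 4))) := by fun_prop
  rw [e2]
  unfold GG
  refine dbl_mono _ _ _ _ ENNReal.ofReal_ne_top hm fun z => ?_
  have h0 : ∀ᵐ x : E3, x ≠ 0 := by
    simp [ae_iff]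
  filter_upwards [h0] with x hx
  rw [← ENNReal.ofReal_mul (by norm_num), ← ENNReal.ofReal_add (by positivity) (by positivity)]
  apply ENNReal.ofReal_le_ofReal
  have hxp : 0 < ‖x‖ := norm_pos_iff.2 hx
  have hd : (m (x + z) - m x) ^ 2 ≤ 4 * min 1 ((‖x‖⁻¹) ^ 2 * ‖z‖ ^ 2) := by
    have a1 := hm2 (x + z) x hx
    rw [add_sub_cancel_left] at a1
    have a2 := abs_le.1 (hm1 (x + z))
    have a3 := abs_le.1 (hm1 x)
    rcases le_total 1 ((‖x‖⁻¹) ^ 2 * ‖z‖ ^ 2) with h | h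
    · rw [min_eq_left h]; nlinarith
    · rw [min_eq_right h, ← sq_abs]
      calc |m (x + z) - m x| ^ 2 ≤ (2 * ‖z‖ / ‖x‖) ^ 2 := by gcongr
        _ = _ := by field_simp; ring
  have hb : ‖f (x + z) - f x‖ ^ 2 ≤ 2 * ‖g (x + z) - g x‖ ^ 2
      + 2 * ((m (x + z) - m x) ^ 2 * ‖g x‖ ^ 2) := by
    have e : f (x + z) - f x = (m (x + z) : ℂ) * (g (x + z) - g x)
        + ((m (x + z) - m x : ℝ) : ℂ) * g x := by
      rw [hf, hf]; push_cast; ring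
    have h1 : ‖f (x + z) - f x‖ ≤ ‖g (x + z) - g x‖ + |m (x + z) - m x| * ‖g x‖ := by
      rw [e]
      refine (norm_add_le _ _).trans ?_
      rw [norm_mul, norm_mul, Complex.norm_real, Complex.norm_real, Real.norm_eq_abs, Real.norm_eq_abs]
      have := mul_le_mul_of_nonneg_right (hm1 (x + z)) (norm_nonneg (g (x + z) - g x))
      linarith
    calc ‖f (x + z) - f x‖ ^ 2 ≤ (‖g (x + z) - g x‖ + |m (x + z) - m x| * ‖g x‖) ^ 2 := by gcongr
      _ ≤ 2 * ‖g (x + z) - g x‖ ^ 2 + 2 * (|m (x + z) - m x| * ‖g x‖) ^ 2 := by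
        nlinarith [sq_nonneg (‖g (x + z) - g x‖ - |m (x + z) - m x| * ‖g x‖)]
      _ = _ := by rw [mul_pow, sq_abs]
  calc ‖f (x + z) - f x‖ ^ 2 / ‖z‖ ^ 4 ≤ (2 * ‖g (x + z) - g x‖ ^ 2
      + 2 * (4 * min 1 ((‖x‖⁻¹) ^ 2 * ‖z‖ ^ 2) * ‖g x‖ ^ 2)) / ‖z‖ ^ 4 := by
        gcongr
        refine hb.trans ?_
        gcongr
    _ = _ := by ring

/-- regularised unit vector components. -/
def mm (δ : ℝ) (i : Fin 3) (x : E3) : ℝ := x i / √(δ ^ 2 + ‖x‖ ^ 2)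

lemma coord_le (x : E3) (i : Fin 3) : |x i| ≤ ‖x‖ := by
  simpa using PiLp.norm_apply_le x i

lemma mm_abs_le (δ : ℝ) (i : Fin 3) (x : E3) : |mm δ i x| ≤ 1 := by
  unfold mm
  rw [abs_div, abs_of_nonneg (Real.sqrt_nonneg _)]
  apply div_le_one_of_le₀ _ (Real.sqrt_nonneg _)
  refine (coord_le x i).trans (Real.le_sqrt_of_sq_le ?_)
  nlinarith [sq_nonneg δ]

lemma mm_lip (δ : ℝ) (hδ : 0 < δ) (i : Fin 3) (x y : E3) (hy : y ≠ 0) :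
    |mm δ i x - mm δ i y| ≤ 2 * ‖x - y‖ / ‖y‖ := by
  have hyp : 0 < ‖y‖ := norm_pos_iff.2 hy
  unfold mm
  set a := √(δ ^ 2 + ‖x‖ ^ 2) with ha
  set b := √(δ ^ 2 + ‖y‖ ^ 2) with hb
  have ha2 : a ^ 2 = δ ^ 2 + ‖x‖ ^ 2 := Real.sq_sqrt (by positivity)
  have hb2 : b ^ 2 = δ ^ 2 + ‖y‖ ^ 2 := Real.sq_sqrt (by positivity)
  have hap : 0 < a := Real.sqrt_pos.2 (by positivity)
  have hbp : 0 < b := Real.sqrt_pos.2 (by positivity)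
  have hxa : ‖x‖ ≤ a := Real.le_sqrt_of_sq_le (by nlinarith [sq_nonneg δ])
  have hyb : ‖y‖ ≤ b := Real.le_sqrt_of_sq_le (by nlinarith [sq_nonneg δ])
  have hab : |a - b| ≤ ‖x - y‖ := by
    refine le_trans ?_ (abs_norm_sub_norm_le x y)
    have h1 : |a - b| * (a + b) = |‖x‖ - ‖y‖| * (‖x‖ + ‖y‖) := by
      have e : (a - b) * (a + b) = (‖x‖ - ‖y‖) * (‖x‖ + ‖y‖) := by nlinarith
      have e' := congrArg abs e
      rwa [abs_mul, abs_mul, abs_of_pos (show 0 < a + b by positivity),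
        abs_of_pos (show 0 < ‖x‖ + ‖y‖ by positivity)] at e'
    have h2 : |‖x‖ - ‖y‖| * (‖x‖ + ‖y‖) ≤ |‖x‖ - ‖y‖| * (a + b) := by gcongr
    rw [← h1] at h2
    exact le_of_mul_le_mul_right h2 (by positivity)
  have hxi : |x i - y i| ≤ ‖x - y‖ := by simpa using coord_le (x - y) i
  have e : x i / a - y i / b = (x i - y i) / b + (x i / a) * ((b - a) / b) := by
    field_simp; ring
  have h1 : |x i / a| ≤ 1 := mm_abs_le δ i x
  have h2 : |(b - a) / b| ≤ ‖x - y‖ / b := by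
    rw [abs_div, abs_of_pos hbp, abs_sub_comm]; gcongr
  have h3 : |(x i - y i) / b| ≤ ‖x - y‖ / b := by
    rw [abs_div, abs_of_pos hbp]; gcongr
  rw [e]
  calc _ ≤ |(x i - y i) / b| + |x i / a| * |(b - a) / b| := by
        rw [← abs_mul]; exact abs_add_le _ _
    _ ≤ ‖x - y‖ / b + 1 * (‖x - y‖ / b) := by gcongr
    _ = 2 * ‖x - y‖ / b := by ring
    _ ≤ 2 * ‖x - y‖ / ‖y‖ := by gcongr

lemma mm_schwartz (δ : ℝ) (hδ : 0 < δ) (i : Fin 3) (g : SchwartzMap E3 ℂ) :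
    ∃ f : SchwartzMap E3 ℂ, ∀ x, f x = (mm δ i x : ℂ) * g x := by
  have e : ∀ x : E3, mm δ i x = (EuclideanSpace.proj i : E3 →L[ℝ] ℝ) (δ⁻¹ • x) *
      (1 + ‖δ⁻¹ • x‖ ^ 2) ^ (-(1/2) : ℝ) := by
    intro x
    unfold mm
    rw [Real.rpow_neg (by positivity), ← Real.sqrt_eq_rpow, norm_smul,
      Real.norm_of_nonneg (by positivity)]
    have : δ ^ 2 + ‖x‖ ^ 2 = δ ^ 2 * (1 + (δ⁻¹ * ‖x‖) ^ 2) := by field_simp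
    rw [this, Real.sqrt_mul (by positivity), Real.sqrt_sq hδ.le]
    simp
    field_simp
  have t0 : Function.HasTemperateGrowth (fun x : E3 => δ⁻¹ • x) :=
    (δ⁻¹ • ContinuousLinearMap.id ℝ E3).hasTemperateGrowth
  have t1 : Function.HasTemperateGrowth (fun x : E3 => (EuclideanSpace.proj i : E3 →L[ℝ] ℝ) x *
      (1 + ‖x‖ ^ 2) ^ (-(1/2) : ℝ)) :=
    (ContinuousLinearMap.hasTemperateGrowth _).mul
      (Function.hasTemperateGrowth_one_add_norm_sq_rpow E3 _)
  have t2 : Function.HasTemperateGrowth (fun x : E3 => ((mm δ i x : ℝ) : ℂ)) := by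
    have : mm δ i = (fun x : E3 => (EuclideanSpace.proj i : E3 →L[ℝ] ℝ) x *
      (1 + ‖x‖ ^ 2) ^ (-(1/2) : ℝ)) ∘ (fun x : E3 => δ⁻¹ • x) := funext e
    have t3 : (mm δ i).HasTemperateGrowth := by rw [this]; exact t1.comp t0
    exact Function.Complex.hasTemperateGrowth_ofReal.comp t3
  refine ⟨SchwartzMap.smulLeftCLM ℂ (fun x : E3 => ((mm δ i x : ℝ) : ℂ)) g, fun x => ?_⟩
  rw [SchwartzMap.smulLeftCLM_apply_apply t2, smul_eq_mul]

lemma inv_move {a : ℝ} (ha : 0 < a) {X Y : ℝ≥0∞} (h : ENNReal.ofReal a * X ≤ Y) :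
    X ≤ ENNReal.ofReal a⁻¹ * Y := by
  calc X = ENNReal.ofReal a⁻¹ * (ENNReal.ofReal a * X) := by
        rw [← mul_assoc, ← ENNReal.ofReal_mul (by positivity), inv_mul_cancel₀ ha.ne']; simp
    _ ≤ _ := by gcongr

/-- the final constant -/
def CC : ℝ := (vv / 512)⁻¹ * (2 + 8 * KK * ((14 * vv)⁻¹ * 1875)) * (4 * KK * π)

lemma CC_nonneg : 0 ≤ CC := by
  have := KK_nonneg
  have := vv_pos
  unfold CC
  positivity

lemma AA_reg (g f : SchwartzMap E3 ℂ) (δ : ℝ) (hδ : 0 < δ) (i : Fin 3)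
    (hf : ∀ x, f x = (mm δ i x : ℂ) * g x) : AA f ≤ ENNReal.ofReal CC * AA g := by
  have hK := KK_nonneg
  have hv := vv_pos
  have h1 := inv_move (by positivity) (AA_le f)
  have h2 := GG_mul g f (mm δ i) hf (mm_abs_le δ i) (fun x y hy => mm_lip δ hδ i x y hy)
  have h3 := inv_move (by positivity) (hardy_s4 g)
  have h4 := GG_le g
  calc AA f ≤ ENNReal.ofReal (vv / 512)⁻¹ * GG f := h1
    _ ≤ ENNReal.ofReal (vv / 512)⁻¹ * (ENNReal.ofReal 2 * GG g + ENNReal.ofReal (8 * KK) *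
        (ENNReal.ofReal (14 * vv)⁻¹ * (ENNReal.ofReal 1875 * GG g))) := by
        gcongr
        refine h2.trans ?_
        gcongr
    _ = ENNReal.ofReal ((vv / 512)⁻¹ * (2 + 8 * KK * ((14 * vv)⁻¹ * 1875))) * GG g := by
        rw [ENNReal.ofReal_mul (p := (vv / 512)⁻¹) (by positivity),
          ENNReal.ofReal_add (p := 2) (by positivity) (by positivity),
          ENNReal.ofReal_mul (p := 8 * KK) (q := (14 * vv)⁻¹ * 1875) (by positivity),
          ENNReal.ofReal_mul (p := (14 * vv)⁻¹) (by positivity)]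
        simp only [ENNReal.ofReal_ofNat]
        ring
    _ ≤ ENNReal.ofReal ((vv / 512)⁻¹ * (2 + 8 * KK * ((14 * vv)⁻¹ * 1875))) *
        (ENNReal.ofReal (4 * KK * π) * AA g) := by gcongr
    _ = _ := by
        rw [← mul_assoc, ← ENNReal.ofReal_mul (by positivity)]; rfl

lemma main_bound (g : SchwartzMap E3 ℂ) (i : Fin 3) :
    Measurable (𝓕 (fun x : E3 => ((x i / ‖x‖ : ℝ) : ℂ) * g x)) ∧
    AA (fun x : E3 => ((x i / ‖x‖ : ℝ) : ℂ) * g x) ≤ ENNReal.ofReal CC * AA g := by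
  set δ : ℕ → ℝ := fun n => 1 / ((n : ℝ) + 1) with hδ
  have hδp : ∀ n, 0 < δ n := fun n => by simp only [hδ]; positivity
  have hδ0 : Tendsto δ atTop (nhds 0) := tendsto_one_div_add_atTop_nhds_zero_nat
  choose f hf using fun n => mm_schwartz (δ n) (hδp n) i g
  set h : E3 → ℂ := fun x : E3 => ((x i / ‖x‖ : ℝ) : ℂ) * g x with hh
  have hlim : ∀ ξ, Tendsto (fun n => 𝓕 (f n : E3 → ℂ) ξ) atTop (nhds (𝓕 h ξ)) := by
    intro ξ
    simp only [Real.fourier_eq]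
    apply tendsto_integral_of_dominated_convergence (fun x => ‖g x‖)
    · intro n
      have := (f n).continuous
      apply Continuous.aestronglyMeasurable
      fun_prop
    · exact g.integrable.norm
    · intro n
      refine .of_forall fun x => ?_
      rw [Circle.norm_smul, hf, norm_mul, Complex.norm_real, Real.norm_eq_abs]
      exact mul_le_of_le_one_left (norm_nonneg _) (mm_abs_le _ _ _)
    · have h0 : ∀ᵐ x : E3, x ≠ 0 := by
        simp [ae_iff]
      filter_upwards [h0] with x hx
      have hxp : 0 < ‖x‖ := norm_pos_iff.2 hx
      apply Tendsto.const_smul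
      simp only [hf, hh]
      apply Tendsto.mul_const
      apply (Complex.continuous_ofReal.tendsto _).comp
      unfold mm
      apply Tendsto.div tendsto_const_nhds _ hxp.ne'
      have : ‖x‖ = √((0:ℝ) ^ 2 + ‖x‖ ^ 2) := by
        rw [zero_pow two_ne_zero, zero_add, Real.sqrt_sq hxp.le]
      conv => rhs; rw [this]
      exact (Real.continuous_sqrt.tendsto _).comp ((hδ0.pow 2).add_const _)
  have hc : ∀ n, Continuous (𝓕 (f n : E3 → ℂ)) := fun n => (𝓕 (f n)).continuous
  constructor
  · exact measurable_of_tendsto_metrizable (f := fun n => 𝓕 (f n : E3 → ℂ)) (fun n => (hc n).measurable) (tendsto_pi_nhds.2 hlim)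
  · have hF : AA h ≤ liminf (fun n => AA (f n)) atTop := by
      have := lintegral_liminf_le (u := atTop) (μ := (volume : Measure E3))
        (f := fun n ξ => ENNReal.ofReal (‖ξ‖ * ‖𝓕 (f n : E3 → ℂ) ξ‖ ^ 2))
        (fun n => by have := hc n; fun_prop)
      refine le_trans (le_of_eq ?_) this
      unfold AA
      refine lintegral_congr fun ξ => ?_
      refine (Tendsto.liminf_eq ?_).symm
      exact ENNReal.tendsto_ofReal ((((hlim ξ).norm).pow 2).const_mul _)
    refine hF.trans ?_
    refine liminf_le_of_le (by isBoundedDefault) ?_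
    intro b hb
    obtain ⟨n, hn⟩ := hb.exists
    exact hn.trans (AA_reg g (f n) (δ n) (hδp n) i (hf n))

lemma sobSq_eq (f : E3 → ℂ) (hf : Measurable (𝓕 f)) : sobSq (1/2) f = (AA f).toReal := by
  unfold sobSq AA
  have e : ∀ ξ : E3, ‖ξ‖ ^ (2 * (1/2) : ℝ) * ‖𝓕 f ξ‖ ^ 2 = ‖ξ‖ * ‖𝓕 f ξ‖ ^ 2 := by
    intro ξ; norm_num
  simp_rw [e]
  rw [integral_eq_lintegral_of_nonneg_ae (.of_forall fun _ => by positivity)]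
  apply Measurable.aestronglyMeasurable
  fun_prop

lemma AA_finite (g : SchwartzMap E3 ℂ) : AA g ≠ ⊤ := by
  obtain ⟨C, hC⟩ := (𝓕 g).decay 0 0
  simp only [norm_iteratedFDeriv_zero, pow_zero, one_mul] at hC
  have hI := ((𝓕 g).integrable_pow_mul volume 1).const_mul C
  refine ne_top_of_le_ne_top hI.lintegral_lt_top.ne ?_
  unfold AA
  apply lintegral_mono
  intro ξ
  apply ENNReal.ofReal_le_ofReal
  have h1 : ‖𝓕 (g : E3 → ℂ) ξ‖ ≤ C := hC.2 ξ
  show ‖ξ‖ * ‖𝓕 (g : E3 → ℂ) ξ‖ ^ 2 ≤ C * (‖ξ‖ ^ 1 * ‖𝓕 (g : E3 → ℂ) ξ‖)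
  calc ‖ξ‖ * ‖𝓕 (g : E3 → ℂ) ξ‖ ^ 2 = ‖𝓕 (g : E3 → ℂ) ξ‖ * (‖ξ‖ ^ 1 * ‖𝓕 (g : E3 → ℂ) ξ‖) := by ring
    _ ≤ _ := by gcongr

/-- There is `C > 0` so that for every Schwartz `g : ℝ³ → ℂ`, the
vector-valued function `h(x) = (x/|x|) g(x)` satisfies `‖h‖_{Ḣ^{1/2}} ≤ C ‖g‖_{Ḣ^{1/2}}`,
where the `Ḣ^{1/2}` norm of `h` is summed over its three components. -/
theorem unit_vector_multiplier_Hhalf :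
    ∃ C > (0:ℝ), ∀ g : SchwartzMap E3 ℂ,
      Real.sqrt (∑ i : Fin 3, sobSq (1/2) (fun x : E3 => ((x i / ‖x‖ : ℝ) : ℂ) * g x))
        ≤ C * Real.sqrt (sobSq (1/2) (fun x => g x)) := by
  have hC := CC_nonneg
  refine ⟨√(3 * CC) + 1, by positivity, fun g => ?_⟩
  have hg : sobSq (1/2) (fun x => g x) = (AA g).toReal :=
    sobSq_eq _ (𝓕 g).continuous.measurable
  have hi : ∀ i : Fin 3, sobSq (1/2) (fun x : E3 => ((x i / ‖x‖ : ℝ) : ℂ) * g x)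
      ≤ CC * (AA g).toReal := by
    intro i
    obtain ⟨h1, h2⟩ := main_bound g i
    rw [sobSq_eq _ h1]
    have := ENNReal.toReal_mono (ENNReal.mul_ne_top ENNReal.ofReal_ne_top (AA_finite g)) h2
    rwa [ENNReal.toReal_mul, ENNReal.toReal_ofReal hC] at this
  rw [hg]
  calc _ ≤ √(3 * CC * (AA g).toReal) := by
        apply Real.sqrt_le_sqrt
        refine (Finset.sum_le_sum fun i _ => hi i).trans (le_of_eq ?_)
        simp; ring
    _ = √(3 * CC) * √((AA g).toReal) := Real.sqrt_mul (by positivity) _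
    _ ≤ _ := by
        gcongr
        linarith
end
end

section
/- There is a constant C > 0 such that for every smooth compactly supported function g : ℝ³ → ℂ whose support does not contain the origin, the ℝ³-vector-valued function h(x) = (x/|x|) g(x) satisfies ‖∇h‖_{L²(ℝ³)} ≤ C ‖∇g‖_{L²(ℝ³)}, where ∇h denotes the full matrix of first partial derivatives (with the Euclidean/Frobenius norm) and ∇g the gradient of g. -/
open MeasureTheory Real Complex Filter
open scoped FourierTransform ContDiff ENNReal

noncomputable section

/-- the `j`-th component of the Hardy vector field `x |g|² / |x|²`. -/
def hardyField (g : E3 → ℂ) (j : Fin 3) (z : E3) : ℝ := (z j / ‖z‖ ^ 2) * Complex.normSq (g z)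

lemma aux_coord (x : E3) (j : Fin 3) : HasFDerivAt (fun z : E3 => z j)
    (EuclideanSpace.proj j : E3 →L[ℝ] ℝ) x :=
  (EuclideanSpace.proj j : E3 →L[ℝ] ℝ).hasFDerivAt

lemma aux_proj_e3 (i j : Fin 3) : (EuclideanSpace.proj i : E3 →L[ℝ] ℝ) (e3 j)
    = if i = j then 1 else 0 := by
  simp [e3, Pi.single_apply]

lemma aux_normsq (x : E3) : ∃ L : E3 →L[ℝ] ℝ, HasFDerivAt (fun z : E3 => ‖z‖ ^ 2) L x ∧
    ∀ j, L (e3 j) = 2 * x j := by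
  refine ⟨_, (hasStrictFDerivAt_norm_sq x).hasFDerivAt, fun j => ?_⟩
  simp [e3, EuclideanSpace.inner_single_right]

lemma aux_norm (x : E3) (hx : x ≠ 0) : ∃ L : E3 →L[ℝ] ℝ, HasFDerivAt (fun z : E3 => ‖z‖) L x ∧
    ∀ j, L (e3 j) = x j / ‖x‖ := by
  obtain ⟨L, hL, hLe⟩ := aux_normsq x
  have hn : ‖x‖ ≠ 0 := norm_ne_zero_iff.mpr hx
  have h := hL.sqrt (by positivity)
  simp only [Real.sqrt_sq (norm_nonneg _)] at h
  refine ⟨_, h, fun j => ?_⟩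
  simp [hLe]
  field_simp

lemma aux_div (f k : E3 → ℝ) (Lf Lk : E3 →L[ℝ] ℝ) (x : E3) (hf : HasFDerivAt f Lf x)
    (hk : HasFDerivAt k Lk x) (h0 : k x ≠ 0) : ∃ L : E3 →L[ℝ] ℝ,
    HasFDerivAt (fun z => f z / k z) L x ∧ ∀ v, L v = (Lf v * k x - f x * Lk v) / (k x) ^ 2 := by
  have h := hf.fun_mul ((hasDerivAt_inv h0).comp_hasFDerivAt x hk)
  simp only [Function.comp_apply, ← div_eq_mul_inv] at h
  refine ⟨_, h, fun v => ?_⟩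
  simp
  field_simp
  ring

lemma aux_unit (x : E3) (hx : x ≠ 0) (i : Fin 3) : ∃ L : E3 →L[ℝ] ℝ,
    HasFDerivAt (fun z : E3 => z i / ‖z‖) L x ∧
    ∀ j, L (e3 j) = ((if i = j then 1 else 0) - x i / ‖x‖ * (x j / ‖x‖)) * ‖x‖⁻¹ := by
  obtain ⟨L, hL, hLe⟩ := aux_norm x hx
  have hn : ‖x‖ ≠ 0 := norm_ne_zero_iff.mpr hx
  obtain ⟨M, hM, hMe⟩ := aux_div _ _ _ _ x (aux_coord x i) hL hn
  refine ⟨M, hM, fun j => ?_⟩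
  rw [hMe, aux_proj_e3, hLe]
  field_simp

lemma aux_field (x : E3) (hx : x ≠ 0) (j : Fin 3) : ∃ L : E3 →L[ℝ] ℝ,
    HasFDerivAt (fun z : E3 => z j / ‖z‖ ^ 2) L x ∧
    L (e3 j) = (1 - 2 * (x j / ‖x‖) ^ 2) * ‖x‖⁻¹ ^ 2 := by
  obtain ⟨L, hL, hLe⟩ := aux_normsq x
  have hn : ‖x‖ ≠ 0 := norm_ne_zero_iff.mpr hx
  obtain ⟨M, hM, hMe⟩ := aux_div _ _ _ _ x (aux_coord x j) hL (by positivity)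
  refine ⟨M, hM, ?_⟩
  rw [hMe, aux_proj_e3, hLe, if_pos rfl]
  field_simp

lemma aux_pd_h (g : E3 → ℂ) (x : E3) (hx : x ≠ 0) (hg : DifferentiableAt ℝ g x) (i j : Fin 3) :
    pd (fun z : E3 => ((z i / ‖z‖ : ℝ) : ℂ) * g z) j x =
      (((if i = j then 1 else 0) - x i / ‖x‖ * (x j / ‖x‖) : ℝ) : ℂ) * ((‖x‖⁻¹ : ℝ) * g x)
        + ((x i / ‖x‖ : ℝ) : ℂ) * pd g j x := by
  obtain ⟨L, hL, hLe⟩ := aux_unit x hx i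
  have h := (hL.fun_smul hg.hasFDerivAt).fderiv
  have e : (fun z : E3 => ((z i / ‖z‖ : ℝ) : ℂ) * g z) = fun z => (z i / ‖z‖ : ℝ) • g z := by
    ext z
    simp
  unfold pd
  rw [e, h]
  simp only [_root_.add_apply, _root_.smul_apply,
    ContinuousLinearMap.smulRight_apply, hLe, Complex.real_smul]
  push_cast
  ring

lemma aux_fd_field (g : E3 → ℂ) (x : E3) (hx : x ≠ 0) (hg : DifferentiableAt ℝ g x) (j : Fin 3) :
    fderiv ℝ (hardyField g j) x (e3 j) =
      (1 - 2 * (x j / ‖x‖) ^ 2) * Complex.normSq ((‖x‖⁻¹ : ℝ) * g x)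
        + 2 * (x j / ‖x‖) * ((((‖x‖⁻¹ : ℝ) * g x).re * (pd g j x).re) +
          (((‖x‖⁻¹ : ℝ) * g x).im * (pd g j x).im)) := by
  obtain ⟨L, hL, hLe⟩ := aux_field x hx j
  have hn : ‖x‖ ≠ 0 := norm_ne_zero_iff.mpr hx
  have h2 := hg.hasFDerivAt.norm_sq
  have h := (hL.fun_mul h2).fderiv
  have e : hardyField g j = fun z => (z j / ‖z‖ ^ 2) * ‖g z‖ ^ 2 := by
    ext z
    simp [hardyField, Complex.normSq_eq_norm_sq]
  rw [e]
  simp only [Pi.pow_apply] at h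
  rw [h]
  simp only [_root_.add_apply, _root_.smul_apply, hLe, smul_eq_mul,
    ContinuousLinearMap.comp_apply, innerSL_apply_apply, Complex.inner, pd]
  simp [← Complex.normSq_eq_norm_sq, Complex.normSq_apply]
  field_simp
  ring

lemma aux_alg (n a b : Fin 3 → ℝ) (u v : ℝ) (hn : n 0 ^ 2 + n 1 ^ 2 + n 2 ^ 2 = 1) :
    ∑ i : Fin 3, ∑ j : Fin 3, ((((if i = j then 1 else 0) - n i * n j) * u + n i * a j) ^ 2 +
      (((if i = j then 1 else 0) - n i * n j) * v + n i * b j) ^ 2) ≤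
    9 * ∑ i : Fin 3, (a i ^ 2 + b i ^ 2) + 4 * ∑ j : Fin 3, ((1 - 2 * n j ^ 2) * (u ^ 2 + v ^ 2)
      + 2 * n j * (u * a j + v * b j)) := by
  have key : ∀ (a : Fin 3 → ℝ) (u : ℝ),
      ∑ i : Fin 3, ∑ j : Fin 3, (((if i = j then 1 else 0) - n i * n j) * u + n i * a j) ^ 2
      = 2 * u ^ 2 + ∑ i : Fin 3, a i ^ 2 := by
    intro a u
    simp only [Fin.sum_univ_three]
    simp
    have h0 : n 0 ^ 2 = 1 - n 1 ^ 2 - n 2 ^ 2 := by linarith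
    ring_nf
    have h4 : n 0 ^ 4 = (1 - n 1 ^ 2 - n 2 ^ 2) ^ 2 := by rw [← h0]; ring
    have h3 : n 0 ^ 3 = n 0 * (1 - n 1 ^ 2 - n 2 ^ 2) := by rw [← h0]; ring
    rw [h4, h3, h0]
    ring
  have cs : ∀ (a : Fin 3 → ℝ), (n 0 * a 0 + n 1 * a 1 + n 2 * a 2) ^ 2 ≤ ∑ i : Fin 3, a i ^ 2 := by
    intro a
    simp only [Fin.sum_univ_three]
    have : (a 0 ^ 2 + a 1 ^ 2 + a 2 ^ 2) = (n 0 ^ 2 + n 1 ^ 2 + n 2 ^ 2) *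
      (a 0 ^ 2 + a 1 ^ 2 + a 2 ^ 2) := by rw [hn, one_mul]
    rw [this]
    nlinarith [sq_nonneg (n 0 * a 1 - n 1 * a 0), sq_nonneg (n 0 * a 2 - n 2 * a 0),
      sq_nonneg (n 1 * a 2 - n 2 * a 1)]
  simp only [Finset.sum_add_distrib, key]
  have e1 : ∑ j : Fin 3, (1 - 2 * n j ^ 2) * (u ^ 2 + v ^ 2) = u ^ 2 + v ^ 2 := by
    rw [← Finset.sum_mul]
    simp only [Fin.sum_univ_three]
    have : (1 - 2 * n 0 ^ 2 + (1 - 2 * n 1 ^ 2) + (1 - 2 * n 2 ^ 2)) = 1 := by linarith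
    rw [this, one_mul]
  have e2 : ∑ j : Fin 3, 2 * n j * (u * a j + v * b j) =
      2 * u * (n 0 * a 0 + n 1 * a 1 + n 2 * a 2) + 2 * v * (n 0 * b 0 + n 1 * b 1 + n 2 * b 2) := by
    simp only [Fin.sum_univ_three]
    ring
  rw [e1, e2]
  nlinarith [cs a, cs b, sq_nonneg (u + 2 * (n 0 * a 0 + n 1 * a 1 + n 2 * a 2)),
    sq_nonneg (v + 2 * (n 0 * b 0 + n 1 * b 1 + n 2 * b 2))]

lemma aux_pointwise (g : E3 → ℂ) (x : E3) (hx : x ≠ 0) (hg : DifferentiableAt ℝ g x) :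
    ∑ i : Fin 3, ∑ j : Fin 3,
          Complex.normSq (pd (fun z : E3 => ((z i / ‖z‖ : ℝ) : ℂ) * g z) j x) ≤
    9 * ∑ i : Fin 3, Complex.normSq (pd g i x) +
      4 * ∑ j : Fin 3, fderiv ℝ (hardyField g j) x (e3 j) := by
  have hn : ‖x‖ ≠ 0 := norm_ne_zero_iff.mpr hx
  have hs : (x 0 / ‖x‖) ^ 2 + (x 1 / ‖x‖) ^ 2 + (x 2 / ‖x‖) ^ 2 = 1 := by
    have := EuclideanSpace.norm_sq_eq x
    simp only [Fin.sum_univ_three, Real.norm_eq_abs, sq_abs] at this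
    field_simp
    linarith
  have := aux_alg (fun i => x i / ‖x‖) (fun i => (pd g i x).re) (fun i => (pd g i x).im)
    ((‖x‖⁻¹ : ℝ) * g x).re ((‖x‖⁻¹ : ℝ) * g x).im hs
  have e : ∀ z : ℂ, Complex.normSq z = z.re ^ 2 + z.im ^ 2 := fun z => by
    rw [Complex.normSq_apply]; ring
  simp only [aux_pd_h g x hx hg, aux_fd_field g x hx hg]
  simp only [e, Complex.add_re, Complex.add_im, Complex.re_ofReal_mul, Complex.im_ofReal_mul]
    at this ⊢
  exact this

lemma aux_smooth (g : E3 → ℂ) (hg : ContDiff ℝ ∞ g) (h0 : (0 : E3) ∉ tsupport g) (j : Fin 3) :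
    ContDiff ℝ ∞ (hardyField g j) ∧ tsupport (hardyField g j) ⊆ tsupport g := by
  have hsub : tsupport (hardyField g j) ⊆ tsupport g := by
    apply closure_mono
    intro x hx
    simp only [hardyField, Function.mem_support] at hx ⊢
    intro h
    simp [h] at hx
  refine ⟨contDiff_iff_contDiffAt.mpr fun x => ?_, hsub⟩
  by_cases hx : x ∈ tsupport (hardyField g j)
  swap
  · exact (contDiffAt_const (c := (0 : ℝ))).congr_of_eventuallyEq
      (notMem_tsupport_iff_eventuallyEq.mp hx)
  have hx0 : x ≠ 0 := fun h => h0 (h ▸ hsub hx)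
  have hn : ‖x‖ ≠ 0 := norm_ne_zero_iff.mpr hx0
  have e : hardyField g j = fun z => ((EuclideanSpace.proj j : E3 →L[ℝ] ℝ) z / ‖z‖ ^ 2) * ‖g z‖ ^ 2 := by
    ext z
    simp [hardyField, Complex.normSq_eq_norm_sq]
  rw [e]
  refine ContDiffAt.mul (ContDiffAt.div ?_ ?_ (by positivity)) ?_
  · exact (EuclideanSpace.proj j : E3 →L[ℝ] ℝ).contDiff.contDiffAt
  · exact (contDiff_norm_sq ℝ).contDiffAt
  · exact (hg.norm_sq ℝ).contDiffAt

lemma aux_off {F : Type*} [NormedAddCommGroup F] [NormedSpace ℝ F] (f : E3 → F) (x : E3)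
    (hx : x ∉ tsupport f) : fderiv ℝ f x = 0 :=
  image_eq_zero_of_notMem_tsupport fun h => hx (tsupport_fderiv_subset ℝ h)

lemma aux_integrable_fderiv {F : Type*} [NormedAddCommGroup F] [NormedSpace ℝ F] (f : E3 → F)
    (hf : ContDiff ℝ ∞ f) (hc : HasCompactSupport f) (v : E3) :
    Integrable (fun x => fderiv ℝ f x v) :=
  ((hf.continuous_fderiv (by simp)).clm_apply continuous_const).integrable_of_hasCompactSupport
    (hc.fderiv_apply (𝕜 := ℝ) v)

lemma aux_integral_fderiv (f : E3 → ℝ)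
    (hf : ContDiff ℝ ∞ f) (hc : HasCompactSupport f) (v : E3) :
    ∫ x, fderiv ℝ f x v = 0 := by
  have := integral_mul_fderiv_eq_neg_fderiv_mul_of_integrable (μ := (volume : Measure E3))
    (f := fun _ : E3 => (1 : ℝ)) (g := f) (v := v) (by simp)
    (by simpa using aux_integrable_fderiv f hf hc v)
    (by simpa using hf.continuous.integrable_of_hasCompactSupport hc)
    (fun x _ => differentiableAt_const _) (fun x _ => hf.differentiable (by simp) x)
  simpa using this

/-- There is `C > 0` so that for every smooth compactly supported
`g : ℝ³ → ℂ` whose support avoids the origin, `h(x) = (x/|x|) g(x)` satisfies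
`‖∇h‖_{L²} ≤ C ‖∇g‖_{L²}`, with the Frobenius norm on the derivative matrix of `h`. -/
theorem unit_vector_multiplier_H1 :
    ∃ C > (0:ℝ), ∀ g : E3 → ℂ, ContDiff ℝ ∞ g → HasCompactSupport g →
      (0 : E3) ∉ tsupport g →
      Real.sqrt (∫ x : E3, ∑ i : Fin 3, ∑ j : Fin 3,
          Complex.normSq (pd (fun z : E3 => ((z i / ‖z‖ : ℝ) : ℂ) * g z) j x))
        ≤ C * Real.sqrt (∫ x : E3, ∑ i : Fin 3, Complex.normSq (pd g i x)) := by
  refine ⟨3, by norm_num, fun g hg hc h0 => ?_⟩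
  have hsm := aux_smooth g hg h0
  have hcj : ∀ j, HasCompactSupport (hardyField g j) := fun j =>
    hc.of_isClosed_subset (isClosed_tsupport _) (hsm j).2
  have hpt : ∀ x : E3, ∑ i : Fin 3, ∑ j : Fin 3,
          Complex.normSq (pd (fun z : E3 => ((z i / ‖z‖ : ℝ) : ℂ) * g z) j x) ≤
      9 * ∑ i : Fin 3, Complex.normSq (pd g i x) +
        4 * ∑ j : Fin 3, fderiv ℝ (hardyField g j) x (e3 j) := by
    intro x
    by_cases hx : x ∈ tsupport g
    · exact aux_pointwise g x (fun h => h0 (h ▸ hx)) (hg.differentiable (by simp) x)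
    · have h1 : ∀ i, fderiv ℝ (fun z : E3 => ((z i / ‖z‖ : ℝ) : ℂ) * g z) x = 0 := fun i =>
        aux_off _ x fun h => hx (tsupport_mul_subset_right h)
      have h2 : ∀ j, fderiv ℝ (hardyField g j) x = 0 := fun j =>
        aux_off _ x fun h => hx ((hsm j).2 h)
      simp only [pd, h1, h2, aux_off g x hx]
      simp
  have hi1 : Integrable (fun x : E3 => ∑ i : Fin 3, Complex.normSq (pd g i x)) := by
    refine integrable_finsetSum _ fun i _ => ?_
    have hcont : Continuous (fun x => pd g i x) :=
      (hg.continuous_fderiv (by simp)).clm_apply continuous_const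
    refine (Complex.continuous_normSq.comp hcont).integrable_of_hasCompactSupport ?_
    exact (hc.fderiv_apply (𝕜 := ℝ) (e3 i)).comp_left (g := Complex.normSq) (by simp)
  have hi2 : Integrable (fun x : E3 => ∑ j : Fin 3, fderiv ℝ (hardyField g j) x (e3 j)) :=
    integrable_finsetSum _ fun j _ => aux_integrable_fderiv _ (hsm j).1 (hcj j) _
  have hz : ∫ x : E3, ∑ j : Fin 3, fderiv ℝ (hardyField g j) x (e3 j) = 0 := by
    rw [integral_finsetSum _ fun j _ => aux_integrable_fderiv _ (hsm j).1 (hcj j) _]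
    exact Finset.sum_eq_zero fun j _ => aux_integral_fderiv _ (hsm j).1 (hcj j) _
  have hmain := integral_mono_of_nonneg (μ := (volume : Measure E3))
    (Eventually.of_forall fun x => Finset.sum_nonneg fun i _ => Finset.sum_nonneg fun j _ =>
      Complex.normSq_nonneg _) ((hi1.const_mul 9).add (hi2.const_mul 4))
    (Eventually.of_forall hpt)
  simp only [Pi.add_apply] at hmain
  rw [integral_add (hi1.const_mul 9) (hi2.const_mul 4), integral_const_mul, integral_const_mul,
    hz, mul_zero, add_zero] at hmain
  refine (Real.sqrt_le_sqrt hmain).trans ?_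
  rw [Real.sqrt_mul (by norm_num), show (9 : ℝ) = 3 ^ 2 by norm_num,
    Real.sqrt_sq (by norm_num)]
end
end

section
/- There is a constant C > 0 such that for every Schwartz function g : ℝ³ → ℂ, the radial derivative ∂_r g(x) = (x/|x|) · ∇g(x) satisfies ‖∂_r g‖_{Ḣ^{−1/2}(ℝ³)} ≤ C ‖g‖_{Ḣ^{1/2}(ℝ³)}. -/
open MeasureTheory Real Complex Filter
open scoped FourierTransform ContDiff ENNReal

noncomputable section

open scoped NNReal SchwartzMap

lemma temperate_wd (w : E3 → ℝ≥0) (hw : Continuous w) (hwb : ∀ x, (w x : ℝ) ≤ (1 + ‖x‖) ^ (2:ℝ)) :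
    (volume.withDensity (fun x => (w x : ℝ≥0∞)) : Measure E3).HasTemperateGrowth := by
  refine ⟨6, ?_⟩
  rw [integrable_withDensity_iff_integrable_smul hw.measurable]
  have h : Integrable (fun x : E3 => (1 + ‖x‖) ^ (-(4:ℝ))) := by
    apply integrable_one_add_norm
    simp; norm_num
  refine h.mono' ?_ ?_
  · apply Continuous.aestronglyMeasurable
    apply Continuous.smul (f := w) hw
    apply Continuous.rpow_const (by fun_prop)
    intro x; left; positivity
  · filter_upwards with x
    have h1 : (0:ℝ) < 1 + ‖x‖ := by positivity
    rw [NNReal.smul_def, smul_eq_mul, norm_mul, Real.norm_of_nonneg (by positivity), Real.norm_of_nonneg (by positivity)]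
    calc _ ≤ (1 + ‖x‖) ^ (2:ℝ) * (1 + ‖x‖) ^ (-((6:ℕ):ℝ)) := by
            gcongr; exact hwb x
      _ = _ := by rw [← Real.rpow_add h1]; norm_num

lemma dual_bound (w : E3 → ℝ≥0) (hw : Continuous w) (hwb : ∀ x, (w x : ℝ) ≤ (1 + ‖x‖) ^ (2:ℝ))
    (hw0 : ∀ᵐ x : E3, w x ≠ 0)
    (G : E3 → ℂ) (hG : Continuous G) (hGb : ∃ B, ∀ x, ‖G x‖ ≤ B) (M : ℝ) (hM : 0 ≤ M)
    (h : ∀ φ : 𝓢(E3, ℂ), ‖∫ x, φ x * G x‖ ≤ M * Real.sqrt (∫ x, (w x : ℝ) * ‖φ x‖ ^ 2)) :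
    ∫⁻ x, ENNReal.ofReal ((w x : ℝ)⁻¹ * ‖G x‖ ^ 2) ≤ ENNReal.ofReal (M ^ 2) := by
  set μ : Measure E3 := volume.withDensity (fun x => (w x : ℝ≥0∞)) with hμ
  have : μ.HasTemperateGrowth := temperate_wd w hw hwb
  have : IsLocallyFiniteMeasure μ := by
    rw [hμ]; exact IsLocallyFiniteMeasure.withDensity_coe hw
  have hInt : ∀ φ : 𝓢(E3, ℂ), Integrable (fun x => φ x * G x) := by
    intro φ
    obtain ⟨B, hB⟩ := hGb
    exact φ.integrable.mul_bdd hG.aestronglyMeasurable (c := B) (Eventually.of_forall hB)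
  let f : 𝓢(E3, ℂ) →ₗ[ℂ] ℂ :=
    { toFun := fun φ => ∫ x, φ x * G x
      map_add' := by
        intro a b
        rw [← integral_add (hInt a) (hInt b)]
        congr 1; ext x; simp [add_mul]
      map_smul' := by
        intro c a
        simp [mul_assoc, integral_const_mul] }
  let e : 𝓢(E3, ℂ) →ₗ[ℂ] Lp ℂ 2 μ := (SchwartzMap.toLpCLM ℂ ℂ 2 μ : 𝓢(E3, ℂ) →ₗ[ℂ] Lp ℂ 2 μ)
  have he : DenseRange e := SchwartzMap.denseRange_toLpCLM (F := ℂ) (p := 2) (μ := μ) (by simp)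
  have hn : ∀ φ, ‖f φ‖ ≤ M * ‖e φ‖ := by
    intro φ
    have : ‖e φ‖ = Real.sqrt (∫ x, (w x : ℝ) * ‖φ x‖ ^ 2) := by
      change ‖φ.toLp 2 μ‖ = _
      rw [SchwartzMap.norm_toLp' (by simp) (by simp), hμ,
        integral_withDensity_eq_integral_smul hw.measurable, Real.sqrt_eq_rpow]
      simp [NNReal.smul_def]
    rw [this]
    exact h φ
  set L := f.extendOfNorm e with hL
  have hLn : ‖L‖ ≤ M := LinearMap.opNorm_extendOfNorm_le he hM hn
  set H := (InnerProductSpace.toDual ℂ (Lp ℂ 2 μ)).symm L with hH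
  have hHn : ‖H‖ ≤ M := by rw [hH, LinearIsometryEquiv.norm_map]; exact hLn
  obtain ⟨K, hK2, hKn, hKf⟩ : ∃ K : E3 → ℂ, MemLp K 2 μ ∧ ∫⁻ x, ‖K x‖ₑ ^ 2 ∂μ ≤ ENNReal.ofReal (M ^ 2) ∧
      ∀ φ : 𝓢(E3, ℂ), ∫ x, φ x * G x = ∫ a, φ a * (starRingEnd ℂ) (K a) ∂μ := by
    refine ⟨H, Lp.memLp H, ?_, ?_⟩
    · calc _ = (‖H‖ₑ) ^ 2 := by
            rw [Lp.enorm_def, eLpNorm_eq_lintegral_rpow_enorm_toReal (by simp) (by simp)]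
            rw [← ENNReal.rpow_natCast, ← ENNReal.rpow_mul]
            simp
        _ ≤ _ := by
            rw [ENNReal.ofReal_pow hM, ← ofReal_norm]
            gcongr
    · intro φ
      have h1 : f φ = inner ℂ H (e φ) := by
        rw [hH, InnerProductSpace.toDual_symm_apply, hL, LinearMap.extendOfNorm_eq he ⟨M, hn⟩]
      change f φ = _
      rw [h1, L2.inner_def]
      apply integral_congr_ae
      filter_upwards [SchwartzMap.coeFn_toLp φ 2 μ] with x hx
      have hx' : (e φ) x = φ x := hx
      rw [hx']
      simp
  clear_value H L
  clear hH H hHn hL hLn L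
  have hrep : ∀ φ : 𝓢(E3, ℂ), ∫ x, φ x * G x = ∫ x, φ x * ((w x) • (starRingEnd ℂ) (K x)) := by
    intro φ
    rw [hKf, hμ, integral_withDensity_eq_integral_smul hw.measurable]
    congr 1; ext x
    rw [mul_smul_comm]
  have hloc : LocallyIntegrable (fun x => (w x) • (starRingEnd ℂ) (K x)) volume := by
    rw [locallyIntegrable_iff]
    intro S hS
    have hHl : LocallyIntegrable (fun x => (starRingEnd ℂ) (K x)) μ := by
      have := hK2.star
      exact this.locallyIntegrable (by norm_num)
    have := hHl.integrableOn_isCompact hS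
    rw [IntegrableOn, hμ, restrict_withDensity hS.measurableSet, integrable_withDensity_iff_integrable_smul hw.measurable] at this
    exact this
  have hae : ∀ᵐ x : E3, G x = (w x) • (starRingEnd ℂ) (K x) := by
    apply ae_eq_of_integral_contDiff_smul_eq hG.locallyIntegrable hloc
    intro g hg hgc
    have hg1 : ContDiff ℝ ∞ (fun x => (g x : ℂ)) := Complex.ofRealCLM.contDiff.comp hg
    have hg2 : HasCompactSupport (fun x => (g x : ℂ)) := hgc.comp_left (g := fun r : ℝ => (r : ℂ)) (by simp)
    have := hrep (hg2.toSchwartzMap hg1)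
    simpa using this
  calc ∫⁻ x, ENNReal.ofReal ((w x : ℝ)⁻¹ * ‖G x‖ ^ 2)
      = ∫⁻ x, (w x : ℝ≥0∞) * ‖K x‖ₑ ^ 2 := by
        apply lintegral_congr_ae
        filter_upwards [hae, hw0] with x hx hx0
        rw [hx, NNReal.smul_def, norm_smul]
        have : (w x : ℝ)⁻¹ * (‖(w x : ℝ)‖ * ‖(starRingEnd ℂ) (K x)‖) ^ 2 = w x * ‖K x‖ ^ 2 := by
          have : (w x : ℝ) ≠ 0 := by exact_mod_cast hx0
          simp
          field_simp
        rw [this, ENNReal.ofReal_mul (by positivity), ENNReal.ofReal_coe_nnreal, ENNReal.ofReal_pow (by positivity), ofReal_norm]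
    _ = ∫⁻ x, ‖K x‖ₑ ^ 2 ∂μ := by
        have := hK2.1.enorm.pow_const 2
        rw [hμ] at this ⊢
        rw [lintegral_withDensity_eq_lintegral_mul₀' (by fun_prop) this]
        rfl
    _ ≤ _ := hKn


/-! ### Integration by parts with a regularised radial field -/

lemma pd_eq (g : 𝓢(E3, ℂ)) (i : Fin 3) (x : E3) :
    pd (fun z => g z) i x = (LineDeriv.lineDerivOp (e3 i) g : 𝓢(E3, ℂ)) x := rfl

lemma int_mul (f g : 𝓢(E3, ℂ)) : Integrable (fun x => f x * g x) :=
  f.integrable.mul_bdd g.continuous.aestronglyMeasurable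
    (Eventually.of_forall (SchwartzMap.norm_le_seminorm ℝ g))

lemma int_norm_mul (f g : 𝓢(E3, ℂ)) : Integrable (fun x => ‖f x‖ * ‖g x‖) := by
  simpa using (int_mul f g).norm

lemma int_norm_sq (f : 𝓢(E3, ℂ)) : Integrable (fun x => ‖f x‖ ^ 2) := by
  simpa [pow_two] using int_norm_mul f f

lemma sum_sq_E3 (x : E3) : ∑ i, x i ^ 2 = ‖x‖ ^ 2 := by
  rw [EuclideanSpace.norm_sq_eq]; simp

lemma coord_sq_le (x : E3) (i : Fin 3) : x i ^ 2 ≤ ‖x‖ ^ 2 := by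
  rw [← sum_sq_E3]
  exact Finset.single_le_sum (f := fun i => x i ^ 2) (fun j _ => sq_nonneg _) (Finset.mem_univ i)

lemma hasFDerivAt_a (ε : ℝ) (hε : 0 < ε) (p : ℝ) (i : Fin 3) (x : E3) :
    DifferentiableAt ℝ (fun y : E3 => y i * (‖y‖ ^ 2 + ε) ^ p) x ∧
    fderiv ℝ (fun y : E3 => y i * (‖y‖ ^ 2 + ε) ^ p) x (e3 i) =
      (‖x‖ ^ 2 + ε) ^ p + 2 * p * x i ^ 2 * (‖x‖ ^ 2 + ε) ^ (p - 1) := by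
  have hs : 0 < ‖x‖ ^ 2 + ε := by positivity
  have h1 : HasFDerivAt (fun y : E3 => y i) (EuclideanSpace.proj i : E3 →L[ℝ] ℝ) x :=
    (EuclideanSpace.proj i : E3 →L[ℝ] ℝ).hasFDerivAt
  have h2 : HasFDerivAt (fun y : E3 => ‖y‖ ^ 2 + ε) (2 • (innerSL ℝ x)) x := by
    exact ((hasStrictFDerivAt_norm_sq x).hasFDerivAt).add_const ε
  have h3 : HasFDerivAt (fun y : E3 => y i * (‖y‖ ^ 2 + ε) ^ p) _ x :=
    h1.mul (h2.rpow_const (p := p) (Or.inl hs.ne'))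
  refine ⟨h3.differentiableAt, ?_⟩
  rw [HasFDerivAt.fderiv h3]
  simp [e3, EuclideanSpace.inner_single_right]
  ring

lemma a_bound (ε : ℝ) (hε : 0 < ε) (p : ℝ) (hp : p ≤ -(1/2)) (i : Fin 3) (x : E3) :
    |x i * (‖x‖ ^ 2 + ε) ^ p| ≤ ε ^ (p + 1/2) := by
  have hs : 0 < ‖x‖ ^ 2 + ε := by positivity
  rw [abs_mul, abs_of_pos (Real.rpow_pos_of_pos hs p)]
  have h1 : |x i| ≤ (‖x‖ ^ 2 + ε) ^ ((1:ℝ)/2) := by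
    rw [← Real.sqrt_eq_rpow]
    apply Real.abs_le_sqrt
    linarith [coord_sq_le x i]
  calc _ ≤ (‖x‖ ^ 2 + ε) ^ ((1:ℝ)/2) * (‖x‖ ^ 2 + ε) ^ p := by gcongr
    _ = (‖x‖ ^ 2 + ε) ^ (p + 1/2) := by rw [← Real.rpow_add hs]; ring_nf
    _ ≤ _ := Real.rpow_le_rpow_of_nonpos hε (by nlinarith [sq_nonneg ‖x‖]) (by linarith)

lemma da_bound (ε : ℝ) (hε : 0 < ε) (p : ℝ) (hp : p ≤ -(1/2)) (i : Fin 3) (x : E3) :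
    |(‖x‖ ^ 2 + ε) ^ p + 2 * p * x i ^ 2 * (‖x‖ ^ 2 + ε) ^ (p - 1)| ≤ (1 + 2 * |p|) * ε ^ p := by
  have hs : 0 < ‖x‖ ^ 2 + ε := by positivity
  have h0 : (‖x‖ ^ 2 + ε) ^ p ≤ ε ^ p :=
    Real.rpow_le_rpow_of_nonpos hε (by nlinarith [sq_nonneg ‖x‖]) (by linarith)
  have h1 : x i ^ 2 * (‖x‖ ^ 2 + ε) ^ (p - 1) ≤ (‖x‖ ^ 2 + ε) ^ p := by
    rw [Real.rpow_sub_one hs.ne', mul_div_assoc', div_le_iff₀ hs, mul_comm]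
    gcongr
    linarith [coord_sq_le x i]
  calc _ ≤ |(‖x‖ ^ 2 + ε) ^ p| + |2 * p * x i ^ 2 * (‖x‖ ^ 2 + ε) ^ (p - 1)| := abs_add_le _ _
    _ = (‖x‖ ^ 2 + ε) ^ p + 2 * |p| * (x i ^ 2 * (‖x‖ ^ 2 + ε) ^ (p - 1)) := by
      simp only [abs_mul, abs_of_pos (Real.rpow_pos_of_pos hs _), abs_two, abs_pow, sq_abs]
      ring
    _ ≤ (‖x‖ ^ 2 + ε) ^ p + 2 * |p| * (‖x‖ ^ 2 + ε) ^ p := by gcongr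
    _ = (1 + 2 * |p|) * (‖x‖ ^ 2 + ε) ^ p := by ring
    _ ≤ _ := by gcongr

lemma cont_s (ε : ℝ) (hε : 0 < ε) (p : ℝ) : Continuous (fun x : E3 => (‖x‖ ^ 2 + ε) ^ p) :=
  Continuous.rpow_const (by fun_prop) (fun x => Or.inl (by positivity))

lemma int_smul_bdd {G : Type*} [NormedAddCommGroup G] [NormedSpace ℝ G] {a : E3 → ℝ} (ha : Continuous a)
    {A : ℝ} (hA : ∀ x, |a x| ≤ A) {F : E3 → G} (hF : Integrable F) :
    Integrable (fun x => a x • F x) :=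
  hF.bdd_smul A ha.aestronglyMeasurable (Eventually.of_forall hA)

lemma s_bound (ε : ℝ) (hε : 0 < ε) (p : ℝ) (hp : p ≤ 0) (x : E3) :
    |(‖x‖ ^ 2 + ε) ^ p| ≤ ε ^ p := by
  have hs : 0 < ‖x‖ ^ 2 + ε := by positivity
  rw [abs_of_pos (Real.rpow_pos_of_pos hs _)]
  exact Real.rpow_le_rpow_of_nonpos hε (by nlinarith [sq_nonneg ‖x‖]) (by linarith)

lemma ibp_s6 {G : Type*} [NormedAddCommGroup G] [NormedSpace ℝ G] (ε : ℝ) (hε : 0 < ε) (p : ℝ) (hp : p ≤ -(1/2))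
    (F : E3 → G) (hF : Differentiable ℝ F) (hFi : Integrable F)
    (hFd : ∀ i, Integrable (fun x => fderiv ℝ F x (e3 i))) :
    ∫ x : E3, ∑ i, (x i * (‖x‖ ^ 2 + ε) ^ p) • fderiv ℝ F x (e3 i) =
      - ∫ x : E3, (3 * (‖x‖ ^ 2 + ε) ^ p + 2 * p * ‖x‖ ^ 2 * (‖x‖ ^ 2 + ε) ^ (p - 1)) • F x := by
  have ca : ∀ i, Continuous (fun x : E3 => x i * (‖x‖ ^ 2 + ε) ^ p) := fun i =>
    (by fun_prop : Continuous (fun x : E3 => x i)).mul (cont_s ε hε p)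
  have cd : ∀ i, Continuous (fun x : E3 => (‖x‖ ^ 2 + ε) ^ p + 2 * p * x i ^ 2 * (‖x‖ ^ 2 + ε) ^ (p - 1)) :=
    fun i => (cont_s ε hε p).add
      ((by fun_prop : Continuous (fun x : E3 => 2 * p * x i ^ 2)).mul (cont_s ε hε (p-1)))
  have I1 : ∀ i, Integrable (fun x : E3 => (x i * (‖x‖ ^ 2 + ε) ^ p) • fderiv ℝ F x (e3 i)) :=
    fun i => int_smul_bdd (ca i) (a_bound ε hε p hp i) (hFd i)
  have I2 : ∀ i, Integrable (fun x : E3 => ((‖x‖ ^ 2 + ε) ^ p + 2 * p * x i ^ 2 * (‖x‖ ^ 2 + ε) ^ (p - 1)) • F x) :=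
    fun i => int_smul_bdd (cd i) (da_bound ε hε p hp i) hFi
  have I3 : ∀ i, Integrable (fun x : E3 => (x i * (‖x‖ ^ 2 + ε) ^ p) • F x) :=
    fun i => int_smul_bdd (ca i) (a_bound ε hε p hp i) hFi
  rw [integral_finsetSum _ (fun i _ => I1 i)]
  have key : ∀ i, ∫ x : E3, (x i * (‖x‖ ^ 2 + ε) ^ p) • fderiv ℝ F x (e3 i) =
      - ∫ x : E3, ((‖x‖ ^ 2 + ε) ^ p + 2 * p * x i ^ 2 * (‖x‖ ^ 2 + ε) ^ (p - 1)) • F x := by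
    intro i
    have := integral_smul_fderiv_eq_neg_fderiv_smul_of_integrable (μ := (volume : Measure E3))
      (f := fun x : E3 => x i * (‖x‖ ^ 2 + ε) ^ p) (g := F) (v := e3 i)
      (by simp_rw [fun x => (hasFDerivAt_a ε hε p i x).2]; exact I2 i) (I1 i) (I3 i)
      (fun x _ => (hasFDerivAt_a ε hε p i x).1) (fun x _ => hF x)
    simp_rw [fun x => (hasFDerivAt_a ε hε p i x).2] at this
    exact this
  simp_rw [key]
  rw [Finset.sum_neg_distrib, ← integral_finsetSum _ (fun i _ => I2 i)]
  congr 2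
  ext x
  rw [← Finset.sum_smul]
  congr 1
  rw [← sum_sq_E3 x]
  simp [Fin.sum_univ_three]
  ring

set_option maxHeartbeats 400000 in
lemma hardy_s6 (ε : ℝ) (hε : 0 < ε) (h : 𝓢(E3, ℂ)) :
    ∫ x : E3, (‖x‖ ^ 2 + ε)⁻¹ * ‖h x‖ ^ 2 ≤ 4 * ∑ i, ∫ x, ‖pd (fun z => h z) i x‖ ^ 2 := by
  have hd : ∀ i x, fderiv ℝ (fun y => ‖h y‖ ^ 2) x (e3 i) = 2 * inner ℝ (h x) (pd (fun z => h z) i x) := by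
    intro i x
    have := (h.differentiableAt (x := x)).hasFDerivAt.norm_sq
    rw [this.fderiv]
    simp only [pd, two_smul, add_apply, ContinuousLinearMap.comp_apply, innerSL_apply_apply]
    ring
  have hdi : ∀ i, Integrable (fun x => fderiv ℝ (fun y => ‖h y‖ ^ 2) x (e3 i)) := by
    intro i
    simp_rw [hd, pd_eq]
    apply Integrable.const_mul
    refine (int_norm_mul h (LineDeriv.lineDerivOp (e3 i) h : 𝓢(E3, ℂ))).mono' ?_ ?_
    · apply Continuous.aestronglyMeasurable
      exact h.continuous.inner (SchwartzMap.continuous _)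
    · filter_upwards with x
      exact norm_inner_le_norm _ _
  have hdiff : Differentiable ℝ (fun y => ‖h y‖ ^ 2) := h.differentiable.norm_sq ℝ
  have key := ibp_s6 ε hε (-1) (by norm_num) (fun y => ‖h y‖ ^ 2) hdiff (int_norm_sq h) hdi
  have I0 : Integrable (fun x : E3 => (‖x‖ ^ 2 + ε)⁻¹ * ‖h x‖ ^ 2) := by
    have := int_smul_bdd (cont_s ε hε (-1)) (s_bound ε hε (-1) (by norm_num)) (int_norm_sq h)
    simpa [Real.rpow_neg_one] using this
  have IP : ∀ i, Integrable (fun x => ‖pd (fun z => h z) i x‖ ^ 2) := fun i =>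
    int_norm_sq (LineDeriv.lineDerivOp (e3 i) h : 𝓢(E3, ℂ))
  have A : ∫ x : E3, (‖x‖ ^ 2 + ε)⁻¹ * ‖h x‖ ^ 2 ≤
      ∫ x : E3, (3 * (‖x‖ ^ 2 + ε) ^ (-1:ℝ) + 2 * (-1) * ‖x‖ ^ 2 * (‖x‖ ^ 2 + ε) ^ ((-1:ℝ) - 1)) • ‖h x‖ ^ 2 := by
    have hfac : ∀ x : E3, ∀ s : ℝ, s = ‖x‖^2 + ε → 
        (3 * s ^ (-1:ℝ) + 2 * (-1) * ‖x‖ ^ 2 * s ^ ((-1:ℝ) - 1)) = s⁻¹ + 2 * ε * (s⁻¹) ^ 2 := by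
      intro x s hs
      have hs0 : 0 < s := by rw [hs]; positivity
      rw [Real.rpow_sub_one hs0.ne', Real.rpow_neg_one]
      field_simp
      rw [hs]; ring
    apply integral_mono I0
    · have I1 := I0.add (int_smul_bdd (G := ℝ) (a := fun x : E3 => 2 * ε * ((‖x‖ ^ 2 + ε) ^ (-1:ℝ)) ^ 2) 
        (by have := cont_s ε hε (-1); fun_prop) (A := 2 * ε * (ε ^ (-1:ℝ)) ^ 2) (by
          intro x
          rw [abs_of_nonneg (by positivity)]
          have := s_bound ε hε (-1) (by norm_num) x
          rw [abs_of_nonneg (by positivity)] at this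
          gcongr) (int_norm_sq h))
      refine I1.congr (Eventually.of_forall fun x => ?_)
      simp only [Pi.add_apply, smul_eq_mul]
      rw [hfac x _ rfl, Real.rpow_neg_one]
      ring
    · intro x
      simp only [smul_eq_mul]
      rw [hfac x _ rfl]
      gcongr
      have : 0 ≤ 2 * ε * ((‖x‖ ^ 2 + ε)⁻¹) ^ 2 := by positivity
      linarith
  have B : - ∫ x : E3, ∑ i, (x i * (‖x‖ ^ 2 + ε) ^ (-1:ℝ)) • fderiv ℝ (fun y => ‖h y‖ ^ 2) x (e3 i) ≤
      ∫ x : E3, ((1/2) * ((‖x‖ ^ 2 + ε)⁻¹ * ‖h x‖ ^ 2) + 2 * ∑ i, ‖pd (fun z => h z) i x‖ ^ 2) := by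
    rw [← integral_neg]
    apply integral_mono
    · apply Integrable.neg
      apply integrable_finsetSum
      intro i _
      exact int_smul_bdd ((by fun_prop : Continuous (fun x : E3 => x i)).mul (cont_s ε hε (-1)))
        (a_bound ε hε (-1) (by norm_num) i) (hdi i)
    · exact (I0.const_mul _).add ((integrable_finsetSum _ (fun i _ => IP i)).const_mul _)
    · intro x
      simp only
      have hs0 : 0 < ‖x‖ ^ 2 + ε := by positivity
      rw [← Finset.sum_neg_distrib, Finset.mul_sum]
      have h1 : ∀ i, -((x i * (‖x‖ ^ 2 + ε) ^ (-1:ℝ)) • fderiv ℝ (fun y => ‖h y‖ ^ 2) x (e3 i)) ≤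
          (1/2) * (x i ^ 2 * ((‖x‖ ^ 2 + ε)⁻¹ ^ 2 * ‖h x‖ ^ 2)) + 2 * ‖pd (fun z => h z) i x‖ ^ 2 := by
        intro i
        rw [hd, Real.rpow_neg_one, smul_eq_mul]
        set s := (‖x‖ ^ 2 + ε)⁻¹
        set P := pd (fun z => h z) i x
        have h2 : |inner ℝ (h x) P| ≤ ‖h x‖ * ‖P‖ := abs_real_inner_le_norm _ _
        calc -(x i * s * (2 * inner ℝ (h x) P)) ≤ |(x i * s * (2 * inner ℝ (h x) P))| := neg_le_abs _
          _ = 2 * |x i * s| * |inner ℝ (h x) P| := by rw [abs_mul, abs_mul 2, abs_two]; ring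
          _ ≤ 2 * |x i * s| * (‖h x‖ * ‖P‖) := by gcongr
          _ ≤ (1/2) * (|x i * s| ^ 2 * ‖h x‖ ^ 2) + 2 * ‖P‖ ^ 2 := by
            nlinarith [sq_nonneg (|x i * s| * ‖h x‖ - 2 * ‖P‖)]
          _ = _ := by rw [sq_abs]; ring
      refine (Finset.sum_le_sum (fun i _ => h1 i)).trans ?_
      rw [Finset.sum_add_distrib, ← Finset.mul_sum, ← Finset.sum_mul, sum_sq_E3]
      suffices h5 :  ‖x‖ ^ 2 * ((‖x‖ ^ 2 + ε)⁻¹ ^ 2 * ‖h x‖ ^ 2) ≤ (‖x‖ ^ 2 + ε)⁻¹ * ‖h x‖ ^ 2 by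
        rw [← Finset.mul_sum]; linarith
      rw [pow_two (‖x‖ ^ 2 + ε)⁻¹, mul_assoc, ← mul_assoc]
      apply mul_le_of_le_one_left (by positivity)
      rw [← div_eq_mul_inv, div_le_one hs0]; linarith
  rw [integral_add (I0.const_mul _) ((integrable_finsetSum _ (fun i _ => IP i)).const_mul _),
    integral_const_mul, integral_const_mul, integral_finsetSum _ (fun i _ => IP i)] at B
  rw [key, neg_neg] at B
  have := A.trans B
  linarith


/-! ### The bilinear estimates -/

lemma cs_int (u v : E3 → ℝ) (hu : 0 ≤ u) (hv : 0 ≤ v) (mu : AEStronglyMeasurable u volume)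
    (mv : AEStronglyMeasurable v volume)
    (iu : Integrable (fun x => u x ^ 2)) (iv : Integrable (fun x => v x ^ 2)) :
    ∫ x, u x * v x ≤ Real.sqrt (∫ x, u x ^ 2) * Real.sqrt (∫ x, v x ^ 2) := by
  have h2u : MemLp u (ENNReal.ofReal 2) volume := by
    simpa using (memLp_two_iff_integrable_sq mu).2 iu
  have h2v : MemLp v (ENNReal.ofReal 2) volume := by
    simpa using (memLp_two_iff_integrable_sq mv).2 iv
  have := integral_mul_le_Lp_mul_Lq_of_nonneg (μ := (volume : Measure E3)) Real.HolderConjugate.two_two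
    (Eventually.of_forall hu) (Eventually.of_forall hv) h2u h2v
  simpa [Real.sqrt_eq_rpow] using this

lemma norm_sum_coef_le (b : Fin 3 → ℝ) (c : Fin 3 → ℂ) (hb : ∑ i, b i ^ 2 ≤ 1) :
    ‖∑ i, (b i : ℂ) * c i‖ ≤ Real.sqrt (∑ i, ‖c i‖ ^ 2) := by
  calc ‖∑ i, (b i : ℂ) * c i‖ ≤ ∑ i, |b i| * ‖c i‖ := by
        refine (norm_sum_le _ _).trans (Finset.sum_le_sum fun i _ => ?_)
        simp
    _ ≤ Real.sqrt (∑ i, |b i| ^ 2) * Real.sqrt (∑ i, ‖c i‖ ^ 2) := Real.sum_mul_le_sqrt_mul_sqrt _ _ _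
    _ ≤ 1 * Real.sqrt (∑ i, ‖c i‖ ^ 2) := by
        gcongr
        rw [Real.sqrt_le_one]
        simpa using hb
    _ = _ := one_mul _

/-- the radial derivative -/
def Trad (g : 𝓢(E3, ℂ)) (x : E3) : ℂ :=
  ∑ i : Fin 3, ((x i / ‖x‖ : ℝ) : ℂ) * pd (fun z => g z) i x

lemma cont_pd (g : 𝓢(E3, ℂ)) (i : Fin 3) : Continuous (fun x => pd (fun z => g z) i x) :=
  (LineDeriv.lineDerivOp (e3 i) g : 𝓢(E3, ℂ)).continuous

lemma int_pd (g : 𝓢(E3, ℂ)) (i : Fin 3) : Integrable (fun x => pd (fun z => g z) i x) :=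
  (LineDeriv.lineDerivOp (e3 i) g : 𝓢(E3, ℂ)).integrable

lemma int_pd_sq (g : 𝓢(E3, ℂ)) (i : Fin 3) : Integrable (fun x => ‖pd (fun z => g z) i x‖ ^ 2) :=
  int_norm_sq (LineDeriv.lineDerivOp (e3 i) g : 𝓢(E3, ℂ))

lemma int_pd_mul (g h : 𝓢(E3, ℂ)) (i : Fin 3) : Integrable (fun x => pd (fun z => g z) i x * h x) :=
  int_mul (LineDeriv.lineDerivOp (e3 i) g : 𝓢(E3, ℂ)) h

lemma Trad_norm_le (g : 𝓢(E3, ℂ)) (x : E3) :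
    ‖Trad g x‖ ≤ Real.sqrt (∑ i, ‖pd (fun z => g z) i x‖ ^ 2) := by
  apply norm_sum_coef_le
  simp_rw [div_pow]
  rw [← Finset.sum_div, sum_sq_E3]
  exact div_self_le_one _

lemma Trad_meas (g : 𝓢(E3, ℂ)) : Measurable (Trad g) := by
  unfold Trad
  apply Finset.measurable_fun_sum
  intro i _
  apply Measurable.mul
  · apply Complex.measurable_ofReal.comp
    have : Measurable (fun x : E3 => x i) := (by fun_prop : Continuous (fun x : E3 => x i)).measurable
    exact this.div measurable_norm
  · exact (cont_pd g i).measurable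

lemma Trad_int (g : 𝓢(E3, ℂ)) : Integrable (Trad g) := by
  have : Integrable (fun x => ∑ i, ‖pd (fun z => g z) i x‖) :=
    integrable_finsetSum _ (fun i _ => (int_pd g i).norm)
  refine this.mono' (Trad_meas g).aestronglyMeasurable (Eventually.of_forall fun x => ?_)
  refine (_root_.norm_sum_le _ _).trans (Finset.sum_le_sum fun i _ => ?_)
  rw [norm_mul]
  apply mul_le_of_le_one_left (norm_nonneg _)
  rw [Complex.norm_real, norm_div, norm_norm]
  apply div_le_one_of_le₀ _ (norm_nonneg _)
  exact PiLp.norm_apply_le x i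

lemma Trad_sq_int (g : 𝓢(E3, ℂ)) : Integrable (fun x => ‖Trad g x‖ ^ 2) ∧
    ∫ x, ‖Trad g x‖ ^ 2 ≤ ∑ i, ∫ x, ‖pd (fun z => g z) i x‖ ^ 2 := by
  have h0 : Integrable (fun x => ∑ i, ‖pd (fun z => g z) i x‖ ^ 2) :=
    integrable_finsetSum _ (fun i _ => int_pd_sq g i)
  have hle : ∀ x, ‖Trad g x‖ ^ 2 ≤ ∑ i, ‖pd (fun z => g z) i x‖ ^ 2 := by
    intro x
    have := Trad_norm_le g x
    rw [Real.le_sqrt (norm_nonneg _) (by positivity)] at this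
    exact this
  have h1 : Integrable (fun x => ‖Trad g x‖ ^ 2) := by
    refine h0.mono' ((Trad_meas g).norm.pow_const 2).aestronglyMeasurable (Eventually.of_forall fun x => ?_)
    rw [Real.norm_of_nonneg (by positivity)]
    exact hle x
  refine ⟨h1, ?_⟩
  rw [← integral_finsetSum _ (fun i _ => int_pd_sq g i)]
  exact integral_mono h1 h0 hle

lemma pairA (g h : 𝓢(E3, ℂ)) : ‖∫ x, Trad g x * h x‖ ≤
    Real.sqrt (∑ i, ∫ x, ‖pd (fun z => g z) i x‖ ^ 2) * Real.sqrt (∫ x, ‖h x‖ ^ 2) := by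
  calc _ ≤ ∫ x, ‖Trad g x * h x‖ := norm_integral_le_integral_norm _
    _ = ∫ x, ‖Trad g x‖ * ‖h x‖ := by simp
    _ ≤ Real.sqrt (∫ x, ‖Trad g x‖ ^ 2) * Real.sqrt (∫ x, ‖h x‖ ^ 2) :=
      cs_int _ _ (fun x => norm_nonneg _) (fun x => norm_nonneg _) (Trad_meas g).norm.aestronglyMeasurable
        h.continuous.norm.aestronglyMeasurable (Trad_sq_int g).1 (int_norm_sq h)
    _ ≤ _ := by
      gcongr
      exact (Trad_sq_int g).2

lemma pairB_reg (ε : ℝ) (hε : 0 < ε) (g h : 𝓢(E3, ℂ)) :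
    ‖∫ x : E3, ∑ i, (x i * (‖x‖ ^ 2 + ε) ^ (-(1/2) : ℝ)) • (pd (fun z => g z) i x * h x)‖ ≤
    Real.sqrt (∫ x, ‖g x‖ ^ 2) * Real.sqrt (74 * ∑ i, ∫ x, ‖pd (fun z => h z) i x‖ ^ 2) := by
  have hd : ∀ i x, fderiv ℝ (fun y => g y * h y) x (e3 i) =
      pd (fun z => g z) i x * h x + pd (fun z => h z) i x * g x := by
    intro i x
    have : HasFDerivAt (fun y => g y * h y) _ x :=
      (g.differentiableAt (x := x)).hasFDerivAt.mul (h.differentiableAt (x := x)).hasFDerivAt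
    rw [this.fderiv]
    simp only [pd, add_apply, smul_apply, smul_eq_mul]
    ring
  have I1 := fun i => int_pd_mul g h i
  have I2 := fun i => int_pd_mul h g i
  have ca : ∀ i, Continuous (fun x : E3 => x i * (‖x‖ ^ 2 + ε) ^ (-(1/2) : ℝ)) := fun i =>
    (by fun_prop : Continuous (fun x : E3 => x i)).mul (cont_s ε hε _)
  have J1 : Integrable (fun x : E3 => ∑ i, (x i * (‖x‖ ^ 2 + ε) ^ (-(1/2) : ℝ)) • (pd (fun z => g z) i x * h x)) :=
    integrable_finsetSum _ (fun i _ => int_smul_bdd (ca i) (a_bound ε hε _ le_rfl i) (I1 i))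
  have J2 : Integrable (fun x : E3 => ∑ i, (x i * (‖x‖ ^ 2 + ε) ^ (-(1/2) : ℝ)) • (pd (fun z => h z) i x * g x)) :=
    integrable_finsetSum _ (fun i _ => int_smul_bdd (ca i) (a_bound ε hε _ le_rfl i) (I2 i))
  have key := ibp_s6 ε hε (-(1/2)) le_rfl (fun y => g y * h y) (g.differentiable.mul h.differentiable) (int_mul g h)
    (by intro i; simp_rw [hd]; exact (I1 i).add (I2 i))
  simp_rw [hd, smul_add, Finset.sum_add_distrib] at key
  rw [integral_add J1 J2] at key
  have key2 := eq_sub_of_add_eq key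
  rw [key2]
  set d : E3 → ℝ := fun x => 3 * (‖x‖ ^ 2 + ε) ^ (-(1/2):ℝ) + 2 * (-(1/2)) * ‖x‖ ^ 2 * (‖x‖ ^ 2 + ε) ^ (-(1/2:ℝ) - 1) with hdd
  have hdb : ∀ x, |d x| ≤ 3 * (‖x‖ ^ 2 + ε) ^ (-(1/2):ℝ) := by
    intro x
    have hs : 0 < ‖x‖ ^ 2 + ε := by positivity
    have h1 : ‖x‖ ^ 2 * (‖x‖ ^ 2 + ε) ^ (-(1/2:ℝ) - 1) ≤ (‖x‖ ^ 2 + ε) ^ (-(1/2):ℝ) := by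
      rw [Real.rpow_sub_one hs.ne', mul_div_assoc', div_le_iff₀ hs, mul_comm]
      gcongr
      linarith
    have h2 : 0 ≤ ‖x‖ ^ 2 * (‖x‖ ^ 2 + ε) ^ (-(1/2:ℝ) - 1) := by positivity
    have h3 : 0 < (‖x‖ ^ 2 + ε) ^ (-(1/2:ℝ)) := by positivity
    rw [hdd, abs_le]
    constructor <;> simp only <;> nlinarith
  have cd : Continuous d := by
    have h1 := cont_s ε hε (-(1/2))
    have h2 := cont_s ε hε (-(1/2) - 1)
    rw [hdd]
    exact (h1.const_mul 3).add ((by fun_prop : Continuous (fun x : E3 => 2 * (-(1/2)) * ‖x‖ ^ 2)).mul h2)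
  have J3 : Integrable (fun x => d x • (g x * h x)) := by
    refine int_smul_bdd cd (A := 3 * ε ^ (-(1/2):ℝ)) (fun x => (hdb x).trans ?_) (int_mul g h)
    have := s_bound ε hε (-(1/2)) (by norm_num) x
    rw [abs_of_nonneg (by positivity)] at this
    gcongr
  have J3' : Integrable (fun x => -(d x • (g x * h x))) := J3.neg
  change ‖(-∫ x, d x • (g x * h x)) - _‖ ≤ _
  rw [← integral_neg, ← integral_sub J3' J2]
  set N : E3 → ℝ := fun x => Real.sqrt (∑ i, ‖pd (fun z => h z) i x‖ ^ 2) with hN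
  have cN : Continuous N := by
    rw [hN]
    apply Continuous.sqrt
    apply continuous_finsetSum
    intro i _
    exact (cont_pd h i).norm.pow 2
  set v : E3 → ℝ := fun x => 3 * (‖x‖ ^ 2 + ε) ^ (-(1/2):ℝ) * ‖h x‖ + N x with hv
  have cv : Continuous v := (((cont_s ε hε (-(1/2))).const_mul 3).mul h.continuous.norm).add cN
  have I0 : Integrable (fun x : E3 => (‖x‖ ^ 2 + ε)⁻¹ * ‖h x‖ ^ 2) := by
    have := int_smul_bdd (cont_s ε hε (-1)) (s_bound ε hε (-1) (by norm_num)) (int_norm_sq h)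
    simpa [Real.rpow_neg_one] using this
  have IS : Integrable (fun x => ∑ i, ‖pd (fun z => h z) i x‖ ^ 2) :=
    integrable_finsetSum _ (fun i _ => int_pd_sq h i)
  have hvb : ∀ x, v x ^ 2 ≤ 18 * ((‖x‖ ^ 2 + ε)⁻¹ * ‖h x‖ ^ 2) + 2 * ∑ i, ‖pd (fun z => h z) i x‖ ^ 2 := by
    intro x
    have hs : 0 < ‖x‖ ^ 2 + ε := by positivity
    have h1 : ((‖x‖ ^ 2 + ε) ^ (-(1/2):ℝ)) ^ 2 = (‖x‖ ^ 2 + ε)⁻¹ := by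
      rw [← Real.rpow_natCast, ← Real.rpow_mul hs.le, ← Real.rpow_neg_one]; norm_num
    have h2 : N x ^ 2 = ∑ i, ‖pd (fun z => h z) i x‖ ^ 2 := Real.sq_sqrt (by positivity)
    rw [← h2, ← h1, hv]
    simp only
    nlinarith [sq_nonneg (3 * (‖x‖ ^ 2 + ε) ^ (-(1/2):ℝ) * ‖h x‖ - N x)]
  have IR := (I0.const_mul 18).add (IS.const_mul 2)
  have Iv : Integrable (fun x => v x ^ 2) := by
    refine IR.mono' (cv.pow 2).aestronglyMeasurable (Eventually.of_forall fun x => ?_)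
    rw [Real.norm_of_nonneg (by positivity)]
    exact hvb x
  have Ivb : ∫ x, v x ^ 2 ≤ 74 * ∑ i, ∫ x, ‖pd (fun z => h z) i x‖ ^ 2 := by
    have h1 := integral_mono Iv IR hvb
    simp only [Pi.add_apply] at h1
    rw [integral_add (I0.const_mul 18) (IS.const_mul 2), integral_const_mul, integral_const_mul,
      integral_finsetSum _ (fun i _ => int_pd_sq h i)] at h1
    have h2 := hardy_s6 ε hε h
    linarith
  have hv0 : 0 ≤ v := fun x => by
    simp only [hv, hN, Pi.zero_apply]; positivity
  calc _ ≤ ∫ x, ‖g x‖ * v x := by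
        apply norm_integral_le_of_norm_le
        · have hgv : Integrable (fun x => ‖g x‖ ^ 2 + v x ^ 2) := (int_norm_sq g).add Iv
          refine hgv.mono' (g.continuous.norm.mul cv).aestronglyMeasurable (Eventually.of_forall fun x => ?_)
          rw [Real.norm_of_nonneg (mul_nonneg (norm_nonneg _) (hv0 x))]
          nlinarith [sq_nonneg (‖g x‖ - v x), sq_nonneg (‖g x‖ + v x)]
        · filter_upwards with x
          have hs : 0 < ‖x‖ ^ 2 + ε := by positivity
          have e1 : ∑ i, (x i * (‖x‖ ^ 2 + ε) ^ (-(1/2) : ℝ)) • (pd (fun z => h z) i x * g x) =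
            (∑ i, ((x i * (‖x‖ ^ 2 + ε) ^ (-(1/2) : ℝ) : ℝ) : ℂ) * pd (fun z => h z) i x) * g x := by
            rw [Finset.sum_mul]
            refine Finset.sum_congr rfl fun i _ => ?_
            rw [Complex.real_smul, mul_assoc]
          have e2 : ‖∑ i, ((x i * (‖x‖ ^ 2 + ε) ^ (-(1/2) : ℝ) : ℝ) : ℂ) * pd (fun z => h z) i x‖ ≤ N x := by
            apply norm_sum_coef_le
            simp_rw [mul_pow]
            rw [← Finset.sum_mul, sum_sq_E3]
            have h1 : ((‖x‖ ^ 2 + ε) ^ (-(1/2):ℝ)) ^ 2 = (‖x‖ ^ 2 + ε)⁻¹ := by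
              rw [← Real.rpow_natCast, ← Real.rpow_mul hs.le, ← Real.rpow_neg_one]; norm_num
            rw [h1, ← div_eq_mul_inv, div_le_one hs]; linarith
          rw [e1]
          refine (norm_sub_le _ _).trans ?_
          rw [norm_neg, norm_smul, norm_mul, norm_mul, Real.norm_eq_abs]
          have := mul_le_mul_of_nonneg_right (hdb x) (mul_nonneg (norm_nonneg (g x)) (norm_nonneg (h x)))
          have := mul_le_mul_of_nonneg_right e2 (norm_nonneg (g x))
          simp only [hv]
          linarith
    _ ≤ Real.sqrt (∫ x, ‖g x‖ ^ 2) * Real.sqrt (∫ x, v x ^ 2) :=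
      cs_int _ _ (fun x => norm_nonneg _) hv0 g.continuous.norm.aestronglyMeasurable
        cv.aestronglyMeasurable (int_norm_sq g) Iv
    _ ≤ _ := by gcongr

lemma pairB (g h : 𝓢(E3, ℂ)) : ‖∫ x, Trad g x * h x‖ ≤
    Real.sqrt (∫ x, ‖g x‖ ^ 2) * Real.sqrt (74 * ∑ i, ∫ x, ‖pd (fun z => h z) i x‖ ^ 2) := by
  have hlim : Tendsto (fun n : ℕ => ∫ x : E3, ∑ i, (x i * (‖x‖ ^ 2 + 1 / ((n:ℝ) + 1)) ^ (-(1/2) : ℝ)) • (pd (fun z => g z) i x * h x))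
      atTop (nhds (∫ x, Trad g x * h x)) := by
    apply tendsto_integral_of_dominated_convergence (fun x => ∑ i, ‖pd (fun z => g z) i x * h x‖)
    · intro n
      have hn : (0:ℝ) < 1 / ((n:ℝ) + 1) := by positivity
      apply Continuous.aestronglyMeasurable
      apply continuous_finsetSum
      intro i _
      exact ((by fun_prop : Continuous (fun x : E3 => x i)).mul (cont_s _ hn _)).smul ((cont_pd g i).mul h.continuous)
    · exact integrable_finsetSum _ (fun i _ => (int_pd_mul g h i).norm)
    · intro n
      have hn : (0:ℝ) < 1 / ((n:ℝ) + 1) := by positivity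
      filter_upwards with x
      refine (_root_.norm_sum_le _ _).trans (Finset.sum_le_sum fun i _ => ?_)
      rw [norm_smul]
      apply mul_le_of_le_one_left (norm_nonneg _)
      have := a_bound _ hn (-(1/2)) le_rfl i x
      simpa using this
    · filter_upwards with x
      have : Trad g x * h x = ∑ i, (x i / ‖x‖) • (pd (fun z => g z) i x * h x) := by
        rw [Trad, Finset.sum_mul]
        refine Finset.sum_congr rfl fun i _ => ?_
        rw [Complex.real_smul, mul_assoc]
      rw [this]
      apply tendsto_finsetSum
      intro i _
      apply Tendsto.smul_const
      by_cases hx : x = 0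
      · simp [hx]
      · have hx' : 0 < ‖x‖ := norm_pos_iff.2 hx
        have e : x i / ‖x‖ = x i * (‖x‖ ^ 2 + 0) ^ (-(1/2) : ℝ) := by
          rw [add_zero, ← Real.rpow_natCast, ← Real.rpow_mul hx'.le, div_eq_mul_inv, ← Real.rpow_neg_one]
          norm_num
        rw [e]
        apply Tendsto.const_mul
        apply Tendsto.rpow_const
        · exact tendsto_one_div_add_atTop_nhds_zero_nat.const_add _
        · left; positivity
  exact le_of_tendsto hlim.norm (Eventually.of_forall fun n => pairB_reg _ (by positivity) g h)


lemma sum_inner_sq (c : ℂ) (ξ : E3) :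
    ∑ i, ‖(2 * π * I : ℂ) • ((inner ℝ ξ (e3 i) : ℝ) • c)‖ ^ 2 = 4 * π ^ 2 * (‖ξ‖ ^ 2 * ‖c‖ ^ 2) := by
  have h : ∀ i, ‖(2 * π * I : ℂ) • ((inner ℝ ξ (e3 i) : ℝ) • c)‖ ^ 2
      = 4 * π ^ 2 * ‖c‖ ^ 2 * (ξ i) ^ 2 := by
    intro i
    have : (inner ℝ ξ (e3 i) : ℝ) = ξ i := by simp [e3, EuclideanSpace.inner_single_right]
    rw [this, norm_smul, norm_smul]
    simp only [norm_mul, Complex.norm_I, Complex.norm_ofNat, Complex.norm_real, Real.norm_eq_abs, mul_pow, sq_abs]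
    ring
  simp_rw [h]
  rw [← Finset.mul_sum, sum_sq_E3]
  ring

lemma int_wt (f : 𝓢(E3, ℂ)) : Integrable (fun ξ : E3 => ‖ξ‖ ^ 2 * ‖f ξ‖ ^ 2) := by
  have h := fun i => int_norm_sq (SchwartzMap.smulLeftCLM ℂ (inner ℝ · (e3 i) : E3 → ℝ) f)
  have h2 : Integrable (fun ξ : E3 => ∑ i, ‖(SchwartzMap.smulLeftCLM ℂ (inner ℝ · (e3 i) : E3 → ℝ) f) ξ‖ ^ 2) :=
    integrable_finsetSum _ (fun i _ => h i)
  refine h2.congr (Eventually.of_forall fun ξ => ?_)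
  have : ∀ i, (inner ℝ · (e3 i) : E3 → ℝ).HasTemperateGrowth := by intro i; fun_prop
  simp only [SchwartzMap.smulLeftCLM_apply_apply (this _), norm_smul, mul_pow]
  rw [← Finset.sum_mul, ← sum_sq_E3]
  simp [e3, EuclideanSpace.inner_single_right]

lemma grad_planch (g : 𝓢(E3, ℂ)) :
    ∑ i, ∫ x, ‖pd (fun z => g z) i x‖ ^ 2 = 4 * π ^ 2 * ∫ ξ : E3, ‖ξ‖ ^ 2 * ‖(𝓕 g) ξ‖ ^ 2 := by
  have ht : ∀ i, (inner ℝ · (e3 i) : E3 → ℝ).HasTemperateGrowth := by intro i; fun_prop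
  have h : ∀ i, ∫ x, ‖pd (fun z => g z) i x‖ ^ 2 =
      ∫ ξ : E3, ‖(2 * π * I : ℂ) • ((inner ℝ ξ (e3 i) : ℝ) • (𝓕 g) ξ)‖ ^ 2 := by
    intro i
    simp_rw [pd_eq]
    rw [← SchwartzMap.integral_norm_sq_fourier, SchwartzMap.fourier_lineDerivOp_eq]
    simp [SchwartzMap.smulLeftCLM_apply_apply (ht i)]
  have hi : ∀ i, Integrable (fun ξ : E3 => ‖(2 * π * I : ℂ) • ((inner ℝ ξ (e3 i) : ℝ) • (𝓕 g) ξ)‖ ^ 2) := by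
    intro i
    have := int_norm_sq ((2 * π * I : ℂ) • SchwartzMap.smulLeftCLM ℂ (inner ℝ · (e3 i) : E3 → ℝ) (𝓕 g))
    simpa [SchwartzMap.smulLeftCLM_apply_apply (ht i)] using this
  simp_rw [h]
  rw [← integral_finsetSum _ (fun i _ => hi i), ← integral_const_mul]
  congr 1; ext ξ
  exact sum_inner_sq _ _

lemma grad_planch' (φ : 𝓢(E3, ℂ)) :
    ∑ i, ∫ x, ‖pd (fun z => (𝓕 φ) z) i x‖ ^ 2 = 4 * π ^ 2 * ∫ ξ : E3, ‖ξ‖ ^ 2 * ‖φ ξ‖ ^ 2 := by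
  have ht : ∀ i, (inner ℝ · (e3 i) : E3 → ℝ).HasTemperateGrowth := by intro i; fun_prop
  have h : ∀ i, ∫ x, ‖pd (fun z => (𝓕 φ) z) i x‖ ^ 2 =
      ∫ ξ : E3, ‖(2 * π * I : ℂ) • ((inner ℝ ξ (e3 i) : ℝ) • φ ξ)‖ ^ 2 := by
    intro i
    simp_rw [pd_eq]
    rw [SchwartzMap.lineDerivOp_fourier_eq, SchwartzMap.integral_norm_sq_fourier]
    simp [SchwartzMap.smulLeftCLM_apply_apply (ht i)]
  have hi : ∀ i, Integrable (fun ξ : E3 => ‖(2 * π * I : ℂ) • ((inner ℝ ξ (e3 i) : ℝ) • φ ξ)‖ ^ 2) := by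
    intro i
    have := int_norm_sq ((2 * π * I : ℂ) • SchwartzMap.smulLeftCLM ℂ (inner ℝ · (e3 i) : E3 → ℝ) φ)
    simpa [SchwartzMap.smulLeftCLM_apply_apply (ht i)] using this
  simp_rw [h]
  rw [← integral_finsetSum _ (fun i _ => hi i), ← integral_const_mul]
  congr 1; ext ξ
  exact sum_inner_sq _ _

lemma FT_cont (g : 𝓢(E3, ℂ)) : Continuous (𝓕 (Trad g)) :=
  VectorFourier.fourierIntegral_continuous (L := innerₗ E3) Real.continuous_fourierChar
    (by exact continuous_inner) (Trad_int g)

lemma FT_bdd (g : 𝓢(E3, ℂ)) : ∃ B, ∀ x, ‖𝓕 (Trad g) x‖ ≤ B :=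
  ⟨∫ v, ‖Trad g v‖, fun _ => VectorFourier.norm_fourierIntegral_le_integral_norm _ _ (innerₗ E3) _ _⟩

lemma FT_adj (g φ : 𝓢(E3, ℂ)) : ∫ x, φ x * 𝓕 (Trad g) x = ∫ x, Trad g x * (𝓕 φ) x := by
  have := VectorFourier.integral_fourierIntegral_smul_eq_flip (L := innerₗ E3) (μ := volume) (ν := volume)
    (f := Trad g) (g := φ) Real.continuous_fourierChar
    (by exact continuous_inner) (Trad_int g) φ.integrable
  rw [flip_innerₗ] at this
  simp only [smul_eq_mul] at this
  simp_rw [mul_comm (φ _)]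
  exact this

lemma I1 (g : 𝓢(E3, ℂ)) : ∫⁻ x, ENNReal.ofReal (‖𝓕 (Trad g) x‖ ^ 2) ≤
    ENNReal.ofReal (4 * π ^ 2 * ∫ ξ : E3, ‖ξ‖ ^ 2 * ‖(𝓕 g) ξ‖ ^ 2) := by
  have h0 : 0 ≤ 4 * π ^ 2 * ∫ ξ : E3, ‖ξ‖ ^ 2 * ‖(𝓕 g) ξ‖ ^ 2 := by
    have : 0 ≤ ∫ ξ : E3, ‖ξ‖ ^ 2 * ‖(𝓕 g) ξ‖ ^ 2 := integral_nonneg fun _ => by positivity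
    positivity
  have := dual_bound (fun _ => 1) continuous_const (by
      intro x
      have : (1:ℝ) ≤ 1 + ‖x‖ := by linarith [norm_nonneg x]
      simpa using Real.one_le_rpow this (by norm_num : (0:ℝ) ≤ 2)) (by simp) (𝓕 (Trad g)) (FT_cont g) (FT_bdd g)
    (Real.sqrt (4 * π ^ 2 * ∫ ξ : E3, ‖ξ‖ ^ 2 * ‖(𝓕 g) ξ‖ ^ 2)) (Real.sqrt_nonneg _) (by
      intro φ
      rw [FT_adj]
      have := pairA g (𝓕 φ)
      rw [grad_planch, SchwartzMap.integral_norm_sq_fourier] at this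
      simpa using this)
  rw [Real.sq_sqrt h0] at this
  simpa using this

lemma I2 (g : 𝓢(E3, ℂ)) : ∫⁻ x : E3, ENNReal.ofReal ((‖x‖ ^ 2)⁻¹ * ‖𝓕 (Trad g) x‖ ^ 2) ≤
    ENNReal.ofReal (74 * (4 * π ^ 2) * ∫ ξ : E3, ‖(𝓕 g) ξ‖ ^ 2) := by
  have h00 : 0 ≤ ∫ ξ : E3, ‖(𝓕 g) ξ‖ ^ 2 := integral_nonneg fun _ => by positivity
  have h0 : 0 ≤ 74 * (4 * π ^ 2) * ∫ ξ : E3, ‖(𝓕 g) ξ‖ ^ 2 := by positivity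
  have := dual_bound (fun x => ‖x‖₊ ^ 2) (by fun_prop) (by
      intro x
      have : ‖x‖ ≤ 1 + ‖x‖ := by linarith [norm_nonneg x]
      simp only [NNReal.coe_pow, coe_nnnorm, Real.rpow_two]
      gcongr) (by
      have : ∀ᵐ x : E3, x ≠ 0 := by simp [ae_iff]
      filter_upwards [this] with x hx
      simpa using hx) (𝓕 (Trad g)) (FT_cont g) (FT_bdd g)
    (Real.sqrt (74 * (4 * π ^ 2) * ∫ ξ : E3, ‖(𝓕 g) ξ‖ ^ 2)) (Real.sqrt_nonneg _) (by
      intro φ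
      rw [FT_adj]
      have := pairB g (𝓕 φ)
      rw [grad_planch', ← SchwartzMap.integral_norm_sq_fourier g] at this
      refine this.trans (le_of_eq ?_)
      simp only [NNReal.coe_pow, coe_nnnorm]
      rw [← Real.sqrt_mul h00, ← Real.sqrt_mul h0]
      congr 1
      ring)
  rw [Real.sq_sqrt h0] at this
  simpa using this


lemma Trad_add (g h : 𝓢(E3, ℂ)) : Trad (g + h) = Trad g + Trad h := by
  ext x
  simp only [Trad, Pi.add_apply, ← Finset.sum_add_distrib, ← mul_add]
  refine Finset.sum_congr rfl fun i _ => ?_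
  congr 1
  rw [pd_eq, pd_eq, pd_eq, LineDeriv.lineDerivOp_add]
  rfl

lemma FT_add (g h : 𝓢(E3, ℂ)) (x : E3) :
    𝓕 (Trad (g + h)) x = 𝓕 (Trad g) x + 𝓕 (Trad h) x := by
  rw [Trad_add]
  have := VectorFourier.fourierIntegral_add (L := innerₗ E3) (μ := volume) Real.continuous_fourierChar
    (by exact continuous_inner) (Trad_int g) (Trad_int h)
  exact congrFun this x

lemma split (t : ℝ) (ht : 0 < t) (g : 𝓢(E3, ℂ)) : ∃ g1 g2 : 𝓢(E3, ℂ), g = g1 + g2 ∧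
    (∀ ξ : E3, ‖ξ‖ ^ 2 * ‖(𝓕 g1) ξ‖ ^ 2 ≤ 4 * t ^ 2 * (min 1 (‖ξ‖ ^ 2 / t ^ 2) * ‖(𝓕 g) ξ‖ ^ 2)) ∧
    (∀ ξ : E3, ‖(𝓕 g2) ξ‖ ^ 2 ≤ min 1 (‖ξ‖ ^ 2 / t ^ 2) * ‖(𝓕 g) ξ‖ ^ 2) := by
  let m : ContDiffBump (0 : E3) := ⟨t, 2 * t, ht, by linarith⟩
  have hm : (m : E3 → ℝ).HasTemperateGrowth := m.hasCompactSupport.hasTemperateGrowth m.contDiff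
  have hF : 𝓕 (𝓕⁻ (SchwartzMap.smulLeftCLM ℂ (m : E3 → ℝ) (𝓕 g)) : 𝓢(E3, ℂ)) =
    SchwartzMap.smulLeftCLM ℂ (m : E3 → ℝ) (𝓕 g) := FourierTransform.fourier_fourierInv_eq _
  refine ⟨𝓕⁻ (SchwartzMap.smulLeftCLM ℂ (m : E3 → ℝ) (𝓕 g)),
    g - 𝓕⁻ (SchwartzMap.smulLeftCLM ℂ (m : E3 → ℝ) (𝓕 g)), by simp, ?_, ?_⟩
  · intro ξ
    rw [hF, SchwartzMap.smulLeftCLM_apply_apply hm, norm_smul, mul_pow, ← mul_assoc, ← mul_assoc]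
    refine mul_le_mul_of_nonneg_right ?_ (by positivity)
    have h0 := m.nonneg (x := ξ)
    have h1 := m.le_one (x := ξ)
    rw [Real.norm_of_nonneg h0]
    have h2 : m ξ ^ 2 ≤ 1 := by nlinarith
    rw [mul_min_of_nonneg _ _ (by positivity), le_min_iff]
    constructor
    · by_cases h : 2 * t ≤ ‖ξ‖
      · rw [m.zero_of_le_dist (by simpa [m] using h)]
        simp; positivity
      · push Not at h
        calc ‖ξ‖ ^ 2 * m ξ ^ 2 ≤ (2 * t) ^ 2 * 1 := by gcongr
          _ = _ := by ring
    · have : 4 * t ^ 2 * (‖ξ‖ ^ 2 / t ^ 2) = 4 * ‖ξ‖ ^ 2 := by field_simp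
      rw [this]
      nlinarith [sq_nonneg ‖ξ‖]
  · intro ξ
    have : 𝓕 (g - 𝓕⁻ (SchwartzMap.smulLeftCLM ℂ (m : E3 → ℝ) (𝓕 g)) : 𝓢(E3, ℂ)) =
      𝓕 g - SchwartzMap.smulLeftCLM ℂ (m : E3 → ℝ) (𝓕 g) := by
      rw [eq_sub_iff_add_eq']
      nth_rewrite 1 [← hF]
      rw [← FourierTransform.fourier_add, add_sub_cancel]
    rw [this, sub_apply, SchwartzMap.smulLeftCLM_apply_apply hm]
    have e : (𝓕 g) ξ - m ξ • (𝓕 g) ξ = (1 - m ξ) • (𝓕 g) ξ := by rw [sub_smul, one_smul]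
    rw [e, norm_smul, mul_pow]
    refine mul_le_mul_of_nonneg_right ?_ (by positivity)
    have h0 := m.nonneg (x := ξ)
    have h1 := m.le_one (x := ξ)
    rw [Real.norm_of_nonneg (by linarith), le_min_iff]
    constructor
    · nlinarith
    · by_cases h : ‖ξ‖ ≤ t
      · rw [m.one_of_mem_closedBall (by simpa [m] using h)]
        simp; positivity
      · push Not at h
        have : 1 ≤ ‖ξ‖ ^ 2 / t ^ 2 := by
          rw [le_div_iff₀ (by positivity)]
          nlinarith
        nlinarith

lemma lint_of (f : 𝓢(E3, ℂ)) : ENNReal.ofReal (∫ ξ, ‖f ξ‖ ^ 2) = ∫⁻ ξ, ENNReal.ofReal (‖f ξ‖ ^ 2) :=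
  ofReal_integral_eq_lintegral_ofReal (int_norm_sq f) (Eventually.of_forall fun _ => by positivity)

lemma lint_of_wt (f : 𝓢(E3, ℂ)) : ENNReal.ofReal (∫ ξ : E3, ‖ξ‖ ^ 2 * ‖f ξ‖ ^ 2) =
    ∫⁻ ξ : E3, ENNReal.ofReal (‖ξ‖ ^ 2 * ‖f ξ‖ ^ 2) :=
  ofReal_integral_eq_lintegral_ofReal (int_wt f) (Eventually.of_forall fun _ => by positivity)

lemma step4 (t : ℝ) (ht : 0 < t) (g : 𝓢(E3, ℂ)) :
    ∫⁻ x : E3, (if t < ‖x‖ then ENNReal.ofReal ((‖x‖ ^ 2)⁻¹ * ‖𝓕 (Trad g) x‖ ^ 2) else 0) ≤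
    ENNReal.ofReal (156 * (4 * π ^ 2)) *
      ∫⁻ ξ : E3, ENNReal.ofReal (min 1 (‖ξ‖ ^ 2 / t ^ 2) * ‖(𝓕 g) ξ‖ ^ 2) := by
  obtain ⟨g1, g2, hg, h1, h2⟩ := split t ht g
  set A := ∫⁻ ξ : E3, ENNReal.ofReal (min 1 (‖ξ‖ ^ 2 / t ^ 2) * ‖(𝓕 g) ξ‖ ^ 2) with hA
  have hp : 0 < π := Real.pi_pos
  have m1 : Continuous (𝓕 (Trad g1)) := FT_cont g1
  have m2 : Continuous (𝓕 (Trad g2)) := FT_cont g2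
  have b1 : ∫⁻ x, ENNReal.ofReal (‖𝓕 (Trad g1) x‖ ^ 2) ≤ ENNReal.ofReal (4 * π ^ 2 * (4 * t ^ 2)) * A := by
    refine (I1 g1).trans ?_
    rw [ENNReal.ofReal_mul (by positivity), lint_of_wt, ENNReal.ofReal_mul (p := 4 * π ^ 2) (by positivity), mul_assoc]
    refine mul_le_mul_right ?_ _
    rw [hA, ← lintegral_const_mul' _ _ ENNReal.ofReal_ne_top]
    apply lintegral_mono
    intro ξ
    simp only
    rw [← ENNReal.ofReal_mul (by positivity)]
    exact ENNReal.ofReal_le_ofReal (h1 ξ)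
  have b2 : ∫⁻ x : E3, ENNReal.ofReal ((‖x‖ ^ 2)⁻¹ * ‖𝓕 (Trad g2) x‖ ^ 2) ≤ ENNReal.ofReal (74 * (4 * π ^ 2)) * A := by
    refine (I2 g2).trans ?_
    rw [ENNReal.ofReal_mul (by positivity), lint_of]
    gcongr
    rw [hA]
    apply lintegral_mono
    intro ξ
    exact ENNReal.ofReal_le_ofReal (h2 ξ)
  calc _ ≤ ∫⁻ x : E3, (ENNReal.ofReal (2 * (t ^ 2)⁻¹) * ENNReal.ofReal (‖𝓕 (Trad g1) x‖ ^ 2) +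
        ENNReal.ofReal 2 * ENNReal.ofReal ((‖x‖ ^ 2)⁻¹ * ‖𝓕 (Trad g2) x‖ ^ 2)) := by
        apply lintegral_mono
        intro x
        simp only
        split_ifs with hx
        · rw [← ENNReal.ofReal_mul (by positivity), ← ENNReal.ofReal_mul (by positivity),
            ← ENNReal.ofReal_add (by positivity) (by positivity)]
          apply ENNReal.ofReal_le_ofReal
          have e : ‖𝓕 (Trad g) x‖ ^ 2 ≤ 2 * ‖𝓕 (Trad g1) x‖ ^ 2 + 2 * ‖𝓕 (Trad g2) x‖ ^ 2 := by
            have : ‖𝓕 (Trad g) x‖ ≤ ‖𝓕 (Trad g1) x‖ + ‖𝓕 (Trad g2) x‖ := by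
              rw [hg, FT_add]; exact norm_add_le _ _
            have h0 := norm_nonneg (𝓕 (Trad g) x)
            nlinarith [sq_nonneg (‖𝓕 (Trad g1) x‖ - ‖𝓕 (Trad g2) x‖)]
          have hi : (‖x‖ ^ 2)⁻¹ ≤ (t ^ 2)⁻¹ := by gcongr
          calc _ ≤ (‖x‖ ^ 2)⁻¹ * (2 * ‖𝓕 (Trad g1) x‖ ^ 2 + 2 * ‖𝓕 (Trad g2) x‖ ^ 2) := by gcongr
            _ = 2 * (‖x‖ ^ 2)⁻¹ * ‖𝓕 (Trad g1) x‖ ^ 2 + 2 * ((‖x‖ ^ 2)⁻¹ * ‖𝓕 (Trad g2) x‖ ^ 2) := by ring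
            _ ≤ _ := by gcongr
        · exact zero_le
    _ = ENNReal.ofReal (2 * (t ^ 2)⁻¹) * (∫⁻ x, ENNReal.ofReal (‖𝓕 (Trad g1) x‖ ^ 2)) +
        ENNReal.ofReal 2 * ∫⁻ x : E3, ENNReal.ofReal ((‖x‖ ^ 2)⁻¹ * ‖𝓕 (Trad g2) x‖ ^ 2) := by
        rw [lintegral_add_left, lintegral_const_mul' _ _ ENNReal.ofReal_ne_top,
          lintegral_const_mul' _ _ ENNReal.ofReal_ne_top]
        have := m1.measurable
        fun_prop
    _ ≤ ENNReal.ofReal (2 * (t ^ 2)⁻¹) * (ENNReal.ofReal (4 * π ^ 2 * (4 * t ^ 2)) * A) +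
        ENNReal.ofReal 2 * (ENNReal.ofReal (74 * (4 * π ^ 2)) * A) := by gcongr
    _ = _ := by
        rw [← mul_assoc, ← mul_assoc (ENNReal.ofReal 2), ← ENNReal.ofReal_mul (p := 2 * (t ^ 2)⁻¹) (by positivity), ← ENNReal.ofReal_mul (p := 2) (by positivity),
          ← add_mul, ← ENNReal.ofReal_add (by positivity) (by positivity)]
        congr 2
        field_simp
        ring

lemma int_left (r : ℝ) (hr : 0 < r) (c : ℝ) (hc : 0 ≤ c) :
    ∫⁻ t in Set.Ioi (0:ℝ), (if t < r then ENNReal.ofReal ((r ^ 2)⁻¹ * c) else 0) =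
      ENNReal.ofReal (r⁻¹ * c) := by
  have : (fun t : ℝ => (if t < r then ENNReal.ofReal ((r ^ 2)⁻¹ * c) else 0)) =
      (Set.Iio r).indicator (fun _ => ENNReal.ofReal ((r ^ 2)⁻¹ * c)) := by
    ext t; simp [Set.indicator]
  rw [this, lintegral_indicator measurableSet_Iio, lintegral_const, Measure.restrict_restrict measurableSet_Iio,
    Measure.restrict_apply_univ, Set.Iio_inter_Ioi, Real.volume_Ioo, ← ENNReal.ofReal_mul (by positivity)]
  congr 1
  field_simp
  ring

lemma int_right (r : ℝ) (hr : 0 ≤ r) (c : ℝ) (hc : 0 ≤ c) :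
    ∫⁻ t in Set.Ioi (0:ℝ), ENNReal.ofReal (min 1 (r ^ 2 / t ^ 2) * c) ≤
      ENNReal.ofReal (2 * (r * c)) := by
  rcases hr.eq_or_lt with rfl | hr
  · simp
  have hInt : IntegrableOn (fun t : ℝ => r ^ 2 * c * t ^ (-2 : ℝ)) (Set.Ioi r) :=
    (integrableOn_Ioi_rpow_of_lt (by norm_num) hr).const_mul _
  rw [← Set.Ioc_union_Ioi_eq_Ioi hr.le]
  calc _ ≤ (∫⁻ t in Set.Ioc 0 r, ENNReal.ofReal (min 1 (r ^ 2 / t ^ 2) * c)) +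
      ∫⁻ t in Set.Ioi r, ENNReal.ofReal (min 1 (r ^ 2 / t ^ 2) * c) := lintegral_union_le _ _ _
    _ ≤ (∫⁻ t in Set.Ioc 0 r, ENNReal.ofReal c) +
      ∫⁻ t in Set.Ioi r, ENNReal.ofReal (r ^ 2 * c * t ^ (-2 : ℝ)) := by
        apply add_le_add
        · apply lintegral_mono
          intro t
          apply ENNReal.ofReal_le_ofReal
          calc _ ≤ 1 * c := by gcongr; exact min_le_left _ _
            _ = c := one_mul c
        · apply setLIntegral_mono' measurableSet_Ioi
          intro t ht
          have ht0 : 0 < t := hr.trans ht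
          apply ENNReal.ofReal_le_ofReal
          calc _ ≤ (r ^ 2 / t ^ 2) * c := by gcongr; exact min_le_right _ _
            _ = _ := by
              rw [Real.rpow_neg ht0.le, Real.rpow_two]; ring
    _ = ENNReal.ofReal (r * c) + ENNReal.ofReal (r * c) := by
        congr 1
        · rw [setLIntegral_const, Real.volume_Ioc, ← ENNReal.ofReal_mul hc]
          congr 1; ring
        · rw [← ofReal_integral_eq_lintegral_ofReal hInt, integral_const_mul,
            integral_Ioi_rpow_of_lt (by norm_num) hr]
          · congr 1
            norm_num
            rw [Real.rpow_neg_one]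
            field_simp
          · filter_upwards [ae_restrict_mem measurableSet_Ioi] with t ht
            have ht0 : 0 < t := hr.trans ht
            simp only [Pi.zero_apply]
            positivity
    _ = _ := by
        rw [← ENNReal.ofReal_add (by positivity) (by positivity)]
        congr 1; ring

lemma main_lint_gen (G f : E3 → ℂ) (mG : Measurable G) (mf : Measurable f) (K : ℝ)
    (h : ∀ t : ℝ, 0 < t → ∫⁻ x : E3, (if t < ‖x‖ then ENNReal.ofReal ((‖x‖ ^ 2)⁻¹ * ‖G x‖ ^ 2) else 0) ≤
    ENNReal.ofReal K * ∫⁻ ξ : E3, ENNReal.ofReal (min 1 (‖ξ‖ ^ 2 / t ^ 2) * ‖f ξ‖ ^ 2)) :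
    ∫⁻ x : E3, ENNReal.ofReal (‖x‖⁻¹ * ‖G x‖ ^ 2) ≤
    ENNReal.ofReal K * ∫⁻ ξ : E3, ENNReal.ofReal (2 * (‖ξ‖ * ‖f ξ‖ ^ 2)) := by
  calc _ = ∫⁻ x : E3, ∫⁻ t in Set.Ioi (0:ℝ), (if t < ‖x‖ then ENNReal.ofReal ((‖x‖ ^ 2)⁻¹ * ‖G x‖ ^ 2) else 0) := by
        apply lintegral_congr_ae
        have : ∀ᵐ x : E3, x ≠ 0 := by simp [ae_iff]
        filter_upwards [this] with x hx
        rw [int_left ‖x‖ (by positivity) _ (by positivity)]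
    _ = ∫⁻ t in Set.Ioi (0:ℝ), ∫⁻ x : E3, (if t < ‖x‖ then ENNReal.ofReal ((‖x‖ ^ 2)⁻¹ * ‖G x‖ ^ 2) else 0) := by
        apply lintegral_lintegral_swap
        apply Measurable.aemeasurable
        apply Measurable.ite
        · exact measurableSet_lt measurable_snd (by fun_prop)
        · fun_prop
        · fun_prop
    _ ≤ ∫⁻ t in Set.Ioi (0:ℝ), ENNReal.ofReal K *
      ∫⁻ ξ : E3, ENNReal.ofReal (min 1 (‖ξ‖ ^ 2 / t ^ 2) * ‖f ξ‖ ^ 2) :=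
        setLIntegral_mono' measurableSet_Ioi fun t ht => h t ht
    _ = ENNReal.ofReal K * ∫⁻ t in Set.Ioi (0:ℝ),
      ∫⁻ ξ : E3, ENNReal.ofReal (min 1 (‖ξ‖ ^ 2 / t ^ 2) * ‖f ξ‖ ^ 2) :=
        lintegral_const_mul' _ _ ENNReal.ofReal_ne_top
    _ = ENNReal.ofReal K * ∫⁻ ξ : E3, ∫⁻ t in Set.Ioi (0:ℝ),
       ENNReal.ofReal (min 1 (‖ξ‖ ^ 2 / t ^ 2) * ‖f ξ‖ ^ 2) := by
        congr 1
        apply lintegral_lintegral_swap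
        apply Measurable.aemeasurable
        fun_prop
    _ ≤ _ := by
        gcongr with ξ
        exact int_right _ (norm_nonneg _) _ (by positivity)

lemma main_lint (g : 𝓢(E3, ℂ)) :
    ∫⁻ x : E3, ENNReal.ofReal (‖x‖⁻¹ * ‖𝓕 (Trad g) x‖ ^ 2) ≤
    ENNReal.ofReal (156 * (4 * π ^ 2)) * ∫⁻ ξ : E3, ENNReal.ofReal (2 * (‖ξ‖ * ‖(𝓕 g) ξ‖ ^ 2)) := 
  main_lint_gen _ _ (FT_cont g).measurable (𝓕 g : 𝓢(E3, ℂ)).continuous.measurable _ (fun t ht => step4 t ht g)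

lemma int_half (f : 𝓢(E3, ℂ)) : Integrable (fun ξ : E3 => ‖ξ‖ * ‖f ξ‖ ^ 2) := by
  refine ((int_norm_sq f).add (int_wt f)).mono' (by
    have := f.continuous
    exact (by fun_prop : Continuous (fun ξ : E3 => ‖ξ‖ * ‖f ξ‖ ^ 2)).aestronglyMeasurable)
    (Eventually.of_forall fun ξ => ?_)
  rw [Real.norm_of_nonneg (by positivity)]
  simp only [Pi.add_apply]
  rw [← one_add_mul]
  gcongr
  nlinarith [sq_nonneg (‖ξ‖ - 1)]

lemma main_real (g : 𝓢(E3, ℂ)) : ∫ x : E3, ‖x‖⁻¹ * ‖𝓕 (Trad g) x‖ ^ 2 ≤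
    1248 * π ^ 2 * ∫ ξ : E3, ‖ξ‖ * ‖(𝓕 g) ξ‖ ^ 2 := by
  have mG : Measurable (𝓕 (Trad g)) := (FT_cont g).measurable
  have h0 : 0 ≤ ∫ ξ : E3, ‖ξ‖ * ‖(𝓕 g) ξ‖ ^ 2 := integral_nonneg fun _ => by positivity
  rw [integral_eq_lintegral_of_nonneg_ae (Eventually.of_forall fun _ => by positivity)
    (by fun_prop)]
  apply ENNReal.toReal_le_of_le_ofReal (by positivity)
  refine (main_lint g).trans (le_of_eq ?_)
  rw [← ofReal_integral_eq_lintegral_ofReal ((int_half (𝓕 g)).const_mul 2)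
    (Eventually.of_forall fun _ => by positivity), ← ENNReal.ofReal_mul (by positivity), integral_const_mul]
  congr 1
  ring


/-- There is `C > 0` so that for every Schwartz `g : ℝ³ → ℂ`, the radial
derivative `∂_r g(x) = (x/|x|)·∇g(x)` satisfies `‖∂_r g‖_{Ḣ^{−1/2}} ≤ C ‖g‖_{Ḣ^{1/2}}`. -/
theorem radial_derivative_Hminushalf_bound :
    ∃ C > (0:ℝ), ∀ g : SchwartzMap E3 ℂ,
      Real.sqrt (sobSq (-(1/2))
          (fun x : E3 => ∑ i : Fin 3, ((x i / ‖x‖ : ℝ) : ℂ) * pd (fun z => g z) i x))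
        ≤ C * Real.sqrt (sobSq (1/2) (fun x => g x)) := by
  have hp : 0 < π := Real.pi_pos
  refine ⟨Real.sqrt (1248 * π ^ 2), by positivity, fun g => ?_⟩
  rw [← Real.sqrt_mul (by positivity)]
  apply Real.sqrt_le_sqrt
  have e1 : sobSq (-(1/2)) (fun x : E3 => ∑ i : Fin 3, ((x i / ‖x‖ : ℝ) : ℂ) * pd (fun z => g z) i x) =
      ∫ x : E3, ‖x‖⁻¹ * ‖𝓕 (Trad g) x‖ ^ 2 := by
    unfold sobSq
    have : (2 * (-(1/2)) : ℝ) = -1 := by norm_num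
    simp_rw [this, Real.rpow_neg_one]
    rfl
  have e2 : sobSq (1/2) (fun x => g x) = ∫ ξ : E3, ‖ξ‖ * ‖(𝓕 g) ξ‖ ^ 2 := by
    unfold sobSq
    have : (2 * (1/2) : ℝ) = 1 := by norm_num
    simp_rw [this, Real.rpow_one]
    rfl
  rw [e1, e2]
  exact main_real g
end
end
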